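/- arXiv:1302.3961 — 3 statements merged into one kernel-verified Lean document; each statement's English description precedes it below -/
import Mathlib

section
/- Let p > n ≥ 2 and R > 0, and let B_R := {x ∈ ℝⁿ : |x| < R} with d(x) := R − |x| the distance to its boundary. There exist constants b = b(n,p) ≥ 1 and c = c(n,p) > 0 such that, with D := 2bR, for every u ∈ C_c^∞(B_R) and all x, y ∈ B_R with x ≠ y, one has |u(x) − u(y)| · X^{1/p}(|x−y|/D) ≤ c · |x−y|^{1−n/p} · ( ∫_{B_R} |∇u|^p dz − ((p−1)/p)^p ∫_{B_R} |u|^p / d^p dz )^{1/p}. -/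
open MeasureTheory Metric Set

lemma hm_young (p : ℝ) (hp : 2 ≤ p) (m w : ℝ) (hm : 0 ≤ m) (hw : 0 ≤ w) :
    p * (w ^ (p - 1) * m) ≤ m ^ p + (p - 1) * w ^ p := by
  have hpq : p.HolderConjugate (p / (p - 1)) :=
    Real.HolderConjugate.conjExponent (by linarith)
  have h := Real.young_inequality_of_nonneg hm (Real.rpow_nonneg hw (p - 1)) hpq
  rw [← Real.rpow_mul hw] at h
  have e1 : (p - 1) * (p / (p - 1)) = p := by field_simp [show p - 1 ≠ 0 by linarith]
  rw [e1] at h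
  have h2 := mul_le_mul_of_nonneg_left h (show (0:ℝ) ≤ p by linarith)
  have e2 : p * (m ^ p / p + w ^ p / (p / (p - 1))) = m ^ p + (p - 1) * w ^ p := by
    have : p ≠ 0 := by linarith
    have : p - 1 ≠ 0 := by linarith
    field_simp
  linarith [mul_comm m (w ^ (p - 1))]

lemma hm_convex2 (q : ℝ) (hq : 1 ≤ q) (a b : ℝ) (ha : 0 ≤ a) (hb : 0 ≤ b) :
    ((a + b) / 2) ^ q ≤ (a ^ q + b ^ q) / 2 := by
  have h := (convexOn_rpow hq).2 (mem_Ici.2 ha) (mem_Ici.2 hb) (show (0:ℝ) ≤ 1/2 by norm_num)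
    (show (0:ℝ) ≤ 1/2 by norm_num) (by norm_num)
  simp only [smul_eq_mul] at h
  have e : 1 / 2 * a + 1 / 2 * b = (a + b) / 2 := by ring
  rw [e] at h
  linarith

lemma hm_add_rpow (q : ℝ) (hq : 1 ≤ q) (a b : ℝ) (ha : 0 ≤ a) (hb : 0 ≤ b) :
    (a + b) ^ q ≤ 2 ^ q * (a ^ q + b ^ q) := by
  have h := hm_convex2 q hq a b ha hb
  have e : (a + b) ^ q = 2 ^ q * ((a + b) / 2) ^ q := by
    rw [← Real.mul_rpow (by norm_num) (by positivity)]; congr 1; ring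
  rw [e]
  have := Real.rpow_nonneg ha q
  have := Real.rpow_nonneg hb q
  gcongr
  linarith

section
variable {E : Type*} [NormedAddCommGroup E] [InnerProductSpace ℝ E]

lemma hm_clarkson (p : ℝ) (hp : 2 ≤ p) (a w : E) :
    2 * (‖a + w‖ / 2) ^ p + 2 * (‖a - w‖ / 2) ^ p ≤ ‖a‖ ^ p + ‖w‖ ^ p := by
  have key : ∀ x : ℝ, 0 ≤ x → x ^ p = (x ^ 2) ^ (p / 2) := by
    intro x hx
    rw [← Real.rpow_natCast, ← Real.rpow_mul hx]; congr 1; push_cast; ring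
  have h1 := Real.add_rpow_le_rpow_add (p := p / 2) (sq_nonneg (‖a + w‖ / 2))
    (sq_nonneg (‖a - w‖ / 2)) (by linarith)
  have h2 := hm_convex2 (p / 2) (by linarith) (‖a‖ ^ 2) (‖w‖ ^ 2) (by positivity) (by positivity)
  have e : (‖a + w‖ / 2) ^ 2 + (‖a - w‖ / 2) ^ 2 = (‖a‖ ^ 2 + ‖w‖ ^ 2) / 2 := by
    have := parallelogram_law_with_norm ℝ a w
    nlinarith
  rw [e] at h1
  rw [← key _ (by positivity), ← key _ (by positivity)] at h1
  rw [← key _ (by positivity), ← key _ (by positivity)] at h2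
  linarith

lemma hm_vec (p : ℝ) (hp : 2 ≤ p) (a w : E) :
    (1 / 2) ^ p * ‖a - w‖ ^ p + p * ‖w‖ ^ (p - 2) * inner ℝ w a ≤
      ‖a‖ ^ p + (p - 1) * ‖w‖ ^ p := by
  have h := hm_clarkson p hp a w
  have hy := hm_young p hp (‖a + w‖ / 2) ‖w‖ (by positivity) (by positivity)
  have hi : inner ℝ w (a + w) ≤ ‖w‖ * ‖a + w‖ := real_inner_le_norm _ _
  rw [inner_add_right, real_inner_self_eq_norm_sq] at hi
  have e1 : ‖w‖ ^ (p - 1) = ‖w‖ ^ (p - 2) * ‖w‖ := by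
    rw [← Real.rpow_add_one' (norm_nonneg _) (by linarith)]; congr 1; ring
  have e2 : ‖w‖ ^ p = ‖w‖ ^ (p - 2) * ‖w‖ ^ 2 := by
    rw [← Real.rpow_natCast, ← Real.rpow_add' (norm_nonneg _) (by push_cast; linarith)]
    congr 1; push_cast; ring
  have e3 : (‖a - w‖ / 2) ^ p = (1 / 2) ^ p * ‖a - w‖ ^ p := by
    rw [← Real.mul_rpow (by norm_num) (norm_nonneg _)]; congr 1; ring
  have h0 : 0 ≤ (1 / 2 : ℝ) ^ p * ‖a - w‖ ^ p := by positivity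
  have hT : 0 ≤ ‖w‖ ^ (p - 2) := by positivity
  rw [e3] at h
  rw [e1] at hy
  have hm := mul_le_mul_of_nonneg_left hi (mul_nonneg (show (0:ℝ) ≤ p by linarith) hT)
  nlinarith

set_option maxHeartbeats 1000000 in
/-- pointwise inequality -/
lemma hm_pointwise (p : ℝ) (hp : 2 < p) (ε : ℝ) (hε : 0 < ε) :
    ∃ c : ℝ, 0 < c ∧ ∀ (a z : E) (u : ℝ), ‖z‖ < 1 →
      c * ‖a + (2 * ((p - 1) / p) * u / (1 - ‖z‖ ^ 2)) • z‖ ^ p ≤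
        ‖a‖ ^ p + ((p - 1) / p) ^ (p - 1) * ((1 - ‖z‖) ^ (1 - p) * (p * |u| ^ (p - 2) * u * inner ℝ z a))
        + (p - 1) * ((p - 1) / p) ^ p * (‖z‖ * ((1 - ‖z‖) ^ (-p) * |u| ^ p))
        + ε * ((1 - ‖z‖) ^ (1 - p) * |u| ^ p) := by
  set α : ℝ := (p - 1) / p with hα
  have hp0 : 0 < p := by linarith
  have hα0 : 0 < α := by rw [hα]; exact div_pos (by linarith) hp0
  have hα1 : α < 1 := by rw [hα, div_lt_one hp0]; linarith
  set T : ℝ := (2:ℝ) ^ p with hT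
  have hTpos : 0 < T := by positivity
  have hT1 : 1 ≤ T := Real.one_le_rpow (by norm_num) hp0.le
  -- c * T * (stuff)
  obtain ⟨c, hc0, hc1, hc2⟩ : ∃ c : ℝ, 0 < c ∧ c * T * T ≤ 1 ∧ c * T * (1 + T) ≤ ε := by
    refine ⟨min (1 / (T * T)) (ε / (T * (1 + T))), by positivity, ?_, ?_⟩
    · have := min_le_left (1 / (T * T)) (ε / (T * (1 + T)))
      rw [le_div_iff₀ (by positivity)] at this; linarith
    · have := min_le_right (1 / (T * T)) (ε / (T * (1 + T)))
      rw [le_div_iff₀ (by positivity)] at this; linarith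
  refine ⟨c, hc0, ?_⟩
  intro a z u hz
  set s := ‖z‖ with hs
  have hs0 : 0 ≤ s := norm_nonneg _
  have hd : 0 < 1 - s := by linarith
  set d := 1 - s with hdd
  set G := a + (2 * α * u / (1 - s ^ 2)) • z with hG
  have h1s : 1 - s ^ 2 = d * (1 + s) := by rw [hdd]; ring
  have hU : 0 ≤ |u| ^ p := by positivity
  have hdp : 1 ≤ d ^ (1 - p) := Real.one_le_rpow_of_pos_of_le_one_of_nonpos hd (by linarith) (by linarith)
  have hdpp : d * d ^ (-p) = d ^ (1 - p) := by
    rw [mul_comm, ← Real.rpow_add_one hd.ne']; congr 1; ring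
  -- bound near centre
  have hA : d * ‖G‖ ^ p ≤ T * (d * ‖a‖ ^ p + T * (d ^ (1 - p) * |u| ^ p)) := by
    have h1 : ‖G‖ ≤ ‖a‖ + 2 * (|u| * d⁻¹) := by
      refine (norm_add_le _ _).trans ?_
      gcongr
      rw [norm_smul, Real.norm_eq_abs, abs_div, abs_mul, abs_mul, h1s, abs_mul, abs_of_pos hd,
        abs_of_pos (show 0 < 1 + s by linarith), abs_of_pos hα0, ← hs]
      rw [abs_of_pos (show (0:ℝ) < 2 by norm_num), div_mul_eq_mul_div, div_le_iff₀ (by positivity)]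
      have : 2 * (|u| * d⁻¹) * (d * (1 + s)) = 2 * |u| * (1 + s) := by field_simp
      rw [this]
      have hu := abs_nonneg u
      have : α * s ≤ 1 + s := by nlinarith
      nlinarith [mul_le_mul_of_nonneg_left this hu]
    have h2 : ‖G‖ ^ p ≤ T * (‖a‖ ^ p + (2 * (|u| * d⁻¹)) ^ p) :=
      (Real.rpow_le_rpow (norm_nonneg _) h1 hp0.le).trans
        (hm_add_rpow p (by linarith) _ _ (norm_nonneg _) (by positivity))
    have h3 : (2 * (|u| * d⁻¹)) ^ p = T * (|u| ^ p * d ^ (-p)) := by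
      rw [Real.mul_rpow (by norm_num) (by positivity), Real.mul_rpow (by positivity) (by positivity),
        Real.inv_rpow hd.le, Real.rpow_neg hd.le]
    rw [h3] at h2
    calc d * ‖G‖ ^ p ≤ d * (T * (‖a‖ ^ p + T * (|u| ^ p * d ^ (-p)))) := by gcongr
      _ = T * (d * ‖a‖ ^ p + T * ((d * d ^ (-p)) * |u| ^ p)) := by ring
      _ = _ := by rw [hdpp]
  -- main part
  set M := s * ‖a‖ ^ p +
        α ^ (p - 1) * (d ^ (1 - p) * (p * |u| ^ (p - 2) * u * inner ℝ z a))
        + (p - 1) * α ^ p * (s * (d ^ (-p) * |u| ^ p)) with hM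
  have hB : ∃ N : ℝ, 0 ≤ N ∧ N ≤ T * M ∧ s * ‖G‖ ^ p ≤ T * (N + |u| ^ p) := by
    rcases hs0.eq_or_lt with h0 | hspos
    · have hz0 : z = 0 := by rw [← norm_eq_zero, ← hs, ← h0]
      refine ⟨0, le_rfl, ?_, ?_⟩
      · rw [hM, ← h0, hz0]; simp
      · rw [← h0]; simp; positivity
    set w : E := (-(α * u / d) * s⁻¹) • z with hw
    have hwn : ‖w‖ = α * (|u| * d⁻¹) := by
      rw [hw, norm_smul, Real.norm_eq_abs, abs_mul, abs_neg, abs_div, abs_mul, abs_inv, ← hs,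
        abs_of_pos hd, abs_of_pos hα0, abs_of_pos hspos]
      field_simp
    have hv := hm_vec p hp.le a w
    have h1 : ‖G‖ ≤ ‖a - w‖ + |u| := by
      have : G = (a - w) + (- (α * u) / (1 + s) * s⁻¹) • z := by
        have e : 2 * α * u / (1 - s ^ 2) = -(-(α * u / d) * s⁻¹) + (- (α * u) / (1 + s) * s⁻¹) := by
          rw [h1s]
          have : 1 + s ≠ 0 := by linarith
          field_simp
          rw [hdd]; ring
        rw [hG, hw, e, add_smul, neg_smul]
        abel
      rw [this]
      refine (norm_add_le _ _).trans ?_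
      gcongr
      rw [norm_smul, Real.norm_eq_abs, abs_mul, abs_div, abs_neg, abs_mul, abs_inv, ← hs,
        abs_of_pos hα0, abs_of_pos hspos, abs_of_pos (show 0 < 1 + s by linarith)]
      rw [mul_assoc, inv_mul_cancel₀ hspos.ne', mul_one, div_le_iff₀ (by linarith)]
      have hu := abs_nonneg u
      nlinarith
    have h2 : ‖G‖ ^ p ≤ T * (‖a - w‖ ^ p + |u| ^ p) :=
      (Real.rpow_le_rpow (norm_nonneg _) h1 hp0.le).trans
        (hm_add_rpow p (by linarith) _ _ (norm_nonneg _) (by positivity))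
    have h3 : ‖a - w‖ ^ p ≤ T * (‖a‖ ^ p + (p - 1) * ‖w‖ ^ p - p * ‖w‖ ^ (p - 2) * inner ℝ w a) := by
      have e : T * (1 / 2 : ℝ) ^ p = 1 := by
        rw [hT, ← Real.mul_rpow (by norm_num) (by norm_num)]; norm_num
      have := mul_le_mul_of_nonneg_left hv hTpos.le
      have e' : T * ((1 / 2 : ℝ) ^ p * ‖a - w‖ ^ p) = ‖a - w‖ ^ p := by rw [← mul_assoc, e, one_mul]
      nlinarith
    have e4 : ‖w‖ ^ p = α ^ p * (d ^ (-p) * |u| ^ p) := by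
      rw [hwn, Real.mul_rpow hα0.le (by positivity), Real.mul_rpow (by positivity) (by positivity),
        Real.inv_rpow hd.le, Real.rpow_neg hd.le]; ring
    have e5 : s * (p * ‖w‖ ^ (p - 2) * inner ℝ w a) =
        - (α ^ (p - 1) * (d ^ (1 - p) * (p * |u| ^ (p - 2) * u * inner ℝ z a))) := by
      rw [hwn, Real.mul_rpow hα0.le (by positivity), Real.mul_rpow (by positivity) (by positivity),
        Real.inv_rpow hd.le, ← Real.rpow_neg hd.le, hw, real_inner_smul_left]
      have a1 : α ^ (p - 1) = α ^ (p - 2) * α := by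
        rw [← Real.rpow_add_one hα0.ne']; congr 1; ring
      have a2 : d ^ (1 - p) = d ^ (-(p - 2)) * d⁻¹ := by
        rw [← div_eq_mul_inv, ← Real.rpow_sub_one hd.ne']
        congr 1; ring
      rw [a1, a2]
      field_simp
    refine ⟨s * ‖a - w‖ ^ p, by positivity, ?_, ?_⟩
    · calc s * ‖a - w‖ ^ p ≤ s * (T * (‖a‖ ^ p + (p - 1) * ‖w‖ ^ p - p * ‖w‖ ^ (p - 2) * inner ℝ w a)) := by
            gcongr
        _ = T * (s * ‖a‖ ^ p + (p - 1) * (s * ‖w‖ ^ p) - s * (p * ‖w‖ ^ (p - 2) * inner ℝ w a)) := by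
            ring
        _ = T * M := by rw [e5, e4, hM]; ring
    · have hsu : s * |u| ^ p ≤ 1 * |u| ^ p := mul_le_mul_of_nonneg_right hz.le hU
      calc s * ‖G‖ ^ p ≤ s * (T * (‖a - w‖ ^ p + |u| ^ p)) := by gcongr
        _ = T * (s * ‖a - w‖ ^ p + s * |u| ^ p) := by ring
        _ ≤ T * (s * ‖a - w‖ ^ p + |u| ^ p) := by gcongr; linarith
  obtain ⟨N, hN0, hN1, hB⟩ := hB
  have hsum : ‖G‖ ^ p = s * ‖G‖ ^ p + d * ‖G‖ ^ p := by rw [hdd]; ring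
  set K := d ^ (1 - p) * |u| ^ p with hK
  have hK0 : 0 ≤ K := by positivity
  have hKu : |u| ^ p ≤ K := le_mul_of_one_le_left hU hdp
  have hM0 : 0 ≤ M := by
    have := hN0.trans hN1
    exact nonneg_of_mul_nonneg_right this hTpos
  have hda : 0 ≤ d * ‖a‖ ^ p := by positivity
  have goal1 : c * ‖G‖ ^ p ≤ (c * T * T) * M + (c * T) * (d * ‖a‖ ^ p) + (c * T * (1 + T)) * K := by
    rw [hsum]
    have hB' : s * ‖G‖ ^ p ≤ T * (T * M + K) := hB.trans (by gcongr)
    have := mul_le_mul_of_nonneg_left (add_le_add hB' hA) hc0.le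
    refine this.trans (le_of_eq ?_)
    ring
  have hcT : c * T ≤ 1 := by
    refine le_trans ?_ hc1
    exact le_mul_of_one_le_right (by positivity) hT1
  have g2 : (c * T * T) * M ≤ 1 * M := by gcongr
  have g3 : (c * T) * (d * ‖a‖ ^ p) ≤ 1 * (d * ‖a‖ ^ p) := by gcongr
  have g4 : (c * T * (1 + T)) * K ≤ ε * K := by gcongr
  have : ‖a‖ ^ p = s * ‖a‖ ^ p + d * ‖a‖ ^ p := by rw [hdd]; ring
  rw [this]
  linarith
end

section
open MeasureTheory Metric Set
variable {E : Type*} [NormedAddCommGroup E] [InnerProductSpace ℝ E]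

lemma hm_hasFDerivAt_norm (z : E) (hz : z ≠ 0) :
    HasFDerivAt (fun x : E => ‖x‖) (‖z‖⁻¹ • innerSL ℝ z) z := by
  have h1 : HasFDerivAt (fun x : E => ‖x‖ ^ 2) (2 • innerSL ℝ z) z :=
    (hasStrictFDerivAt_norm_sq z).hasFDerivAt
  have hz' : ‖z‖ ≠ 0 := norm_ne_zero_iff.2 hz
  have h2 := h1.sqrt (by positivity)
  have e : (fun x : E => √(‖x‖ ^ 2)) = fun x => ‖x‖ := by
    ext x; exact Real.sqrt_sq (norm_nonneg _)
  rw [e] at h2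
  convert h2 using 1
  rw [Real.sqrt_sq (norm_nonneg _)]
  ext y
  simp
  field_simp

lemma hm_normD_self (z : E) : (‖z‖⁻¹ • innerSL ℝ z) z = ‖z‖ := by
  rcases eq_or_ne z 0 with rfl | hz
  · simp
  · have hz' : ‖z‖ ≠ 0 := norm_ne_zero_iff.2 hz
    simp; field_simp

lemma hm_normD_le (z y : E) : |(‖z‖⁻¹ • innerSL ℝ z) y| ≤ ‖y‖ := by
  rcases eq_or_ne z 0 with rfl | hz
  · simp
  · have hz' : 0 < ‖z‖ := norm_pos_iff.2 hz
    simp only [_root_.smul_apply, innerSL_apply_apply, smul_eq_mul, abs_mul, abs_inv, abs_norm]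
    rw [inv_mul_le_iff₀ hz']
    exact abs_real_inner_le_norm z y

lemma hm_cc {F : Type*} [NormedAddCommGroup F] {K : Set E} (hK : IsCompact K)
    (hKb : K ⊆ ball 0 1) {h : E → F} (hc : ContinuousOn h (ball 0 1)) (h0 : ∀ z, z ∉ K → h z = 0) :
    Continuous h ∧ HasCompactSupport h := by
  have hs : HasCompactSupport h := HasCompactSupport.intro hK h0
  refine ⟨continuous_of_tsupport fun x hx => ?_, hs⟩
  have : tsupport h ⊆ K := closure_minimal (fun z hz => by
    by_contra hzK; exact hz (h0 z hzK)) hK.isClosed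
  exact hc.continuousAt (isOpen_ball.mem_nhds (hKb (this hx)))

lemma hm_contOn_d (q : ℝ) : ContinuousOn (fun z : E => (1 - ‖z‖) ^ q) (ball 0 1) := by
  apply ContinuousOn.rpow_const (by fun_prop)
  intro x hx
  left
  have : ‖x‖ < 1 := by simpa using hx
  linarith
end

section
open MeasureTheory Metric Set
variable {n : ℕ}
local notation "EE" => EuclideanSpace ℝ (Fin n)

lemma hm_div (f : EE → ℝ) (D : EE → EE →L[ℝ] ℝ) (hf : Continuous f) (hfs : HasCompactSupport f)
    (hD : ∀ z, z ≠ 0 → HasFDerivAt f (D z) z)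
    (Maj : EE → ℝ) (hMaj : Integrable Maj) (hb : ∀ z y, |D z y| ≤ Maj z * ‖y‖)
    (hsupp : ∀ z, 1 ≤ ‖z‖ → Maj z = 0) :
    Integrable (fun z => D z z) ∧ ∫ z, D z z = - (n : ℝ) * ∫ z, f z := by
  have hfi : Integrable f := hf.integrable_of_hasCompactSupport hfs
  set e : Fin n → EE := fun i => EuclideanSpace.basisFun (Fin n) ℝ i with he
  have hder : ∀ i z, HasFDerivAt (fun z : EE => z i * f z)
      (z i • D z + f z • (EuclideanSpace.proj i : EE →L[ℝ] ℝ)) z := by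
    intro i z
    rcases eq_or_ne z 0 with rfl | hz
    · have h0 : (0 : EE) i = 0 := rfl
      rw [h0, zero_smul, zero_add, hasFDerivAt_iff_isLittleO_nhds_zero]
      have h1 : (fun h : EE => h i) =O[nhds 0] fun h => h :=
        (EuclideanSpace.proj i : EE →L[ℝ] ℝ).isBigO_id _
      have h2 : (fun h : EE => f h - f 0) =o[nhds 0] fun _ => (1 : ℝ) := by
        rw [Asymptotics.isLittleO_one_iff]
        have := (hf.tendsto 0).sub_const (f 0)
        simpa using this
      have h3 := h1.norm_right.mul_isLittleO h2
      refine (h3.congr (fun h => ?_) (fun h => ?_)).of_norm_right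
      · simp; ring
      · simp
    · have h1 : HasFDerivAt (fun z : EE => z i) (EuclideanSpace.proj i : EE →L[ℝ] ℝ) z :=
        (EuclideanSpace.proj i : EE →L[ℝ] ℝ).hasFDerivAt
      exact h1.mul (hD z hz)
  have hint1 : ∀ i, Integrable (fun z : EE => z i * D z (e i)) := by
    intro i
    refine hMaj.mono' ?_ (Filter.Eventually.of_forall fun z => ?_)
    · have : (fun z : EE => z i * D z (e i)) = fun z => z i * fderiv ℝ f z (e i) := by
        ext z
        rcases eq_or_ne z 0 with rfl | hz
        · simp
        · rw [(hD z hz).fderiv]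
      rw [this]
      have hm : Measurable (fun z : EE => z i) :=
        (EuclideanSpace.proj i : EE →L[ℝ] ℝ).continuous.measurable
      exact (hm.mul (measurable_fderiv_apply_const ℝ f (e i))).aestronglyMeasurable
    · rw [Real.norm_eq_abs, abs_mul]
      have h1 : |D z (e i)| ≤ Maj z := by simpa [he] using hb z (e i)
      rcases le_or_gt 1 ‖z‖ with hz | hz
      · have := hsupp z hz
        have h2 : |D z (e i)| = 0 := le_antisymm (by rw [this] at h1; exact h1) (abs_nonneg _)
        rw [h2, this]; simp
      · have h2 : |z i| ≤ 1 := by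
          have := PiLp.norm_apply_le z i
          rw [Real.norm_eq_abs] at this
          linarith
        calc |z i| * |D z (e i)| ≤ 1 * Maj z := by gcongr
          _ = _ := one_mul _
  have hint2 : ∀ i, Integrable (fun z : EE => z i * f z) := by
    intro i
    have hc : Continuous (fun z : EE => z i) := (EuclideanSpace.proj i : EE →L[ℝ] ℝ).continuous
    exact (hc.mul hf).integrable_of_hasCompactSupport (hfs.mul_left)
  have hzero : ∀ i, ∫ z : EE, (z i * D z (e i) + f z) = 0 := by
    intro i
    have := integral_bilinear_hasFDerivAt_right_eq_neg_left_of_integrable (μ := (volume : Measure EE))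
      (f := fun _ : EE => (1 : ℝ)) (f' := fun _ => 0) (g := fun z : EE => z i * f z)
      (g' := fun z => z i • D z + f z • (EuclideanSpace.proj i : EE →L[ℝ] ℝ)) (v := e i)
      (B := ContinuousLinearMap.mul ℝ ℝ) (by simp) (by
        have hh : Integrable (fun z : EE => z i * D z (e i) + f z) := (hint1 i).add hfi
        simpa [he] using hh) (by simpa using hint2 i)
      (fun x _ => hasFDerivAt_const _ _) (fun x _ => hder i x)
    simpa [he] using this
  have hDs : ∀ z : EE, D z z = ∑ i, z i * D z (e i) := by
    intro z
    have h1 := congrArg (D z) ((EuclideanSpace.basisFun (Fin n) ℝ).sum_repr z)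
    rw [map_sum] at h1
    rw [← h1]
    simp [he]
  have hDf : (fun z => D z z) = fun z : EE => ∑ i, z i * D z (e i) := funext hDs
  rw [hDf]
  refine ⟨integrable_finsetSum _ fun i _ => hint1 i, ?_⟩
  rw [integral_finsetSum _ fun i _ => hint1 i]
  have : ∀ i, ∫ z : EE, z i * D z (e i) = - ∫ z, f z := by
    intro i
    have := hzero i
    rw [integral_add (hint1 i) hfi] at this
    linarith
  simp [this]
end

section
open MeasureTheory Metric Set
variable {n : ℕ}
local notation "EE" => EuclideanSpace ℝ (Fin n)

/-- Hardy difference on the unit ball. -/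
noncomputable def hmI (p : ℝ) (u : EE → ℝ) : ℝ :=
  (∫ z in ball (0 : EE) 1, ‖fderiv ℝ u z‖ ^ p)
    - ((p - 1) / p) ^ p * ∫ z in ball (0 : EE) 1, |u z| ^ p / (1 - ‖z‖) ^ p

/-- twisted gradient -/
noncomputable def hmG (p : ℝ) (u : EE → ℝ) (z : EE) : EE →L[ℝ] ℝ :=
  fderiv ℝ u z + (2 * ((p - 1) / p) * u z / (1 - ‖z‖ ^ 2)) • innerSL ℝ z

structure HmAdm (u : EE → ℝ) : Prop where
  cd : ContDiff ℝ (⊤ : ℕ∞) u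
  cs : HasCompactSupport u
  sub : tsupport u ⊆ ball (0 : EE) 1

lemma HmAdm.zero {u : EE → ℝ} (z : EE) (hz : z ∉ tsupport u) : u z = 0 :=
  image_eq_zero_of_notMem_tsupport hz

lemma HmAdm.dzero {u : EE → ℝ} (z : EE) (hz : z ∉ tsupport u) : fderiv ℝ u z = 0 := by
  by_contra h
  exact hz (support_fderiv_subset ℝ h)

lemma HmAdm.cont {u : EE → ℝ} (h : HmAdm u) : Continuous u := h.cd.continuous

lemma HmAdm.contD {u : EE → ℝ} (h : HmAdm u) : Continuous (fderiv ℝ u) :=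
  h.cd.continuous_fderiv (by simp)

lemma HmAdm.diff {u : EE → ℝ} (h : HmAdm u) (z : EE) : HasFDerivAt u (fderiv ℝ u z) z :=
  ((h.cd.differentiable (by simp)) z).hasFDerivAt

lemma HmAdm.cc {F : Type*} [NormedAddCommGroup F] {u : EE → ℝ} (h : HmAdm u) {g : EE → F}
    (hc : ContinuousOn g (ball 0 1)) (h0 : ∀ z, z ∉ tsupport u → g z = 0) :
    Continuous g ∧ HasCompactSupport g := hm_cc h.cs h.sub hc h0

lemma HmAdm.setInt {F : Type*} [NormedAddCommGroup F] [NormedSpace ℝ F]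
    {u : EE → ℝ} (h : HmAdm u) {g : EE → F}
    (h0 : ∀ z, z ∉ tsupport u → g z = 0) :
    ∫ z in ball (0 : EE) 1, g z = ∫ z, g z :=
  setIntegral_eq_integral_of_forall_compl_eq_zero fun z hz => h0 z fun hz' => hz (h.sub hz')

lemma HmAdm.G_cc {u : EE → ℝ} (h : HmAdm u) (p : ℝ) :
    Continuous (hmG p u) ∧ HasCompactSupport (hmG p u) := by
  refine h.cc ?_ ?_
  · unfold hmG
    apply ContinuousOn.add h.contD.continuousOn
    apply ContinuousOn.fun_smul
    · apply ContinuousOn.div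
      · exact (continuous_const.mul h.cont).continuousOn
      · fun_prop
      · intro z hz
        have : ‖z‖ < 1 := by simpa using hz
        have := norm_nonneg z
        nlinarith
    · exact (innerSL ℝ : EE →L⋆[ℝ] EE →L[ℝ] ℝ).continuous.continuousOn
  · intro z hz
    simp [hmG, HmAdm.zero z hz, HmAdm.dzero z hz]

lemma HmAdm.w_cc {u : EE → ℝ} (h : HmAdm u) (p q : ℝ) (hp : 0 < p) :
    Continuous (fun z => (1 - ‖z‖) ^ q * |u z| ^ p) ∧
      HasCompactSupport (fun z => (1 - ‖z‖) ^ q * |u z| ^ p) := by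
  refine h.cc ?_ ?_
  · apply (hm_contOn_d q).mul
    exact (h.cont.abs.rpow_const fun _ => Or.inr hp.le).continuousOn
  · intro z hz
    simp [HmAdm.zero z hz, Real.zero_rpow hp.ne']

lemma HmAdm.ibp {u : EE → ℝ} (h : HmAdm u) (p : ℝ) (hp : 2 < p) :
    Integrable (fun z => (1 - ‖z‖) ^ (1 - p) * (p * |u z| ^ (p - 2) * u z * fderiv ℝ u z z)) ∧
    Integrable (fun z : EE => ‖z‖ * ((1 - ‖z‖) ^ (-p) * |u z| ^ p)) ∧
    (∫ z, (1 - ‖z‖) ^ (1 - p) * (p * |u z| ^ (p - 2) * u z * fderiv ℝ u z z))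
      + (p - 1) * ∫ z, ‖z‖ * ((1 - ‖z‖) ^ (-p) * |u z| ^ p) =
      - (n : ℝ) * ∫ z, (1 - ‖z‖) ^ (1 - p) * |u z| ^ p := by
  have hp0 : 0 < p := by linarith
  have hi2 : Integrable (fun z : EE => ‖z‖ * ((1 - ‖z‖) ^ (-p) * |u z| ^ p)) := by
    have := h.w_cc p (-p) hp0
    exact (continuous_norm.mul this.1).integrable_of_hasCompactSupport this.2.mul_left
  have hcu : Continuous (fun z => p * |u z| ^ (p - 2)) :=
    continuous_const.mul (h.cont.abs.rpow_const fun _ => Or.inr (by linarith))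
  have hi1 : Integrable (fun z => (1 - ‖z‖) ^ (1 - p) * (p * |u z| ^ (p - 2) * u z * fderiv ℝ u z z)) := by
    have := h.cc (g := fun z => (1 - ‖z‖) ^ (1 - p) * (p * |u z| ^ (p - 2) * u z * fderiv ℝ u z z))
      ((hm_contOn_d (1 - p)).mul ((hcu.mul h.cont).mul
        (h.contD.clm_apply continuous_id)).continuousOn)
      (fun z hz => by simp [HmAdm.zero z hz])
    exact this.1.integrable_of_hasCompactSupport this.2
  refine ⟨hi1, hi2, ?_⟩
  obtain ⟨hf, hfs⟩ := h.w_cc p (1 - p) hp0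
  set D : EE → EE →L[ℝ] ℝ := fun z =>
    (1 - ‖z‖) ^ (1 - p) • ((p * |u z| ^ (p - 2) * u z) • fderiv ℝ u z) +
      |u z| ^ p • (((1 - p) * (1 - ‖z‖) ^ (-p)) • (-(‖z‖⁻¹ • innerSL ℝ z))) with hDdef
  set Maj : EE → ℝ := fun z => (1 - ‖z‖) ^ (1 - p) * (p * |u z| ^ (p - 2) * |u z| * ‖fderiv ℝ u z‖)
    + (p - 1) * ((1 - ‖z‖) ^ (-p) * |u z| ^ p) with hMajdef
  have hMz : ∀ z, z ∉ tsupport u → Maj z = 0 := by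
    intro z hz
    simp [hMajdef, HmAdm.zero z hz, Real.zero_rpow hp0.ne']
  have hDz : ∀ z, z ∉ tsupport u → D z = 0 := by
    intro z hz
    simp [hDdef, HmAdm.zero z hz, Real.zero_rpow hp0.ne']
  have hMc := h.cc (g := Maj) (by
    apply ContinuousOn.add
    · exact (hm_contOn_d (1 - p)).mul ((hcu.mul h.cont.abs).mul h.contD.norm).continuousOn
    · exact (continuous_const.mul (h.w_cc p (-p) hp0).1).continuousOn) hMz
  have key := hm_div (fun z => (1 - ‖z‖) ^ (1 - p) * |u z| ^ p) D hf hfs ?_ Maj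
    (hMc.1.integrable_of_hasCompactSupport hMc.2) ?_ ?_
  · rw [← key.2, ← integral_const_mul, ← integral_add hi1 (hi2.const_mul _)]
    congr 1
    ext z
    have := hm_normD_self z
    simp only [hDdef, _root_.add_apply, _root_.smul_apply, _root_.neg_apply, smul_eq_mul] at this ⊢
    rw [this]
    ring
  · intro z hz
    by_cases hzt : z ∈ tsupport u
    · have hzb : ‖z‖ < 1 := by simpa using h.sub hzt
      have h1 : HasFDerivAt (fun z : EE => 1 - ‖z‖) (-(‖z‖⁻¹ • innerSL ℝ z)) z :=
        (hm_hasFDerivAt_norm z hz).const_sub 1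
      have h2 := h1.rpow_const (p := 1 - p) (Or.inl (by linarith))
      have h3 : HasFDerivAt (fun z => |u z| ^ p) ((p * |u z| ^ (p - 2) * u z) • fderiv ℝ u z) z :=
        (hasDerivAt_abs_rpow (u z) (by linarith)).comp_hasFDerivAt z (h.diff z)
      have h4 := h2.mul h3
      rw [show 1 - p - 1 = -p by ring] at h4
      exact h4
    · rw [hDz z hzt]
      have : (fun z => (1 - ‖z‖) ^ (1 - p) * |u z| ^ p) =ᶠ[nhds z] fun _ => 0 := by
        filter_upwards [(isClosed_tsupport u).isOpen_compl.mem_nhds hzt] with y hy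
        simp [HmAdm.zero y hy, Real.zero_rpow hp0.ne']
      exact (hasFDerivAt_const 0 z).congr_of_eventuallyEq this
  · intro z y
    by_cases hzt : z ∈ tsupport u
    · have hzb : ‖z‖ < 1 := by simpa using h.sub hzt
      have hd : 0 < 1 - ‖z‖ := by linarith
      have h1 := hm_normD_le z y
      have h2 := (fderiv ℝ u z).le_opNorm y
      rw [Real.norm_eq_abs] at h2
      have e : D z y = (1 - ‖z‖) ^ (1 - p) * (p * |u z| ^ (p - 2) * u z * fderiv ℝ u z y) +
        (p - 1) * ((1 - ‖z‖) ^ (-p) * |u z| ^ p) * (‖z‖⁻¹ • innerSL ℝ z) y := by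
        simp only [hDdef, _root_.add_apply, _root_.smul_apply, _root_.neg_apply, smul_eq_mul]
        ring
      rw [e]
      refine (abs_add_le _ _).trans ?_
      rw [hMajdef, add_mul]
      apply add_le_add
      · rw [abs_mul, abs_mul, abs_mul, abs_mul, abs_of_pos hp0, abs_of_nonneg (Real.rpow_nonneg hd.le _),
          abs_of_nonneg (Real.rpow_nonneg (abs_nonneg _) _)]
        calc _ ≤ (1 - ‖z‖) ^ (1 - p) * (p * |u z| ^ (p - 2) * |u z| * (‖fderiv ℝ u z‖ * ‖y‖)) := by
              have := Real.rpow_nonneg hd.le (1 - p)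
              gcongr
          _ = _ := by ring
      · rw [abs_mul]
        have h0 : 0 ≤ (p - 1) * ((1 - ‖z‖) ^ (-p) * |u z| ^ p) :=
          mul_nonneg (by linarith) (by positivity)
        rw [abs_of_nonneg h0]
        gcongr
    · rw [hDz z hzt, hMz z hzt]; simp
  · intro z hz
    apply hMz
    intro hzt
    have hzb : ‖z‖ < 1 := by simpa using h.sub hzt
    linarith

lemma hm_energy (hn : 2 ≤ n) (p : ℝ) (hp : (n : ℝ) < p) :
    ∃ c : ℝ, 0 < c ∧ ∀ u : EE → ℝ, HmAdm u →
      c * (∫ z, ‖hmG p u z‖ ^ p) ≤ hmI p u ∧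
      c * (∫ z, (1 - ‖z‖) ^ (1 - p) * |u z| ^ p) ≤ hmI p u := by
  have hn' : (2 : ℝ) ≤ n := by exact_mod_cast hn
  have hp2 : 2 < p := by linarith
  have hp0 : 0 < p := by linarith
  set α : ℝ := (p - 1) / p with hα
  have hα0 : 0 < α := by rw [hα]; exact div_pos (by linarith) hp0
  have hα1 : α < 1 := by rw [hα, div_lt_one hp0]; linarith
  set ε : ℝ := α ^ (p - 1) / 2 with hε
  have hε0 : 0 < ε := by positivity
  obtain ⟨c, hc0, hc⟩ := hm_pointwise (E := EE) p hp2 ε hε0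
  refine ⟨min c ε, by positivity, ?_⟩
  intro u h
  obtain ⟨i1, i2, hibp⟩ := h.ibp p hp2
  have i3 : Integrable (fun z => (1 - ‖z‖) ^ (1 - p) * |u z| ^ p) :=
    (h.w_cc p (1 - p) hp0).1.integrable_of_hasCompactSupport (h.w_cc p (1 - p) hp0).2
  have i4 : Integrable (fun z => (1 - ‖z‖) ^ (-p) * |u z| ^ p) :=
    (h.w_cc p (-p) hp0).1.integrable_of_hasCompactSupport (h.w_cc p (-p) hp0).2
  have i5 : Integrable (fun z => ‖hmG p u z‖ ^ p) :=
    ((h.G_cc p).1.norm.rpow_const fun _ => Or.inr hp0.le).integrable_of_hasCompactSupport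
      ((h.G_cc p).2.comp_left (g := fun x => ‖x‖ ^ p) (by simp [Real.zero_rpow hp0.ne']))
  have i6 : Integrable (fun z => ‖fderiv ℝ u z‖ ^ p) :=
    (h.contD.norm.rpow_const fun _ => Or.inr hp0.le).integrable_of_hasCompactSupport
      ((h.cs.fderiv ℝ).comp_left (g := fun x => ‖x‖ ^ p) (by simp [Real.zero_rpow hp0.ne']))
  set A := ∫ z, ‖fderiv ℝ u z‖ ^ p with hA
  set P := ∫ z, (1 - ‖z‖) ^ (1 - p) * (p * |u z| ^ (p - 2) * u z * fderiv ℝ u z z) with hP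
  set Q := ∫ z : EE, ‖z‖ * ((1 - ‖z‖) ^ (-p) * |u z| ^ p) with hQ
  set K := ∫ z, (1 - ‖z‖) ^ (1 - p) * |u z| ^ p with hK
  set W := ∫ z, (1 - ‖z‖) ^ (-p) * |u z| ^ p with hW
  set G := ∫ z, ‖hmG p u z‖ ^ p with hG
  have hI : hmI p u = A - α ^ p * W := by
    unfold hmI
    rw [h.setInt (fun z hz => by simp [HmAdm.dzero z hz, Real.zero_rpow hp0.ne']),
      h.setInt (fun z hz => by simp [HmAdm.zero z hz, Real.zero_rpow hp0.ne'])]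
    congr 2
    rw [hW]
    congr 1
    ext z
    by_cases hzt : z ∈ tsupport u
    · have hzb : ‖z‖ < 1 := by simpa using h.sub hzt
      rw [Real.rpow_neg (by linarith)]
      field_simp
    · simp [HmAdm.zero z hzt, Real.zero_rpow hp0.ne']
  have hWQ : W = K + Q := by
    rw [hW, hK, hQ, ← integral_add i3 i2]
    congr 1
    ext z
    by_cases hzt : z ∈ tsupport u
    · have hzb : ‖z‖ < 1 := by simpa using h.sub hzt
      have : (1 - ‖z‖) ^ (1 - p) = (1 - ‖z‖) * (1 - ‖z‖) ^ (-p) := by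
        rw [mul_comm, ← Real.rpow_add_one (by linarith)]; congr 1; ring
      rw [this]; ring
    · simp [HmAdm.zero z hzt, Real.zero_rpow hp0.ne']
  have hK0 : 0 ≤ K := integral_nonneg fun z => by
    by_cases hzt : z ∈ tsupport u
    · have hzb : ‖z‖ < 1 := by simpa using h.sub hzt
      have : 0 ≤ 1 - ‖z‖ := by linarith
      show 0 ≤ (1 - ‖z‖) ^ (1 - p) * |u z| ^ p
      positivity
    · simp [HmAdm.zero z hzt, Real.zero_rpow hp0.ne']
  have hG0 : 0 ≤ G := integral_nonneg fun z => by positivity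
  have hmain : c * G ≤ A + α ^ (p - 1) * P + (p - 1) * α ^ p * Q + ε * K := by
    have e : A + α ^ (p - 1) * P + (p - 1) * α ^ p * Q + ε * K =
        ∫ z, (‖fderiv ℝ u z‖ ^ p + α ^ (p - 1) * ((1 - ‖z‖) ^ (1 - p) * (p * |u z| ^ (p - 2) * u z * fderiv ℝ u z z))
          + (p - 1) * α ^ p * (‖z‖ * ((1 - ‖z‖) ^ (-p) * |u z| ^ p))
          + ε * ((1 - ‖z‖) ^ (1 - p) * |u z| ^ p)) := by
      have j1 : Integrable (fun z => ‖fderiv ℝ u z‖ ^ p + α ^ (p - 1) * ((1 - ‖z‖) ^ (1 - p) * (p * |u z| ^ (p - 2) * u z * fderiv ℝ u z z))) :=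
        i6.add (i1.const_mul _)
      have j2 : Integrable (fun z => ‖fderiv ℝ u z‖ ^ p + α ^ (p - 1) * ((1 - ‖z‖) ^ (1 - p) * (p * |u z| ^ (p - 2) * u z * fderiv ℝ u z z))
          + (p - 1) * α ^ p * (‖z‖ * ((1 - ‖z‖) ^ (-p) * |u z| ^ p))) := j1.add (i2.const_mul _)
      rw [integral_add j2 (i3.const_mul _), integral_add j1 (i2.const_mul _),
        integral_add i6 (i1.const_mul _), integral_const_mul, integral_const_mul, integral_const_mul]
    rw [e, hG, ← integral_const_mul]
    refine integral_mono (i5.const_mul _)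
      (((i6.add (i1.const_mul _)).add (i2.const_mul _)).add (i3.const_mul _)) fun z => ?_
    by_cases hzt : z ∈ tsupport u
    · have hzb : ‖z‖ < 1 := by simpa using h.sub hzt
      have := hc ((InnerProductSpace.toDual ℝ EE).symm (fderiv ℝ u z)) z (u z) hzb
      rw [LinearIsometryEquiv.norm_map, real_inner_comm, InnerProductSpace.toDual_symm_apply] at this
      have e2 : ‖hmG p u z‖ = ‖(InnerProductSpace.toDual ℝ EE).symm (fderiv ℝ u z) +
          (2 * α * u z / (1 - ‖z‖ ^ 2)) • z‖ := by
        rw [← LinearIsometryEquiv.norm_map (InnerProductSpace.toDual ℝ EE)]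
        congr 1
        ext y
        simp [hmG, hα, inner_add_left, inner_smul_left]
      show c * ‖hmG p u z‖ ^ p ≤ _
      rw [e2]
      exact this
    · have : hmG p u z = 0 := by simp [hmG, HmAdm.zero z hzt, HmAdm.dzero z hzt]
      simp [this, HmAdm.zero z hzt, HmAdm.dzero z hzt, Real.zero_rpow hp0.ne']
  have hαp : α ^ p = α ^ (p - 1) * α := by
    rw [← Real.rpow_add_one hα0.ne']; congr 1; ring
  have hαα : (p - 1) * (1 - α) = α := by rw [hα]; field_simp; ring
  have hfin : c * G + ε * K ≤ hmI p u := by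
    rw [hI, hWQ, hαp]
    rw [hαp] at hmain
    have hP' : P = -(n : ℝ) * K - (p - 1) * Q := by linarith
    rw [hP'] at hmain
    have ha : 0 < α ^ (p - 1) := by positivity
    have e3 : α ^ (p - 1) * (-(n : ℝ) * K - (p - 1) * Q) + (p - 1) * (α ^ (p - 1) * α) * Q
        = - (α ^ (p - 1) * (n * K)) - α ^ (p - 1) * ((p - 1) * (1 - α)) * Q := by ring
    rw [hαα] at e3
    have e4 : 2 * ε * K = α ^ (p - 1) * K := by rw [hε]; ring
    have e5 : 0 ≤ α ^ (p - 1) * K * ((n : ℝ) - α - 1) :=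
      mul_nonneg (by positivity) (by linarith)
    nlinarith
  have m1 := min_le_left c ε
  have m2 := min_le_right c ε
  constructor
  · have : min c ε * G ≤ c * G := by gcongr
    have : 0 ≤ ε * K := by positivity
    linarith
  · have : min c ε * K ≤ ε * K := by gcongr
    have : 0 ≤ c * G := by positivity
    linarith
end

section
open MeasureTheory Metric Set
variable {n : ℕ}
local notation "EE" => EuclideanSpace ℝ (Fin n)

lemma hm_change (H : EE → ENNReal) (hH : Measurable H) (x : EE) (t : ℝ) (ht : 0 < t) :
    ∫⁻ z, H (x + t • (z - x)) = ENNReal.ofReal (t ^ (-(n : ℝ))) * ∫⁻ z, H z := by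
  have h1 : ∀ z : EE, H (x + t • (z - x)) = (fun y => H (y + (x - t • x))) (t • z) := by
    intro z
    show _ = H _
    congr 1
    rw [smul_sub]; abel
  simp_rw [h1]
  have hm : Measurable (fun y : EE => H (y + (x - t • x))) := hH.comp (measurable_add_const _)
  have h2 := lintegral_map (μ := (volume : Measure EE)) hm (measurable_const_smul t)
  rw [← h2, Measure.map_addHaar_smul volume ht.ne', lintegral_smul_measure,
    lintegral_add_right_eq_self, smul_eq_mul, finrank_euclideanSpace_fin]
  congr 2
  rw [abs_of_pos (by positivity), Real.rpow_neg ht.le, Real.rpow_natCast]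

lemma hm_ftc (f : EE → ℝ) (hf : ContDiff ℝ 1 f) (x z : EE) :
    ‖f x - f z‖ₑ ≤ ∫⁻ t in Ioc (0:ℝ) 1, ‖fderiv ℝ f (x + t • (z - x))‖ₑ * ‖z - x‖ₑ := by
  have hc : Continuous (fun t : ℝ => fderiv ℝ f (x + t • (z - x)) (z - x)) :=
    ((hf.continuous_fderiv (by simp)).comp (by fun_prop)).clm_apply continuous_const
  have hd : ∀ t ∈ uIcc (0:ℝ) 1, HasDerivAt (fun t : ℝ => f (x + t • (z - x)))
      (fderiv ℝ f (x + t • (z - x)) (z - x)) t := by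
    intro t _
    have h1 : HasDerivAt (fun t : ℝ => x + t • (z - x)) (z - x) t := by
      simpa using ((hasDerivAt_id t).smul_const (z - x)).const_add x
    exact ((hf.differentiable (by simp)) _).hasFDerivAt.comp_hasDerivAt t h1
  have := intervalIntegral.integral_eq_sub_of_hasDerivAt hd (hc.intervalIntegrable _ _)
  simp only [one_smul, add_sub_cancel, zero_smul, add_zero] at this
  rw [← enorm_neg, neg_sub, ← this, intervalIntegral.integral_of_le zero_le_one]
  refine (enorm_integral_le_lintegral_enorm _).trans ?_
  refine lintegral_mono fun t => ?_
  exact ContinuousLinearMap.le_opENorm _ _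

lemma hm_morrey (p : ℝ) (hp : 1 < p) (f : EE → ℝ) (hf : ContDiff ℝ 1 f)
    (S : Set EE) (hS : MeasurableSet S) (x : EE) (L : ENNReal) (hL : ∀ z ∈ S, ‖z - x‖ₑ ≤ L)
    (H : EE → ENNReal) (hH : Measurable H) (k : ℝ → ENNReal) (hkm : Measurable k)
    (hk : ∀ t ∈ Ioc (0:ℝ) 1, ∀ z ∈ S,
      ‖fderiv ℝ f (x + t • (z - x))‖ₑ ^ p ≤ k t * H (x + t • (z - x))) :
    ∫⁻ z in S, ‖f x - f z‖ₑ ≤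
      L * volume S ^ (1 - 1 / p) * (∫⁻ z, H z) ^ (1 / p) *
        ∫⁻ t in Ioc (0:ℝ) 1, k t ^ (1 / p) * ENNReal.ofReal (t ^ (-(n : ℝ) / p)) := by
  have hp0 : 0 < p := by linarith
  have hcd : Continuous (fun q : EE × ℝ => ‖fderiv ℝ f (x + q.2 • (q.1 - x))‖ₑ) :=
    ((hf.continuous_fderiv (by simp)).comp (by fun_prop)).enorm
  calc ∫⁻ z in S, ‖f x - f z‖ₑ
      ≤ ∫⁻ z in S, ∫⁻ t in Ioc (0:ℝ) 1, ‖fderiv ℝ f (x + t • (z - x))‖ₑ * L := by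
        refine setLIntegral_mono' hS fun z hz => ?_
        refine (hm_ftc f hf x z).trans ?_
        gcongr
        exact hL z hz
    _ = ∫⁻ t in Ioc (0:ℝ) 1, ∫⁻ z in S, ‖fderiv ℝ f (x + t • (z - x))‖ₑ * L := by
        apply lintegral_lintegral_swap
        exact (hcd.measurable.mul_const L).aemeasurable
    _ ≤ ∫⁻ t in Ioc (0:ℝ) 1, (L * volume S ^ (1 - 1 / p) * (∫⁻ z, H z) ^ (1 / p)) *
          (k t ^ (1 / p) * ENNReal.ofReal (t ^ (-(n : ℝ) / p))) := by
        refine setLIntegral_mono' measurableSet_Ioc fun t ht => ?_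
        have hct : Continuous (fun z : EE => ‖fderiv ℝ f (x + t • (z - x))‖ₑ) :=
          ((hf.continuous_fderiv (by simp)).comp (by fun_prop)).enorm
        rw [lintegral_mul_const _ hct.measurable]
        have hpq : p.HolderConjugate (p / (p - 1)) := Real.HolderConjugate.conjExponent hp
        have h1 := ENNReal.lintegral_mul_le_Lp_mul_Lq (volume.restrict S) hpq
          (f := fun z : EE => ‖fderiv ℝ f (x + t • (z - x))‖ₑ) (g := fun _ => 1)
          hct.measurable.aemeasurable aemeasurable_const
        simp only [Pi.mul_apply, mul_one, ENNReal.one_rpow, lintegral_const,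
          Measure.restrict_apply MeasurableSet.univ, univ_inter, one_mul] at h1
        have e1 : 1 / (p / (p - 1)) = 1 - 1 / p := by
          have : p - 1 ≠ 0 := by linarith
          field_simp
        rw [e1] at h1
        have h2 : ∫⁻ z in S, ‖fderiv ℝ f (x + t • (z - x))‖ₑ ^ p ≤
            k t * (ENNReal.ofReal (t ^ (-(n : ℝ))) * ∫⁻ z, H z) := by
          rw [← hm_change H hH x t ht.1]
          have hHm : Measurable (fun z : EE => H (x + t • (z - x))) :=
            hH.comp (by fun_prop)
          calc _ ≤ ∫⁻ z in S, k t * H (x + t • (z - x)) := setLIntegral_mono' hS (hk t ht)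
            _ ≤ ∫⁻ z, k t * H (x + t • (z - x)) := setLIntegral_le_lintegral _ _
            _ = _ := lintegral_const_mul _ hHm
        have h3 : (∫⁻ z in S, ‖fderiv ℝ f (x + t • (z - x))‖ₑ ^ p) ^ (1 / p) ≤
            k t ^ (1 / p) * (ENNReal.ofReal (t ^ (-(n : ℝ) / p)) * (∫⁻ z, H z) ^ (1 / p)) := by
          refine (ENNReal.rpow_le_rpow h2 (by positivity)).trans (le_of_eq ?_)
          rw [ENNReal.mul_rpow_of_nonneg _ _ (by positivity),
            ENNReal.mul_rpow_of_nonneg _ _ (by positivity),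
            ENNReal.ofReal_rpow_of_nonneg (Real.rpow_nonneg ht.1.le _) (by positivity),
            ← Real.rpow_mul ht.1.le]
          congr 4
          ring
        calc _ ≤ (k t ^ (1 / p) * (ENNReal.ofReal (t ^ (-(n : ℝ) / p)) * (∫⁻ z, H z) ^ (1 / p))) *
              volume S ^ (1 - 1 / p) * L := by
              gcongr
              exact h1.trans (by gcongr)
          _ = _ := by ring
    _ = _ := by
        refine lintegral_const_mul _ ?_
        exact (hkm.pow_const _).mul (by fun_prop)
end

section
open MeasureTheory Metric Set
variable {n : ℕ}
local notation "EE" => EuclideanSpace ℝ (Fin n)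

lemma hm_morrey_real (p : ℝ) (hp : 1 < p) (f : EE → ℝ) (hf : ContDiff ℝ 1 f)
    (S : Set EE) (hS : MeasurableSet S) (x : EE) (l : ℝ) (hl : ∀ z ∈ S, ‖z - x‖ ≤ l)
    (H : EE → ENNReal) (hH : Measurable H) (k : ℝ → ENNReal) (hkm : Measurable k)
    (hk : ∀ t ∈ Ioc (0:ℝ) 1, ∀ z ∈ S,
      ‖fderiv ℝ f (x + t • (z - x))‖ₑ ^ p ≤ k t * H (x + t • (z - x)))
    (m A B : ℝ) (hl0 : 0 ≤ l) (hm0 : 0 ≤ m) (hA0 : 0 ≤ A) (hm : volume S = ENNReal.ofReal m)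
    (hA : ∫⁻ z, H z ≤ ENNReal.ofReal A)
    (hB : ∫⁻ t in Ioc (0:ℝ) 1, k t ^ (1 / p) * ENNReal.ofReal (t ^ (-(n : ℝ) / p))
      ≤ ENNReal.ofReal B) :
    ∫⁻ z in S, ‖f x - f z‖ₑ ≤ ENNReal.ofReal (l * m ^ (1 - 1 / p) * A ^ (1 / p) * B) := by
  have hp0 : 0 < p := by linarith
  have hq : 0 ≤ 1 - 1 / p := by
    have : 1 / p ≤ 1 := by rw [div_le_one hp0]; linarith
    linarith
  refine (hm_morrey p hp f hf S hS x (ENNReal.ofReal l) (fun z hz => ?_) H hH k hkm hk).trans ?_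
  · rw [← ofReal_norm]; exact ENNReal.ofReal_le_ofReal (hl z hz)
  · rw [ENNReal.ofReal_mul (by positivity), ENNReal.ofReal_mul (by positivity),
      ENNReal.ofReal_mul (by positivity), ← ENNReal.ofReal_rpow_of_nonneg hm0 hq,
      ← ENNReal.ofReal_rpow_of_nonneg hA0 (by positivity), hm]
    gcongr

lemma hm_hold (p : ℝ) (hp : 1 < p) (f : EE → ℝ) (hf : Continuous f)
    (S : Set EE) (m A : ℝ) (hm0 : 0 ≤ m) (hA0 : 0 ≤ A) (hm : volume S = ENNReal.ofReal m)
    (hA : ∫⁻ z in S, ‖f z‖ₑ ^ p ≤ ENNReal.ofReal A) :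
    ∫⁻ z in S, ‖f z‖ₑ ≤ ENNReal.ofReal (m ^ (1 - 1 / p) * A ^ (1 / p)) := by
  have hp0 : 0 < p := by linarith
  have hq : 0 ≤ 1 - 1 / p := by
    have : 1 / p ≤ 1 := by rw [div_le_one hp0]; linarith
    linarith
  have hpq : p.HolderConjugate (p / (p - 1)) := Real.HolderConjugate.conjExponent hp
  have h1 := ENNReal.lintegral_mul_le_Lp_mul_Lq (volume.restrict S) hpq
    (f := fun z : EE => ‖f z‖ₑ) (g := fun _ => 1)
    hf.enorm.measurable.aemeasurable aemeasurable_const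
  simp only [Pi.mul_apply, mul_one, ENNReal.one_rpow, lintegral_const,
    Measure.restrict_apply MeasurableSet.univ, univ_inter, one_mul] at h1
  have e1 : 1 / (p / (p - 1)) = 1 - 1 / p := by
    have : p - 1 ≠ 0 := by linarith
    field_simp
  rw [e1] at h1
  refine h1.trans ?_
  rw [mul_comm, ENNReal.ofReal_mul (by positivity), ← ENNReal.ofReal_rpow_of_nonneg hm0 hq,
      ← ENNReal.ofReal_rpow_of_nonneg hA0 (by positivity), hm]
  gcongr

/-- one-dimensional integral with constant weight -/
lemma hm_int1 (r δ : ℝ) (hr : r < 1) (hδ : 0 < δ) :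
    ∫⁻ t in Ioc (0:ℝ) δ, ENNReal.ofReal (t ^ (-r)) = ENNReal.ofReal (δ ^ (1 - r) / (1 - r)) := by
  have hi : IntervalIntegrable (fun t : ℝ => t ^ (-r)) volume 0 δ :=
    intervalIntegral.intervalIntegrable_rpow' (by linarith)
  rw [← ofReal_integral_eq_lintegral_ofReal]
  · rw [← intervalIntegral.integral_of_le hδ.le, integral_rpow (Or.inl (by linarith)),
      show -r + 1 = 1 - r by ring, Real.zero_rpow (by linarith), sub_zero]
  · exact (intervalIntegrable_iff_integrableOn_Ioc_of_le hδ.le).1 hi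
  · filter_upwards [ae_restrict_mem measurableSet_Ioc] with t ht
    exact Real.rpow_nonneg ht.1.le _

lemma hm_int2 (r δ : ℝ) (hr : 1 < r) (hδ : 0 < δ) :
    ∫⁻ t in Ioi δ, ENNReal.ofReal (t ^ (-r)) = ENNReal.ofReal (δ ^ (1 - r) / (r - 1)) := by
  rw [← ofReal_integral_eq_lintegral_ofReal]
  · rw [integral_Ioi_rpow_of_lt (by linarith) hδ, show -r + 1 = 1 - r by ring]
    congr 1
    rw [neg_div, ← div_neg]; congr 1; ring
  · exact integrableOn_Ioi_rpow_of_lt (by linarith) hδ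
  · filter_upwards [ae_restrict_mem measurableSet_Ioi] with t ht
    exact Real.rpow_nonneg (hδ.trans ht).le _

lemma hm_int3 (hn : 2 ≤ n) (p : ℝ) (hp : (n : ℝ) < p) :
    ∃ C : ℝ, 0 < C ∧ ∀ δ : ℝ, 0 < δ → 
      ∫⁻ t in Ioc (0:ℝ) 1, (ENNReal.ofReal ((max δ t / 4) ^ (1 - p))) ^ (1 / p) *
        ENNReal.ofReal (t ^ (-(n : ℝ) / p)) ≤ ENNReal.ofReal (C * δ ^ ((1 - n) / p)) := by
  have hn' : (2 : ℝ) ≤ n := by exact_mod_cast hn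
  have hp0 : 0 < p := by linarith
  have hnp : (n : ℝ) / p < 1 := by rw [div_lt_one hp0]; exact hp
  set r : ℝ := n / p with hr
  set α : ℝ := (p - 1) / p with hα
  have hα0 : 0 < α := by rw [hα]; exact div_pos (by linarith) hp0
  have hαr : 1 < α + r := by
    rw [hα, hr, ← add_div, lt_div_iff₀ hp0]; linarith
  have e0 : (1 - n) / p = 1 - (α + r) := by rw [hα, hr]; field_simp; ring
  refine ⟨4 ^ α * (1 / (1 - r) + 1 / (α + r - 1)), ?_, ?_⟩
  · have : 0 < 1 - r := by linarith
    have : 0 < α + r - 1 := by linarith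
    positivity
  intro δ hδ
  have e1 : ∀ t : ℝ, (ENNReal.ofReal ((max δ t / 4) ^ (1 - p))) ^ (1 / p) =
      ENNReal.ofReal (4 ^ α) * ENNReal.ofReal ((max δ t) ^ (-α)) := by
    intro t
    have hm : 0 < max δ t := lt_max_of_lt_left hδ
    rw [ENNReal.ofReal_rpow_of_nonneg (by positivity) (by positivity), ← Real.rpow_mul (by positivity),
      ← ENNReal.ofReal_mul (by positivity), show (1 - p) * (1 / p) = -α by rw [hα]; ring,
      Real.div_rpow hm.le (by norm_num), Real.rpow_neg (by norm_num : (0:ℝ) ≤ 4)]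
    congr 1
    field_simp
  have hsub : Ioc (0:ℝ) 1 ⊆ Ioc 0 δ ∪ Ioi δ := by
    intro t ht
    rcases le_or_gt t δ with h | h
    · exact Or.inl ⟨ht.1, h⟩
    · exact Or.inr h
  simp_rw [e1, mul_assoc]
  rw [lintegral_const_mul _ (by fun_prop), ENNReal.ofReal_mul (by positivity),
    ENNReal.ofReal_mul (by positivity)]
  gcongr
  rw [e0]
  calc _ ≤ ∫⁻ t in Ioc 0 δ ∪ Ioi δ, ENNReal.ofReal ((max δ t) ^ (-α)) * ENNReal.ofReal (t ^ (-(n : ℝ) / p)) :=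
        lintegral_mono_set hsub
    _ ≤ (∫⁻ t in Ioc 0 δ, ENNReal.ofReal ((max δ t) ^ (-α)) * ENNReal.ofReal (t ^ (-(n : ℝ) / p))) +
        ∫⁻ t in Ioi δ, ENNReal.ofReal ((max δ t) ^ (-α)) * ENNReal.ofReal (t ^ (-(n : ℝ) / p)) :=
        lintegral_union_le _ _ _
    _ = (∫⁻ t in Ioc 0 δ, ENNReal.ofReal (δ ^ (-α)) * ENNReal.ofReal (t ^ (-r))) +
        ∫⁻ t in Ioi δ, ENNReal.ofReal (t ^ (-(α + r))) := by
        congr 1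
        · refine setLIntegral_congr_fun measurableSet_Ioc fun t ht => ?_
          simp only [max_eq_left ht.2, hr, neg_div]
        · refine setLIntegral_congr_fun measurableSet_Ioi fun t ht => ?_
          have ht' : δ < t := ht
          have ht0 : 0 < t := hδ.trans ht'
          simp only [max_eq_right ht'.le]
          rw [← ENNReal.ofReal_mul (by positivity), ← Real.rpow_add ht0]
          congr 2
          rw [hr]; ring
    _ = ENNReal.ofReal ((1 / (1 - r) + 1 / (α + r - 1)) * δ ^ (1 - (α + r))) := by
        rw [lintegral_const_mul _ (by fun_prop), hm_int1 r δ hnp hδ, hm_int2 (α + r) δ hαr hδ,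
          ← ENNReal.ofReal_mul (by positivity), ← ENNReal.ofReal_add]
        · congr 1
          rw [mul_div_assoc', ← Real.rpow_add hδ, add_mul]
          rw [show -α + (1 - r) = 1 - (α + r) by ring]
          ring
        · have : 0 < 1 - r := by linarith
          positivity
        · have : 0 < α + r - 1 := by linarith
          positivity
    _ ≤ _ := by
        rw [ENNReal.ofReal_mul]
        have : 0 < 1 - r := by linarith
        have : 0 < α + r - 1 := by linarith
        positivity
end

section
open MeasureTheory Metric Set
variable {n : ℕ}
local notation "EE" => EuclideanSpace ℝ (Fin n)

noncomputable def hmV (p : ℝ) (u : EE → ℝ) (z : EE) : ℝ :=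
  u z * (1 - ‖z‖ ^ 2) ^ (-((p - 1) / p))

lemma hmV_deriv (p : ℝ) {u : EE → ℝ} (h : HmAdm u) (z : EE) :
    HasFDerivAt (hmV p u) ((1 - ‖z‖ ^ 2) ^ (-((p - 1) / p)) • hmG p u z) z := by
  by_cases hz : z ∈ tsupport u
  · have hzb : ‖z‖ < 1 := by simpa using h.sub hz
    have hs : 0 < 1 - ‖z‖ ^ 2 := by nlinarith [norm_nonneg z]
    have h1 : HasFDerivAt (fun z : EE => 1 - ‖z‖ ^ 2) (-(2 • innerSL ℝ z)) z :=
      (hasStrictFDerivAt_norm_sq z).hasFDerivAt.const_sub 1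
    have h2 := h1.rpow_const (p := -((p - 1) / p)) (Or.inl hs.ne')
    have h3 := (h.diff z).mul h2
    refine h3.congr_fderiv ?_
    ext y
    simp only [hmG, _root_.add_apply, _root_.smul_apply, _root_.neg_apply, smul_eq_mul, smul_add,
      nsmul_eq_mul]
    rw [Real.rpow_sub_one hs.ne']
    push_cast
    field_simp
    ring
  · have e : (fun z => hmV p u z) =ᶠ[nhds z] fun _ => 0 := by
      have : (tsupport u)ᶜ ∈ nhds z := (isClosed_tsupport u).isOpen_compl.mem_nhds hz
      filter_upwards [this] with w hw
      simp [hmV, HmAdm.zero w hw]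
    have h0 : (1 - ‖z‖ ^ 2) ^ (-((p - 1) / p)) • hmG p u z = 0 := by
      simp [hmG, HmAdm.zero z hz, HmAdm.dzero z hz]
    rw [h0]
    exact (hasFDerivAt_const (0:ℝ) z).congr_of_eventuallyEq e

lemma hmV_contDiff (p : ℝ) {u : EE → ℝ} (h : HmAdm u) : ContDiff ℝ 1 (hmV p u) := by
  rw [contDiff_one_iff_fderiv]
  refine ⟨fun z => (hmV_deriv p h z).differentiableAt, ?_⟩
  have : fderiv ℝ (hmV p u) = fun z => (1 - ‖z‖ ^ 2) ^ (-((p - 1) / p)) • hmG p u z := by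
    ext1 z; exact (hmV_deriv p h z).fderiv
  rw [this]
  refine (h.cc ?_ ?_).1
  · apply ContinuousOn.fun_smul
    · apply ContinuousOn.rpow_const
      · fun_prop
      · intro z hz
        have : ‖z‖ < 1 := by simpa using hz
        left
        nlinarith [norm_nonneg z]
    · exact (h.G_cc p).1.continuousOn
  · intro z hz
    simp [hmG, HmAdm.zero z hz, HmAdm.dzero z hz]

lemma hm_lint {F : Type*} [NormedAddCommGroup F] (p : ℝ) (hp : 0 < p) (g : EE → F)
    (hc : Continuous g) (hs : HasCompactSupport g) :
    ∫⁻ z, ‖g z‖ₑ ^ p = ENNReal.ofReal (∫ z, ‖g z‖ ^ p) := by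
  rw [ofReal_integral_eq_lintegral_ofReal]
  · congr 1
    ext z
    rw [← ofReal_norm, ENNReal.ofReal_rpow_of_nonneg (norm_nonneg _) hp.le]
  · apply Continuous.integrable_of_hasCompactSupport
    · exact hc.norm.rpow_const fun _ => Or.inr hp.le
    · exact hs.comp_left (g := fun y => ‖y‖ ^ p) (by simp [Real.zero_rpow hp.ne'])
  · exact Filter.Eventually.of_forall fun z => by positivity

lemma hm_dist_low (x z : EE) (hx : ‖x‖ < 1) (hz : ‖z‖ < 1 / 2) (t : ℝ) (ht : t ∈ Ioc (0:ℝ) 1) :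
    max (1 - ‖x‖) t / 4 ≤ 1 - ‖x + t • (z - x)‖ := by
  have e : x + t • (z - x) = (1 - t) • x + t • z := by rw [smul_sub, sub_smul, one_smul]; abel
  have h1 : ‖x + t • (z - x)‖ ≤ (1 - t) * ‖x‖ + t * ‖z‖ := by
    rw [e]
    refine (norm_add_le _ _).trans (le_of_eq ?_)
    rw [norm_smul, norm_smul, Real.norm_of_nonneg (by linarith [ht.2]), Real.norm_of_nonneg ht.1.le]
  have h0 := norm_nonneg x
  have ht1 := ht.1
  have ht2 := ht.2
  rcases max_cases (1 - ‖x‖) t with ⟨hm, _⟩ | ⟨hm, _⟩ <;> rw [hm] <;> nlinarith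

lemma hm_wt (p : ℝ) (hp : 1 < p) (s a : ℝ) (hs0 : 0 ≤ s) (hs : s < 1) (ha : 0 < a) (has : a ≤ 1 - s) :
    ((1 - s ^ 2) ^ (-((p - 1) / p))) ^ p ≤ a ^ (1 - p) := by
  have h1 : 0 < 1 - s ^ 2 := by nlinarith
  rw [← Real.rpow_mul h1.le, show -((p - 1) / p) * p = 1 - p by field_simp; ring]
  exact Real.rpow_le_rpow_of_nonpos ha (by nlinarith) (by linarith)

lemma hm_sup (hn : 2 ≤ n) (p : ℝ) (hp : (n : ℝ) < p) :
    ∃ C : ℝ, 0 < C ∧ ∀ u : EE → ℝ, HmAdm u → ∀ x : EE, ‖x‖ < 1 →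
      |u x| ≤ C * (1 - ‖x‖) ^ (1 - (n : ℝ) / p) * (hmI p u) ^ (1 / p) := by
  have hn' : (2 : ℝ) ≤ n := by exact_mod_cast hn
  have hp0 : 0 < p := by linarith
  have hp1 : 1 < p := by linarith
  obtain ⟨c, hc, hen⟩ := hm_energy hn p hp
  obtain ⟨C1, hC1, hint⟩ := hm_int3 hn p hp
  set S : Set EE := ball 0 (1 / 2) with hSdef
  set m : ℝ := volume.real S with hmdef
  have hm : volume S = ENNReal.ofReal m := by
    rw [hmdef, Measure.real, ENNReal.ofReal_toReal measure_ball_lt_top.ne]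
  have hm0 : 0 < m := by
    rw [hmdef, Measure.real]
    exact ENNReal.toReal_pos (measure_ball_pos _ _ (by norm_num)).ne' measure_ball_lt_top.ne
  set α : ℝ := (p - 1) / p with hα
  have hα0 : 0 < α := by rw [hα]; exact div_pos (by linarith) hp0
  refine ⟨m⁻¹ * (m ^ (1 - 1 / p) * (1 / c) ^ (1 / p) * (2 * C1 + 1)) * 2 ^ α, by positivity, ?_⟩
  intro u hu x hx
  obtain ⟨hG, hU⟩ := hen u hu
  set δ : ℝ := 1 - ‖x‖ with hδ
  have hδ0 : 0 < δ := by linarith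
  have hδ1 : δ ≤ 1 := by linarith [norm_nonneg x]
  set I := hmI p u with hI
  have hI0 : 0 ≤ I := le_trans (by positivity) hG
  have hA0 : 0 ≤ I / c := by positivity
  have hx2 : 0 < 1 - ‖x‖ ^ 2 := by nlinarith [norm_nonneg x]
  have key1 := hm_morrey_real p hp1 (hmV p u) (hmV_contDiff p hu) S measurableSet_ball x 2 (by
      intro z hz
      have : ‖z‖ < 1 / 2 := by simpa [hSdef] using hz
      linarith [norm_sub_le z x])
    (fun z => ‖hmG p u z‖ₑ ^ p) ((hu.G_cc p).1.enorm.measurable.pow_const p)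
    (fun t => ENNReal.ofReal ((max δ t / 4) ^ (1 - p))) (by fun_prop) (by
      intro t ht z hz
      have hz' : ‖z‖ < 1 / 2 := by simpa [hSdef] using hz
      have hlow := hm_dist_low x z hx hz' t ht
      have hmx : 0 < max δ t / 4 := by
        have : 0 < max δ t := lt_max_of_lt_left hδ0
        positivity
      rw [(hmV_deriv p hu _).fderiv, enorm_smul, ENNReal.mul_rpow_of_nonneg _ _ hp0.le]
      gcongr
      have hw : ‖x + t • (z - x)‖ < 1 := by linarith
      have := hm_wt p hp1 ‖x + t • (z - x)‖ _ (norm_nonneg _) hw hmx hlow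
      rw [Real.enorm_eq_ofReal (Real.rpow_nonneg (by nlinarith [norm_nonneg (x + t • (z - x))]) _),
        ENNReal.ofReal_rpow_of_nonneg (Real.rpow_nonneg
          (by nlinarith [norm_nonneg (x + t • (z - x))]) _) hp0.le]
      exact ENNReal.ofReal_le_ofReal this)
    m (I / c) (C1 * δ ^ ((1 - n) / p)) (by norm_num) hm0.le hA0 hm (by
      rw [hm_lint p hp0 _ (hu.G_cc p).1 (hu.G_cc p).2]
      apply ENNReal.ofReal_le_ofReal
      rw [le_div_iff₀ hc]; linarith) (hint δ hδ0)
  have key2 := hm_hold p hp1 (hmV p u) (hmV_contDiff p hu).continuous S m (I / c) hm0.le hA0 hm (by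
    calc ∫⁻ z in S, ‖hmV p u z‖ₑ ^ p ≤ ∫⁻ z in S, ENNReal.ofReal ((1 - ‖z‖) ^ (1 - p) * |u z| ^ p) := by
          refine setLIntegral_mono' measurableSet_ball fun z hz => ?_
          have hz' : ‖z‖ < 1 / 2 := by simpa [hSdef] using hz
          rw [← ofReal_norm, ENNReal.ofReal_rpow_of_nonneg (norm_nonneg _) hp0.le]
          apply ENNReal.ofReal_le_ofReal
          have h2 : 0 ≤ 1 - ‖z‖ ^ 2 := by nlinarith [norm_nonneg z]
          rw [hmV, norm_mul, Real.mul_rpow (norm_nonneg _) (norm_nonneg _), mul_comm,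
            Real.norm_of_nonneg (Real.rpow_nonneg h2 _), Real.norm_eq_abs]
          gcongr
          exact hm_wt p hp1 _ _ (norm_nonneg _) (by linarith) (by linarith) le_rfl
      _ ≤ ∫⁻ z in ball (0:EE) 1, ENNReal.ofReal ((1 - ‖z‖) ^ (1 - p) * |u z| ^ p) :=
          lintegral_mono_set (ball_subset_ball (by norm_num))
      _ = ENNReal.ofReal (∫ z in ball (0:EE) 1, (1 - ‖z‖) ^ (1 - p) * |u z| ^ p) := by
          have := hu.w_cc p (1 - p) hp0
          rw [ofReal_integral_eq_lintegral_ofReal]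
          · exact (this.1.integrable_of_hasCompactSupport this.2).integrableOn
          · filter_upwards [ae_restrict_mem measurableSet_ball] with z hz
            have hz' : ‖z‖ < 1 := by simpa using hz
            have : 0 ≤ 1 - ‖z‖ := by linarith
            exact mul_nonneg (Real.rpow_nonneg this _) (by positivity)
      _ ≤ _ := by
          apply ENNReal.ofReal_le_ofReal
          rw [hu.setInt (fun z hz => by simp [HmAdm.zero z hz, Real.zero_rpow hp0.ne']),
            le_div_iff₀ hc]
          linarith)
  have key3 : ENNReal.ofReal (|hmV p u x| * m) ≤ ENNReal.ofReal
      (2 * m ^ (1 - 1 / p) * (I / c) ^ (1 / p) * (C1 * δ ^ ((1 - n) / p)) +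
        m ^ (1 - 1 / p) * (I / c) ^ (1 / p)) := by
    rw [ENNReal.ofReal_add (by positivity) (by positivity)]
    refine le_trans ?_ (add_le_add key1 key2)
    have hcv := (hmV_contDiff p hu).continuous
    rw [← lintegral_add_right _ hcv.enorm.measurable]
    calc _ = ∫⁻ z in S, ‖hmV p u x‖ₑ := by
          rw [setLIntegral_const, hm, ENNReal.ofReal_mul (abs_nonneg _), ← Real.norm_eq_abs,
            ofReal_norm]
      _ ≤ _ := by
          refine lintegral_mono fun z => ?_
          have := enorm_add_le (hmV p u x - hmV p u z) (hmV p u z)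
          simpa using this
  rw [ENNReal.ofReal_le_ofReal_iff (by positivity)] at key3
  have hone : 1 ≤ δ ^ ((1 - (n:ℝ)) / p) :=
    Real.one_le_rpow_of_pos_of_le_one_of_nonpos hδ0 hδ1
      (div_nonpos_of_nonpos_of_nonneg (by linarith) hp0.le)
  have eI : (I / c) ^ (1 / p) = (1 / c) ^ (1 / p) * I ^ (1 / p) := by
    rw [← Real.mul_rpow (by positivity) hI0]; congr 1; ring
  have key4 : |hmV p u x| ≤ m⁻¹ * (m ^ (1 - 1 / p) * (1 / c) ^ (1 / p) * (2 * C1 + 1)) *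
      δ ^ ((1 - (n:ℝ)) / p) * I ^ (1 / p) := by
    rw [← mul_le_mul_iff_left₀ hm0]
    refine key3.trans ?_
    rw [eI]
    have hX : 0 ≤ m ^ (1 - 1 / p) * (1 / c) ^ (1 / p) * I ^ (1 / p) := by positivity
    calc _ = m ^ (1 - 1 / p) * (1 / c) ^ (1 / p) * I ^ (1 / p) * (2 * C1 * δ ^ ((1 - (n:ℝ)) / p) + 1) := by ring
      _ ≤ m ^ (1 - 1 / p) * (1 / c) ^ (1 / p) * I ^ (1 / p) *
          (2 * C1 * δ ^ ((1 - (n:ℝ)) / p) + δ ^ ((1 - (n:ℝ)) / p)) := by gcongr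
      _ = _ := by field_simp
  have eu : |u x| = |hmV p u x| * (1 - ‖x‖ ^ 2) ^ α := by
    rw [hmV, abs_mul, abs_of_nonneg (Real.rpow_nonneg hx2.le _), mul_assoc,
      ← Real.rpow_add hx2, neg_add_cancel, Real.rpow_zero, mul_one]
  have hw : (1 - ‖x‖ ^ 2) ^ α ≤ 2 ^ α * δ ^ α := by
    rw [← Real.mul_rpow (by norm_num) hδ0.le]
    apply Real.rpow_le_rpow hx2.le _ hα0.le
    rw [hδ]; nlinarith [norm_nonneg x]
  have eδ : δ ^ (1 - (n:ℝ) / p) = δ ^ ((1 - (n:ℝ)) / p) * δ ^ α := by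
    rw [← Real.rpow_add hδ0]; congr 1; rw [hα]; field_simp; ring
  rw [eu, eδ]
  calc _ ≤ (m⁻¹ * (m ^ (1 - 1 / p) * (1 / c) ^ (1 / p) * (2 * C1 + 1)) *
      δ ^ ((1 - (n:ℝ)) / p) * I ^ (1 / p)) * (2 ^ α * δ ^ α) := by gcongr
    _ = _ := by ring
end

section
open MeasureTheory Metric Set
variable {n : ℕ}
local notation "EE" => EuclideanSpace ℝ (Fin n)

lemma hm_grad_G (p : ℝ) (hp : 1 < p) (u : EE → ℝ) (w : EE) (hw : ‖w‖ < 1) :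
    ‖fderiv ℝ u w‖ ≤ ‖hmG p u w‖ + 2 * (|u w| / (1 - ‖w‖)) := by
  have hp0 : 0 < p := by linarith
  have h0 := norm_nonneg w
  have h2 : 0 < 1 - ‖w‖ ^ 2 := by nlinarith
  have h1 : 0 < 1 - ‖w‖ := by linarith
  have e : fderiv ℝ u w = hmG p u w - (2 * ((p - 1) / p) * u w / (1 - ‖w‖ ^ 2)) • innerSL ℝ w := by
    rw [hmG]; abel
  have hα0 : 0 ≤ (p - 1) / p := div_nonneg (by linarith) hp0.le
  have hα1 : (p - 1) / p ≤ 1 := by rw [div_le_one hp0]; linarith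
  rw [e]
  refine (norm_sub_le _ _).trans ?_
  gcongr
  rw [norm_smul, innerSL_apply_norm, norm_div, norm_mul, norm_mul, Real.norm_of_nonneg h2.le,
    Real.norm_of_nonneg hα0, Real.norm_eq_abs, Real.norm_eq_abs, abs_two]
  calc 2 * ((p - 1) / p) * |u w| / (1 - ‖w‖ ^ 2) * ‖w‖ ≤ 2 * 1 * |u w| / (1 - ‖w‖ ^ 2) * 1 := by
        gcongr
    _ = 2 * (|u w| / (1 - ‖w‖ ^ 2)) := by ring
    _ ≤ _ := by
        gcongr
        nlinarith

lemma hm_vol_ball (x : EE) (r : ℝ) (hr : 0 < r) :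
    volume (ball x r) = ENNReal.ofReal (r ^ n * volume.real (ball (0:EE) 1)) := by
  rw [Measure.addHaar_ball_of_pos _ _ hr, finrank_euclideanSpace_fin, ENNReal.ofReal_mul (by positivity),
    Measure.real, ENNReal.ofReal_toReal measure_ball_lt_top.ne]

lemma hm_vol_cball (x : EE) (r : ℝ) (hr : 0 < r) :
    volume (closedBall x r) = ENNReal.ofReal (r ^ n * volume.real (ball (0:EE) 1)) := by
  rw [Measure.addHaar_closedBall _ _ hr.le, finrank_euclideanSpace_fin,
    ENNReal.ofReal_mul (by positivity),
    Measure.real, ENNReal.ofReal_toReal measure_ball_lt_top.ne]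

lemma hm_local (hn : 2 ≤ n) (p : ℝ) (hp : (n : ℝ) < p) :
    ∃ C : ℝ, 0 < C ∧ ∀ u : EE → ℝ, HmAdm u → ∀ x : EE, ∀ r : ℝ, 0 < r → r ≤ (1 - ‖x‖) / 2 →
      ∫⁻ z, (closedBall x r).indicator (fun z => ‖fderiv ℝ u z‖ₑ ^ p) z ≤
        ENNReal.ofReal (C * hmI p u) := by
  have hn' : (2 : ℝ) ≤ n := by exact_mod_cast hn
  have hp0 : 0 < p := by linarith
  have hp1 : 1 < p := by linarith
  obtain ⟨c, hc, hen⟩ := hm_energy hn p hp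
  obtain ⟨C1, hC1, hsup⟩ := hm_sup hn p hp
  set m1 : ℝ := volume.real (ball (0:EE) 1) with hm1
  have hm10 : 0 ≤ m1 := measureReal_nonneg
  refine ⟨2 ^ p * (1 / c + (2 * C1) ^ p * m1), by positivity, ?_⟩
  intro u hu x r hr hrx
  obtain ⟨hG, -⟩ := hen u hu
  set I := hmI p u with hI
  have hI0 : 0 ≤ I := le_trans (by positivity) hG
  set M : ℝ := 2 * C1 * (r ^ (-(n:ℝ) / p) * I ^ (1 / p)) with hM
  have hM0 : 0 ≤ M := by positivity
  have hpt : ∀ w ∈ closedBall x r, ‖fderiv ℝ u w‖ₑ ^ p ≤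
      ENNReal.ofReal (2 ^ p) * (‖hmG p u w‖ₑ ^ p + ENNReal.ofReal (M ^ p)) := by
    intro w hw
    rw [mem_closedBall, dist_eq_norm] at hw
    have hw' : ‖w‖ ≤ ‖x‖ + r := by
      have := norm_add_le x (w - x)
      rw [add_sub_cancel] at this; linarith
    have hd : r ≤ 1 - ‖w‖ := by linarith
    have hd0 : 0 < 1 - ‖w‖ := by linarith
    have h1 := hm_grad_G p hp1 u w (by linarith)
    have h2 : 2 * (|u w| / (1 - ‖w‖)) ≤ M := by
      have h3 := hsup u hu w (by linarith)
      have h4 : |u w| / (1 - ‖w‖) ≤ C1 * ((1 - ‖w‖) ^ (-(n:ℝ) / p) * I ^ (1 / p)) := by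
        rw [div_le_iff₀ hd0]
        refine h3.trans (le_of_eq ?_)
        rw [show 1 - (n:ℝ) / p = -(n:ℝ)/p + 1 by ring, Real.rpow_add_one hd0.ne']
        ring
      have h5 : (1 - ‖w‖) ^ (-(n:ℝ) / p) ≤ r ^ (-(n:ℝ) / p) :=
        Real.rpow_le_rpow_of_nonpos hr hd
          (div_nonpos_of_nonpos_of_nonneg (by linarith) hp0.le)
      calc _ ≤ 2 * (C1 * ((1 - ‖w‖) ^ (-(n:ℝ) / p) * I ^ (1 / p))) := by gcongr
        _ ≤ 2 * (C1 * (r ^ (-(n:ℝ) / p) * I ^ (1 / p))) := by gcongr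
        _ = M := by rw [hM]; ring
    have h6 : ‖fderiv ℝ u w‖ ^ p ≤ 2 ^ p * (‖hmG p u w‖ ^ p + M ^ p) :=
      (Real.rpow_le_rpow (norm_nonneg _) (h1.trans (by linarith : _ ≤ ‖hmG p u w‖ + M)) hp0.le).trans
        (hm_add_rpow p hp1.le _ _ (norm_nonneg _) hM0)
    rw [← ofReal_norm, ← ofReal_norm, ENNReal.ofReal_rpow_of_nonneg (norm_nonneg _) hp0.le,
      ENNReal.ofReal_rpow_of_nonneg (norm_nonneg _) hp0.le,
      ← ENNReal.ofReal_add (by positivity) (by positivity), ← ENNReal.ofReal_mul (by positivity)]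
    exact ENNReal.ofReal_le_ofReal h6
  have hMp : M ^ p * (r ^ n * m1) = (2 * C1) ^ p * m1 * I := by
    rw [hM, Real.mul_rpow (x := 2 * C1) (by positivity) (by positivity),
      Real.mul_rpow (x := r ^ (-(n:ℝ) / p)) (by positivity) (by positivity),
      ← Real.rpow_mul hr.le, ← Real.rpow_mul hI0, show -(n:ℝ) / p * p = -(n:ℝ) by field_simp,
      show 1 / p * p = 1 by field_simp, Real.rpow_one, Real.rpow_neg hr.le, Real.rpow_natCast]
    field_simp
  rw [lintegral_indicator measurableSet_closedBall]
  have hGm : Measurable (fun w => ‖hmG p u w‖ₑ ^ p) := (hu.G_cc p).1.enorm.measurable.pow_const p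
  calc _ ≤ ∫⁻ w in closedBall x r,
        ENNReal.ofReal (2 ^ p) * (‖hmG p u w‖ₑ ^ p + ENNReal.ofReal (M ^ p)) :=
        setLIntegral_mono' measurableSet_closedBall hpt
    _ = ENNReal.ofReal (2 ^ p) * ((∫⁻ w in closedBall x r, ‖hmG p u w‖ₑ ^ p) +
          ENNReal.ofReal (M ^ p) * volume (closedBall x r)) := by
        rw [lintegral_const_mul _ (hGm.add_const _), lintegral_add_left hGm, setLIntegral_const]
    _ ≤ ENNReal.ofReal (2 ^ p) * (ENNReal.ofReal (I / c) + ENNReal.ofReal ((2 * C1) ^ p * m1 * I)) := by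
        rw [hm_vol_cball x r hr, ← ENNReal.ofReal_mul (by positivity), hMp]
        gcongr
        refine (setLIntegral_le_lintegral _ _).trans ?_
        rw [hm_lint p hp0 _ (hu.G_cc p).1 (hu.G_cc p).2]
        apply ENNReal.ofReal_le_ofReal
        rw [le_div_iff₀ hc]; linarith
    _ = _ := by
        rw [← ENNReal.ofReal_add (by positivity) (by positivity), ← ENNReal.ofReal_mul (by positivity)]
        congr 1
        ring

lemma hm_near (hn : 2 ≤ n) (p : ℝ) (hp : (n : ℝ) < p) :
    ∃ C : ℝ, 0 < C ∧ ∀ u : EE → ℝ, HmAdm u → ∀ x y : EE, x ≠ y → dist x y ≤ (1 - ‖x‖) / 2 →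
      |u x - u y| ≤ C * dist x y ^ (1 - (n : ℝ) / p) * (hmI p u) ^ (1 / p) := by
  have hn' : (2 : ℝ) ≤ n := by exact_mod_cast hn
  have hp0 : 0 < p := by linarith
  have hp1 : 1 < p := by linarith
  have hnp : (n : ℝ) / p < 1 := by rw [div_lt_one hp0]; exact hp
  obtain ⟨c, hc, hen⟩ := hm_energy hn p hp
  obtain ⟨C2, hC2, hloc⟩ := hm_local hn p hp
  set m1 : ℝ := volume.real (ball (0:EE) 1) with hm1
  have hm10 : 0 < m1 := by
    rw [hm1, Measure.real]
    exact ENNReal.toReal_pos (measure_ball_pos _ _ (by norm_num)).ne' measure_ball_lt_top.ne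
  set B : ℝ := (1:ℝ) ^ (1 - (n:ℝ) / p) / (1 - (n:ℝ) / p) with hB
  have hB0 : 0 < B := by
    have : 0 < 1 - (n:ℝ) / p := by linarith
    rw [hB]; positivity
  have hBi : ∫⁻ t in Ioc (0:ℝ) 1, (1 : ENNReal) ^ (1 / p) * ENNReal.ofReal (t ^ (-(n : ℝ) / p))
      ≤ ENNReal.ofReal B := by
    simp only [ENNReal.one_rpow, one_mul, neg_div]
    exact (hm_int1 ((n:ℝ) / p) 1 hnp one_pos).le
  refine ⟨3 * m1 ^ (-(1 / p)) * C2 ^ (1 / p) * B, by positivity, ?_⟩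
  intro u hu x y hxy hr
  set r := dist x y with hrdef
  have hr0 : 0 < r := dist_pos.2 hxy
  obtain ⟨hG, -⟩ := hen u hu
  have hI0 : 0 ≤ hmI p u := le_trans (by positivity) hG
  set I := hmI p u with hI
  have hm := hm_vol_ball x r hr0
  rw [← hm1] at hm
  have hmo : ∀ q : EE, q ∈ closedBall x r → ∀ l : ℝ, 0 ≤ l → (∀ z ∈ ball x r, ‖z - q‖ ≤ l) →
      ∫⁻ z in ball x r, ‖u q - u z‖ₑ ≤
        ENNReal.ofReal (l * (r ^ n * m1) ^ (1 - 1 / p) * (C2 * I) ^ (1 / p) * B) := by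
    intro q hq l hl0 hl
    refine hm_morrey_real p hp1 u (hu.cd.of_le (by exact_mod_cast le_top)) (ball x r) measurableSet_ball q l hl
      ((closedBall x r).indicator (fun z => ‖fderiv ℝ u z‖ₑ ^ p))
      ((hu.contD.enorm.measurable.pow_const p).indicator measurableSet_closedBall)
      (fun _ => 1) measurable_const ?_ (r ^ n * m1) (C2 * I) B hl0 (by positivity) (by positivity) hm
      (hloc u hu x r hr0 hr) hBi
    intro t ht z hz
    have hmem : q + t • (z - q) ∈ closedBall x r :=
      (convex_closedBall x r).add_smul_sub_mem hq (ball_subset_closedBall hz) ⟨ht.1.le, ht.2⟩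
    rw [indicator_of_mem hmem, one_mul]
  have k1 := hmo x (mem_closedBall_self hr0.le) r hr0.le (fun z hz => by
    rw [mem_ball, dist_eq_norm] at hz; exact hz.le)
  have k2 := hmo y (by rw [mem_closedBall, dist_comm]) (2 * r) (by positivity) (fun z hz => by
    rw [← dist_eq_norm]
    rw [mem_ball] at hz
    have := dist_triangle z x y
    linarith)
  have k3 : ENNReal.ofReal (|u x - u y| * (r ^ n * m1)) ≤ ENNReal.ofReal
      (r * (r ^ n * m1) ^ (1 - 1 / p) * (C2 * I) ^ (1 / p) * B +
        2 * r * (r ^ n * m1) ^ (1 - 1 / p) * (C2 * I) ^ (1 / p) * B) := by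
    rw [ENNReal.ofReal_add (by positivity) (by positivity)]
    refine le_trans ?_ (add_le_add k1 k2)
    rw [← lintegral_add_right _ (show Measurable fun z => ‖u y - u z‖ₑ from
      (continuous_const.sub hu.cont).enorm.measurable)]
    calc _ = ∫⁻ z in ball x r, ‖u x - u y‖ₑ := by
          rw [setLIntegral_const, hm, ENNReal.ofReal_mul (abs_nonneg _), ← Real.norm_eq_abs,
            ofReal_norm]
      _ ≤ _ := by
          refine lintegral_mono fun z => ?_
          have := enorm_sub_le (a := u x - u z) (b := u y - u z)
          simpa using this
  rw [ENNReal.ofReal_le_ofReal_iff (by positivity)] at k3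
  have hmm : 0 < r ^ n * m1 := by positivity
  rw [← mul_le_mul_iff_left₀ hmm]
  refine k3.trans (le_of_eq ?_)
  have e1 : (r ^ n * m1) ^ (1 - 1 / p) = (r ^ n * m1) * (r ^ (-((n:ℝ) / p)) * m1 ^ (-(1/p))) := by
    rw [sub_eq_add_neg, Real.rpow_add hmm, Real.rpow_one, Real.mul_rpow (by positivity) hm10.le,
      ← Real.rpow_natCast r n, ← Real.rpow_mul hr0.le]
    congr 3
    ring_nf
  have e2 : r ^ (1 - (n:ℝ) / p) = r * r ^ (-((n:ℝ) / p)) := by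
    rw [sub_eq_add_neg, Real.rpow_add hr0, Real.rpow_one]
  rw [e1, e2, Real.mul_rpow hC2.le hI0]
  ring

lemma hm_unit (hn : 2 ≤ n) (p : ℝ) (hp : (n : ℝ) < p) :
    ∃ C : ℝ, 0 < C ∧ ∀ u : EE → ℝ, HmAdm u → 0 ≤ hmI p u ∧
      ∀ x y : EE, ‖x‖ < 1 → ‖y‖ < 1 → x ≠ y →
      |u x - u y| ≤ C * dist x y ^ (1 - (n : ℝ) / p) * (hmI p u) ^ (1 / p) := by
  have hn' : (2 : ℝ) ≤ n := by exact_mod_cast hn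
  have hp0 : 0 < p := by linarith
  have hnp : (n : ℝ) / p < 1 := by rw [div_lt_one hp0]; exact hp
  obtain ⟨c, hc, hen⟩ := hm_energy hn p hp
  obtain ⟨C1, hC1, hsup⟩ := hm_sup hn p hp
  obtain ⟨C2, hC2, hnear⟩ := hm_near hn p hp
  refine ⟨C2 + (C1 * 3 ^ (1 - (n:ℝ) / p) + C1 * 3 ^ (1 - (n:ℝ) / p)), by positivity, ?_⟩
  intro u hu
  obtain ⟨hG, -⟩ := hen u hu
  have hI0 : 0 ≤ hmI p u := le_trans (by positivity) hG
  refine ⟨hI0, ?_⟩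
  intro x y hx hy hxy
  set r := dist x y with hrdef
  have hr0 : 0 < r := dist_pos.2 hxy
  set Q := r ^ (1 - (n:ℝ) / p) * (hmI p u) ^ (1 / p) with hQ
  have hQ0 : 0 ≤ Q := by positivity
  rcases le_or_gt r ((1 - ‖x‖) / 2) with h | h
  · refine (hnear u hu x y hxy h).trans ?_
    rw [mul_assoc, mul_assoc, ← hQ]
    gcongr
    have : 0 ≤ C1 * (3:ℝ) ^ (1 - (n:ℝ) / p) := by positivity
    linarith
  · have aux : ∀ w : EE, ‖w‖ < 1 → 1 - ‖w‖ ≤ 3 * r → |u w| ≤ C1 * 3 ^ (1 - (n:ℝ) / p) * Q := by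
      intro w hw hw3
      refine (hsup u hu w hw).trans ?_
      have : (1 - ‖w‖) ^ (1 - (n:ℝ) / p) ≤ 3 ^ (1 - (n:ℝ) / p) * r ^ (1 - (n:ℝ) / p) := by
        rw [← Real.mul_rpow (by norm_num) hr0.le]
        exact Real.rpow_le_rpow (by linarith) hw3 (by linarith)
      calc _ ≤ C1 * (3 ^ (1 - (n:ℝ) / p) * r ^ (1 - (n:ℝ) / p)) * hmI p u ^ (1 / p) := by gcongr
        _ = _ := by rw [hQ]; ring
    have a1 := aux x hx (by linarith)
    have a2 := aux y hy (by
      have h3 := norm_sub_norm_le x y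
      rw [← dist_eq_norm] at h3
      linarith)
    have h4 := abs_sub (u x) (u y)
    rw [mul_assoc, ← hQ, add_mul, add_mul]
    have : 0 ≤ C2 * Q := by positivity
    linarith
end

section
open MeasureTheory Metric Set
open scoped Pointwise
variable {n : ℕ}
local notation "EE" => EuclideanSpace ℝ (Fin n)

lemma hm_scale_adm (R : ℝ) (hR : 0 < R) (u : EE → ℝ) (hu : ContDiff ℝ (⊤ : ℕ∞) u)
    (hs : HasCompactSupport u) (hsub : tsupport u ⊆ ball (0 : EE) R) :
    HmAdm (fun z => u (R • z)) := by
  refine ⟨hu.comp (contDiff_const_smul R), ?_, ?_⟩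
  · exact hs.comp_smul hR.ne'
  · intro z hz
    have h1 : R • z ∈ tsupport u :=
      tsupport_comp_subset_preimage u (f := fun z : EE => R • z) (by fun_prop) hz
    have h2 := hsub h1
    rw [mem_ball_zero_iff, norm_smul, Real.norm_of_nonneg hR.le] at h2
    rw [mem_ball_zero_iff]
    nlinarith

lemma hm_scale_I (p : ℝ) (R : ℝ) (hR : 0 < R) (u : EE → ℝ) :
    hmI p (fun z => u (R • z)) = R ^ (p - n) *
      ((∫ z in ball (0 : EE) R, ‖fderiv ℝ u z‖ ^ p)
        - ((p - 1) / p) ^ p * ∫ z in ball (0 : EE) R, |u z| ^ p / (R - ‖z‖) ^ p) := by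
  have hb : R • ball (0:EE) 1 = ball 0 R := by
    rw [smul_unitBall hR.ne', Real.norm_of_nonneg hR.le]
  have h1 : ∀ f : EE → ℝ, ∫ z in ball (0:EE) 1, R ^ p * f (R • z) =
      R ^ (p - n) * ∫ z in ball (0:EE) R, f z := by
    intro f
    rw [integral_const_mul, Measure.setIntegral_comp_smul_of_pos volume f _ hR, hb,
      finrank_euclideanSpace_fin, smul_eq_mul, Real.rpow_sub hR, Real.rpow_natCast]
    ring
  have e1 : ∫ z in ball (0:EE) 1, ‖fderiv ℝ (fun z => u (R • z)) z‖ ^ p =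
      R ^ (p - n) * ∫ z in ball (0 : EE) R, ‖fderiv ℝ u z‖ ^ p := by
    rw [← h1]
    congr 1
    ext z
    rw [fderiv_comp_smul, norm_smul, Real.norm_of_nonneg hR.le,
      Real.mul_rpow hR.le (norm_nonneg _)]
  have e2 : ∫ z in ball (0:EE) 1, |u (R • z)| ^ p / (1 - ‖z‖) ^ p =
      R ^ (p - n) * ∫ z in ball (0 : EE) R, |u z| ^ p / (R - ‖z‖) ^ p := by
    rw [← h1]
    refine setIntegral_congr_fun measurableSet_ball fun z hz => ?_
    have hz' : ‖z‖ < 1 := by simpa using hz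
    have hz2 : 0 < 1 - ‖z‖ := by linarith
    rw [norm_smul, Real.norm_of_nonneg hR.le, show R - R * ‖z‖ = R * (1 - ‖z‖) by ring,
      Real.mul_rpow hR.le hz2.le]
    field_simp
  rw [hmI, e1, e2]
  ring
end

/-- Hardy–Morrey inequality on a ball, distance to the boundary. -/
theorem hardy_morrey_ball_boundary (n : ℕ) (hn : 2 ≤ n) (p : ℝ) (hp : (n : ℝ) < p) :
    ∃ b c : ℝ, 1 ≤ b ∧ 0 < c ∧
      ∀ R : ℝ, 0 < R →
      ∀ u : EuclideanSpace ℝ (Fin n) → ℝ, ContDiff ℝ (⊤ : ℕ∞) u → HasCompactSupport u →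
        tsupport u ⊆ Metric.ball (0 : EuclideanSpace ℝ (Fin n)) R →
        ∀ x ∈ Metric.ball (0 : EuclideanSpace ℝ (Fin n)) R,
        ∀ y ∈ Metric.ball (0 : EuclideanSpace ℝ (Fin n)) R, x ≠ y →
          |u x - u y| * ((1 - Real.log (dist x y / (2 * b * R)))⁻¹) ^ (1 / p) ≤
            c * dist x y ^ (1 - (n : ℝ) / p) *
              ((∫ z in Metric.ball (0 : EuclideanSpace ℝ (Fin n)) R, ‖fderiv ℝ u z‖ ^ p)
                - ((p - 1) / p) ^ p *
                    ∫ z in Metric.ball (0 : EuclideanSpace ℝ (Fin n)) R,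
                      |u z| ^ p / (R - ‖z‖) ^ p) ^ (1 / p) := by
  have hn' : (2 : ℝ) ≤ n := by exact_mod_cast hn
  have hp0 : 0 < p := by linarith
  obtain ⟨C, hC, hmain⟩ := hm_unit hn p hp
  refine ⟨1, C, le_rfl, hC, ?_⟩
  intro R hR u hu hs hsub x hx y hy hxy
  rw [mem_ball_zero_iff] at hx hy
  obtain ⟨hI0, hv⟩ := hmain _ (hm_scale_adm R hR u hu hs hsub)
  have hr0 : 0 < dist x y := dist_pos.2 hxy
  have hRi : 0 < R⁻¹ := inv_pos.2 hR
  have hnorm : ∀ w : EuclideanSpace ℝ (Fin n), ‖w‖ < R → ‖R⁻¹ • w‖ < 1 := by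
    intro w hw
    rw [norm_smul, Real.norm_of_nonneg hRi.le, inv_mul_lt_iff₀ hR]; linarith
  have h1 := hv (R⁻¹ • x) (R⁻¹ • y) (hnorm x hx) (hnorm y hy)
    (fun h => hxy (smul_right_injective _ hRi.ne' h))
  simp only [smul_inv_smul₀ hR.ne'] at h1
  rw [hm_scale_I p R hR u] at h1 hI0
  set J := (∫ z in Metric.ball (0 : EuclideanSpace ℝ (Fin n)) R, ‖fderiv ℝ u z‖ ^ p)
                - ((p - 1) / p) ^ p *
                    ∫ z in Metric.ball (0 : EuclideanSpace ℝ (Fin n)) R,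
                      |u z| ^ p / (R - ‖z‖) ^ p with hJ
  have hJ0 : 0 ≤ J := by
    have : 0 < R ^ (p - n) := by positivity
    exact nonneg_of_mul_nonneg_right hI0 this
  have h2 : |u x - u y| ≤ C * dist x y ^ (1 - (n : ℝ) / p) * J ^ (1 / p) := by
    refine h1.trans (le_of_eq ?_)
    rw [dist_smul₀, Real.norm_of_nonneg hRi.le, Real.mul_rpow hRi.le hr0.le,
      Real.mul_rpow (by positivity) hJ0, ← Real.rpow_mul hR.le, Real.inv_rpow hR.le,
      show (p - n) * (1 / p) = 1 - (n : ℝ) / p by field_simp]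
    have : 0 < R ^ (1 - (n : ℝ) / p) := by positivity
    field_simp
  have hd : dist x y / (2 * 1 * R) ≤ 1 := by
    rw [div_le_one (by positivity)]
    have := dist_le_norm_add_norm x y
    linarith
  have hlog : Real.log (dist x y / (2 * 1 * R)) ≤ 0 :=
    Real.log_nonpos (by positivity) hd
  have hX : ((1 - Real.log (dist x y / (2 * 1 * R)))⁻¹) ^ (1 / p) ≤ 1 := by
    apply Real.rpow_le_one
    · exact inv_nonneg.2 (by linarith)
    · exact inv_le_one_of_one_le₀ (by linarith)
    · positivity
  exact (mul_le_of_le_one_right (abs_nonneg _) hX).trans h2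
end

section
/- Let p > n ≥ 2 and R > 0, and let B_R := {x ∈ ℝⁿ : |x| < R} with d(x) := R − |x|. There exist constants Θ = Θ(n,p) ≥ 0 and C = C(n,p) > 0 such that for every u ∈ C_c^∞(B_R) and every D ≥ e^Θ R, one has sup_{x ∈ B_R} { |u(x)| · (d(x))^{n/p − 1} · X^{1/p}(d(x)/D) } ≤ C · ( ∫_{B_R} |∇u|^p dx − ((p−1)/p)^p ∫_{B_R} |u|^p / d^p dx )^{1/p}. -/
open MeasureTheory Metric Set

lemma hm_alg (p : ℝ) (hp : 2 < p) (d : ℝ) (hd : 0 < d) (φ φ' : ℝ) (h0 : 0 ≤ φ) (h1 : φ ≤ 1)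
    (f f' : ℝ) :
    -(((p-1)/p)^(p-1) * ((-φ') * d^(1-p) * |f|^p + (1-φ) * ((p-1) * d^(-p)) * |f|^p
      + (1-φ) * d^(1-p) * (p * |f|^(p-2) * f * f')))
    ≤ |f'|^p - ((p-1)/p)^(p-1) * ((p-1)/p - d * φ' - (p-1)/p * φ^2) * (|f|^p / d^p) := by
  have hp0 : 0 < p := by linarith
  set H := (p-1)/p with hH
  have hHpos : 0 < H := by rw [hH]; apply div_pos <;> linarith
  set q := p/(p-1) with hq
  have hpq : p.HolderConjugate q := (Real.holderConjugate_iff_eq_conjExponent (by linarith)).2 rfl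
  have hφ : 0 ≤ 1 - φ := by linarith
  set b := H^(p-1) * (1-φ) * d^(1-p) * |f|^(p-1) with hb
  have hb0 : 0 ≤ b := by positivity
  have hy := Real.young_inequality_of_nonneg (abs_nonneg f') hb0 hpq
  have hpq1 : (p-1)*q = p := by rw [hq]; field_simp [show p - 1 ≠ 0 by linarith]
  have hpq2 : (1-p)*q = -p := by linarith
  have hbq : b^q = H^p * (1-φ)^q * d^(-p) * |f|^p := by
    rw [hb, Real.mul_rpow (by positivity) (by positivity), Real.mul_rpow (by positivity) (by positivity),
      Real.mul_rpow (by positivity) (by positivity), ← Real.rpow_mul hHpos.le, ← Real.rpow_mul hd.le,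
      ← Real.rpow_mul (abs_nonneg f), hpq1, hpq2]
  have hbern : (1-φ)^q ≤ (1-φ) * (1 - φ/(p-1)) := by
    have h := _root_.rpow_one_add_le_one_add_mul_self (s := -φ) (by linarith) (p := 1/(p-1))
      (by apply div_nonneg <;> linarith) (by rw [div_le_one] <;> linarith)
    have e : q = 1 + 1/(p-1) := by rw [hq]; field_simp [show p - 1 ≠ 0 by linarith]; ring
    rcases hφ.eq_or_lt with h0 | h0
    · rw [← h0, Real.zero_rpow (by rw [e]; have : 0 < 1/(p-1) := by { apply div_pos <;> linarith }
                                   positivity)]; simp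
    · rw [e, Real.rpow_add h0, Real.rpow_one]
      gcongr
      calc _ = (1 + -φ)^(1/(p-1)) := by ring_nf
        _ ≤ _ := h
        _ = _ := by ring
  have hff : |f|^(p-2) * f * f' ≥ -(|f|^(p-1) * |f'|) := by
    have : |f|^(p-1) = |f|^(p-2) * |f| := by
      rcases eq_or_ne f 0 with h | h
      · subst h; simp [Real.zero_rpow (show p - 1 ≠ 0 by linarith)]
      · rw [show p - 1 = (p-2) + 1 by ring, Real.rpow_add (abs_pos.2 h), Real.rpow_one]
    rw [this]
    have h2 := neg_abs_le (f * f')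
    rw [abs_mul] at h2
    have h3 : 0 ≤ |f|^(p-2) := by positivity
    nlinarith
  have hd1 : d^(1-p) = d * d^(-p) := by
    rw [show 1 - p = 1 + -p by ring, Real.rpow_add hd, Real.rpow_one]
  have hHp : H^p = H * H^(p-1) := by
    rw [← Real.rpow_one_add' hHpos.le (by linarith)]; ring_nf
  rw [div_eq_mul_inv (|f|^p), ← Real.rpow_neg hd.le]
  have hy' : p * (|f'| * b) ≤ |f'|^p + (p-1) * b^q := by
    have : p * (|f'|^p/p + b^q/q) = |f'|^p + (p-1) * b^q := by
      rw [hq]; field_simp [show p - 1 ≠ 0 by linarith]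
    rw [← this]; gcongr
  have hc : -(H^(p-1) * ((1-φ) * d^(1-p) * (p * |f|^(p-2) * f * f'))) ≤ p * (|f'| * b) := by
    rw [hb]
    have h3 : 0 ≤ H^(p-1) * (1-φ) * d^(1-p) * p := by positivity
    nlinarith
  have hk : (p-1) * b^q ≤ H^(p-1) * ((p-1) * (1-φ) - H + H * φ^2) * (d^(-p) * |f|^p) := by
    rw [hbq, hHp]
    have h3 : 0 ≤ (p-1) * H * H^(p-1) * (d^(-p) * |f|^p) := by
      have : 0 ≤ p - 1 := by linarith
      positivity
    have h4 := mul_le_mul_of_nonneg_left hbern h3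
    have e : (p-1) * H * ((1-φ) * (1 - φ/(p-1))) = (p-1) * (1-φ) - H + H * φ^2 := by
      rw [hH]; field_simp [show p - 1 ≠ 0 by linarith]; ring
    calc _ = (p-1) * H * H^(p-1) * (d^(-p) * |f|^p) * (1-φ)^q := by ring
      _ ≤ _ := h4
      _ = H^(p-1) * ((p-1) * H * ((1-φ) * (1 - φ/(p-1)))) * (d^(-p) * |f|^p) := by ring
      _ = _ := by rw [e]
  rw [hd1] at hc ⊢
  nlinarith

lemma hm_seg (n : ℕ) (hn : 2 ≤ n) (p : ℝ) (hp : 2 < p) (R : ℝ) (f : ℝ → ℝ) (hf : ContDiff ℝ 1 f)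
    (a b : ℝ) (ha : 0 ≤ a) (hab : a ≤ b) (hb : b < R) (φ φ' : ℝ → ℝ)
    (hφ : ∀ r ∈ Icc a b, HasDerivAt φ (φ' r) r) (h0 : ∀ r ∈ Icc a b, 0 ≤ φ r ∧ φ r ≤ 1)
    (c κ : ℝ) (hc : 0 ≤ c)
    (hκ : ∀ r ∈ Ioo a b, κ ≤ c * ((p-1)/p - (R - r) * φ' r - (p-1)/p * (φ r)^2))
    (Ψ : ℝ → ℝ) (hΨ : IntegrableOn Ψ (Icc a b))
    (hΨ2 : ∀ r ∈ Ioo a b, r^(n-1) *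
      (c * |deriv f r|^p - ((p-1)/p)^(p-1) * κ * (|f r|^p / (R - r)^p)) ≤ Ψ r) :
    (((p-1)/p)^(p-1) * (R - a)^(1-p) * |f a|^p * a^(n-1)) * (c * (1 - φ a)) -
    (((p-1)/p)^(p-1) * (R - b)^(1-p) * |f b|^p * b^(n-1)) * (c * (1 - φ b)) ≤ ∫ r in a..b, Ψ r := by
  obtain ⟨m, rfl⟩ : ∃ m, n = m + 2 := ⟨n - 2, by omega⟩
  set H := (p-1)/p with hH
  have hHpos : 0 < H := by rw [hH]; apply div_pos <;> linarith
  let g : ℝ → ℝ := fun r => -(c * H^(p-1) * ((1 - φ r) * (R - r)^(1-p) * |f r|^p * r^(m+1)))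
  let g' : ℝ → ℝ := fun r => -(c * H^(p-1) * ((((-φ' r) * (R - r)^(1-p)
      + (1 - φ r) * ((p-1) * (R-r)^(-p))) * |f r|^p +
      (1 - φ r) * (R - r)^(1-p) * (p * |f r|^(p-2) * f r * deriv f r)) * r^(m+1)
      + (1 - φ r) * (R - r)^(1-p) * |f r|^p * ((m+1) * r^m)))
  have hg : ∀ r ∈ Icc a b, HasDerivAt g (g' r) r := by
    intro r hr
    have hd : 0 < R - r := by linarith [hr.2]
    have e1 : HasDerivAt (fun r => 1 - φ r) (-φ' r) r := (hφ r hr).const_sub 1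
    have e2 : HasDerivAt (fun r => (R - r)^(1-p)) ((p-1) * (R-r)^(-p)) r := by
      have := ((hasDerivAt_id' r).const_sub R).rpow_const (p := 1-p) (Or.inl hd.ne')
      refine this.congr_deriv ?_
      rw [show 1 - p - 1 = -p by ring]; ring
    have e3 : HasDerivAt (fun r => |f r|^p) (p * |f r|^(p-2) * f r * deriv f r) r :=
      (hasDerivAt_abs_rpow (f r) (by linarith)).comp r
        (hf.differentiable one_ne_zero r).hasDerivAt
    have e4 : HasDerivAt (fun r : ℝ => r^(m+1)) ((m+1) * r^m) r := by
      simpa using hasDerivAt_pow (m+1) r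
    exact ((((e1.mul e2).mul e3).mul e4).const_mul (c * H^(p-1))).neg
  have hle : ∀ r ∈ Ioo a b, g' r ≤ Ψ r := by
    intro r hr
    refine le_trans ?_ (hΨ2 r hr)
    have hr' := Ioo_subset_Icc_self hr
    have hd : 0 < R - r := by linarith [hr.2]
    have hr0 : 0 ≤ r := by linarith [hr.1]
    have h := hm_alg p hp (R - r) hd (φ r) (φ' r) (h0 r hr').1 (h0 r hr').2 (f r) (deriv f r)
    rw [← hH] at h
    have hk := hκ r hr
    have k0 : 0 ≤ H^(p-1) * (|f r|^p / (R - r)^p) := by positivity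
    have h2 := mul_le_mul_of_nonneg_right hk k0
    have h3 := mul_le_mul_of_nonneg_left h hc
    have h4 : 0 ≤ c * H^(p-1) * ((1 - φ r) * (R - r)^(1-p) * |f r|^p * ((m+1) * r^m)) := by
      have : 0 ≤ 1 - φ r := by linarith [(h0 r hr').2]
      positivity
    have h5 : 0 ≤ r^(m+1) := by positivity
    have h6 := mul_le_mul_of_nonneg_right (h3.trans (b := _)
      (c := c * |deriv f r|^p - H^(p-1) * κ * (|f r|^p / (R - r)^p)) (by nlinarith)) h5
    show _ ≤ r^(m+1) * _
    simp only [g']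
    nlinarith
  have := intervalIntegral.sub_le_integral_of_hasDeriv_right_of_le hab
    (fun r hr => (hg r hr).continuousAt.continuousWithinAt)
    (fun r hr => (hg r (Ioo_subset_Icc_self hr)).hasDerivWithinAt) hΨ hle
  refine le_trans (le_of_eq ?_) this
  simp only [g, show m + 2 - 1 = m + 1 by omega]
  ring

lemma hm_ray (n : ℕ) (hn : 2 ≤ n) (p : ℝ) (hp : 2 < p) (R D : ℝ) (hD : R ≤ D)
    (f : ℝ → ℝ) (hf : ContDiff ℝ 1 f)
    (r1 r2 b lam : ℝ) (h1 : 0 ≤ r1) (h12 : r1 ≤ r2) (h2b : r2 ≤ b) (hb : b < R) (hfb : f b = 0)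
    (hd : R - r1 ≤ 3 * (R - r2))
    (hlam : lam = (1 - Real.log ((R - r1) / D))⁻¹ / 48)
    (Ψ : ℝ → ℝ) (hΨ : IntegrableOn Ψ (Icc 0 b))
    (hΨ1 : ∀ r ∈ Ioo 0 r1 ∪ Ioo r2 b, r^(n-1) *
      (1 * |deriv f r|^p - ((p-1)/p)^(p-1) * ((p-1)/p) * (|f r|^p / (R - r)^p)) ≤ Ψ r)
    (hΨ2 : ∀ r ∈ Ioo r1 r2, r^(n-1) *
      ((1 - lam/4) * |deriv f r|^p -
        ((p-1)/p)^(p-1) * ((p-1)/p + lam/4) * (|f r|^p / (R - r)^p)) ≤ Ψ r) :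
    0 ≤ ∫ r in 0..b, Ψ r := by
  have hR : 0 < R := by linarith
  have hD0 : 0 < D := by linarith
  have hH0 : 0 < (p-1)/p := by apply div_pos <;> linarith
  have hH1 : (p-1)/p ≤ 1 := by rw [div_le_one] <;> linarith
  have hX : ∀ r ∈ Icc 0 r1, 1 ≤ 1 - Real.log ((R - r) / D) := by
    intro r hr
    have : Real.log ((R - r)/D) ≤ 0 := by
      apply Real.log_nonpos
      · apply div_nonneg <;> linarith [hr.2]
      · rw [div_le_one hD0]; linarith [hr.1]
    linarith
  have hX1 := hX r1 ⟨h1, le_rfl⟩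
  have hlam0 : 0 < lam := by rw [hlam]; positivity
  have hlam1 : lam ≤ 1/48 := by
    rw [hlam]; have := inv_le_one_of_one_le₀ hX1; linarith
  have i1 := hm_seg n hn p hp R f hf 0 r1 le_rfl h1 (by linarith)
    (fun r => (1 - Real.log ((R - r) / D))⁻¹)
    (fun r => -((1 - Real.log ((R - r) / D))⁻¹^2 / (R - r)))
    (by
      intro r hr
      have hd : 0 < R - r := by linarith [hr.2]
      have hx := hX r hr
      have e1 : HasDerivAt (fun r => (R - r)/D) (-1/D) r :=
        ((hasDerivAt_id' r).const_sub R).div_const D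
      have e2 := ((e1.log (by positivity)).const_sub 1).inv (by positivity)
      refine e2.congr_deriv ?_
      field_simp)
    (by
      intro r hr
      have hx := hX r hr
      exact ⟨by positivity, inv_le_one_of_one_le₀ hx⟩)
    1 ((p-1)/p) zero_le_one
    (by
      intro r hr
      have hd : 0 < R - r := by linarith [hr.2]
      set x := (1 - Real.log ((R - r) / D))⁻¹
      have : (R - r) * -(x^2/(R-r)) = -x^2 := by field_simp
      rw [this]
      nlinarith [sq_nonneg x])
    Ψ (hΨ.mono_set (Icc_subset_Icc_right (by linarith))) (fun r hr => hΨ1 r (Or.inl hr))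
  have hd2 : 0 < R - r2 := by linarith
  have hφ2 : ∀ r ∈ Icc r1 r2, 0 ≤ lam * ((R - r)/(R - r2) - 1) ∧
      lam * ((R - r)/(R - r2) - 1) ≤ 2 * lam := by
    intro r hr
    have a1 : 1 ≤ (R - r)/(R - r2) := by rw [one_le_div hd2]; linarith [hr.2]
    have a2 : (R - r)/(R - r2) ≤ 3 := by rw [div_le_iff₀ hd2]; linarith [hr.1]
    constructor <;> nlinarith
  have i2 := hm_seg n hn p hp R f hf r1 r2 h1 h12 (by linarith)
    (fun r => lam * ((R - r)/(R - r2) - 1))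
    (fun r => -(lam / (R - r2)))
    (by
      intro r hr
      have e1 : HasDerivAt (fun r => (R - r)/(R - r2)) (-1/(R - r2)) r :=
        ((hasDerivAt_id' r).const_sub R).div_const _
      have e2 := (e1.sub_const 1).const_mul lam
      refine e2.congr_deriv ?_
      field_simp)
    (by
      intro r hr
      have := hφ2 r hr
      exact ⟨this.1, by linarith [this.2]⟩)
    (1 - lam/4) ((p-1)/p + lam/4) (by linarith)
    (by
      intro r hr
      have h := hφ2 r (Ioo_subset_Icc_self hr)
      set x := lam * ((R - r)/(R - r2) - 1)
      have hy : lam ≤ -((R - r) * -(lam/(R - r2))) := by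
        have : -((R - r) * -(lam/(R - r2))) = lam * ((R - r)/(R-r2)) := by ring
        rw [this]
        have a1 : 1 ≤ (R - r)/(R - r2) := by rw [one_le_div hd2]; linarith [hr.2]
        nlinarith
      set y := (R - r) * -(lam/(R - r2))
      set H := (p-1)/p
      have hx2 : H * x^2 ≤ lam/4 := by
        have : x^2 ≤ lam/4 := by nlinarith
        nlinarith [sq_nonneg x]
      calc H + lam/4 ≤ (1 - lam/4) * (H + 3*lam/4) := by nlinarith
        _ ≤ _ := by
          apply mul_le_mul_of_nonneg_left _ (by linarith)
          linarith)
    Ψ (hΨ.mono_set (Icc_subset_Icc h1 (by linarith))) hΨ2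
  have i3 := hm_seg n hn p hp R f hf r2 b (h1.trans h12) h2b hb
    (fun r => 0) (fun r => 0) (fun r _ => hasDerivAt_const r 0) (by simp)
    1 ((p-1)/p) zero_le_one (by simp)
    Ψ (hΨ.mono_set (Icc_subset_Icc_left (by linarith))) (fun r hr => hΨ1 r (Or.inr hr))
  have hint : ∀ x y, 0 ≤ x → x ≤ y → y ≤ b → IntervalIntegrable Ψ volume x y := by
    intro x y hx hxy hy
    rw [intervalIntegrable_iff_integrableOn_Icc_of_le hxy]
    exact hΨ.mono_set (Icc_subset_Icc hx hy)
  rw [← intervalIntegral.integral_add_adjacent_intervals (hint 0 r1 le_rfl h1 (by linarith))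
    (hint r1 b h1 (by linarith) le_rfl),
    ← intervalIntegral.integral_add_adjacent_intervals (hint r1 r2 h1 h12 (by linarith))
    (hint r2 b (by linarith) (by linarith) le_rfl)]
  rw [zero_pow (by omega)] at i1
  rw [hfb, abs_zero, Real.zero_rpow (by linarith)] at i3
  have j := hφ2 r1 ⟨le_rfl, h12⟩
  have j2 := hφ2 r2 ⟨h12, le_rfl⟩
  have hd1 : 0 < R - r1 := by linarith
  have hr2 : 0 ≤ r2 := by linarith
  have hG1 : 0 ≤ ((p-1)/p)^(p-1) * (R - r1)^(1-p) * |f r1|^p * r1^(n-1) := by positivity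
  have hG2 : 0 ≤ ((p-1)/p)^(p-1) * (R - r2)^(1-p) * |f r2|^p * r2^(n-1) := by positivity
  set G1 := ((p-1)/p)^(p-1) * (R - r1)^(1-p) * |f r1|^p * r1^(n-1)
  set G2 := ((p-1)/p)^(p-1) * (R - r2)^(1-p) * |f r2|^p * r2^(n-1)
  have hX48 : (1 - Real.log ((R - r1) / D))⁻¹ = 48 * lam := by linarith
  simp only [hX48] at i1
  simp only [mul_zero, zero_mul, sub_zero, zero_sub, one_mul, mul_one] at i1 i2 i3
  set x1 := lam * ((R - r1)/(R - r2) - 1)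
  set x2 := lam * ((R - r2)/(R - r2) - 1)
  have k1 : G1 * (1 - 48 * lam) ≤ G1 * ((1 - lam/4) * (1 - x1)) := by
    apply mul_le_mul_of_nonneg_left _ hG1
    nlinarith
  have k2 : G2 * ((1 - lam/4) * (1 - x2)) ≤ G2 * 1 := by
    apply mul_le_mul_of_nonneg_left _ hG2
    nlinarith
  linarith

lemma hm_polar (n : ℕ) (hn : 2 ≤ n) (Φ : EuclideanSpace ℝ (Fin n) → ℝ)
    (h : ∀ ω : EuclideanSpace ℝ (Fin n), ‖ω‖ = 1 →
      0 ≤ ∫ r in Ioi (0:ℝ), r^(n-1) * Φ (r • ω)) : 0 ≤ ∫ y, Φ y := by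
  have hfr : Module.finrank ℝ (EuclideanSpace ℝ (Fin n)) = n := by simp
  have : Nontrivial (EuclideanSpace ℝ (Fin n)) := by
    apply Module.nontrivial_of_finrank_pos (R := ℝ); omega
  set μ : Measure (EuclideanSpace ℝ (Fin n)) := volume
  have e : ∫ y, Φ y ∂μ = ∫ z : sphere (0 : EuclideanSpace ℝ (Fin n)) 1 × Ioi (0:ℝ),
      Φ ((z.2 : ℝ) • (z.1 : EuclideanSpace ℝ (Fin n)))
        ∂μ.toSphere.prod (.volumeIoiPow (n - 1)) := by
    calc ∫ y, Φ y ∂μ = ∫ x : ({(0)}ᶜ : Set (EuclideanSpace ℝ (Fin n))), Φ x.1 ∂(μ.comap (↑)) := by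
          rw [integral_subtype_comap (measurableSet_singleton _).compl fun x ↦ Φ x,
            restrict_compl_singleton]
      _ = _ := by
          have := μ.measurePreserving_homeomorphUnitSphereProd.integral_comp
            (Homeomorph.measurableEmbedding _)
            (fun z => Φ ((z.2 : ℝ) • (z.1 : EuclideanSpace ℝ (Fin n))))
          rw [hfr] at this
          rw [← this]
          congr 1
          ext x
          congr 1
          have hx : ‖(x : EuclideanSpace ℝ (Fin n))‖ ≠ 0 := norm_ne_zero_iff.2 x.2
          simp [smul_smul, mul_inv_cancel₀ hx]
  rw [e]
  by_cases hi : Integrable (fun z : sphere (0 : EuclideanSpace ℝ (Fin n)) 1 × Ioi (0:ℝ) =>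
      Φ ((z.2 : ℝ) • (z.1 : EuclideanSpace ℝ (Fin n)))) (μ.toSphere.prod (.volumeIoiPow (n - 1)))
  · rw [integral_prod _ hi]
    apply integral_nonneg
    intro ω
    have hω : ‖(ω : EuclideanSpace ℝ (Fin n))‖ = 1 := by simp
    have := h ω hω
    simp only [Pi.zero_apply]
    refine this.trans_eq (Eq.symm ?_)
    simp only [Measure.volumeIoiPow, ENNReal.ofReal]
    rw [integral_withDensity_eq_integral_smul,
        integral_subtype_comap measurableSet_Ioi
          fun a ↦ Real.toNNReal (a ^ (n - 1)) • Φ (a • (ω : EuclideanSpace ℝ (Fin n))),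
        setIntegral_congr_fun measurableSet_Ioi fun x hx ↦ ?_]
    · rw [NNReal.smul_def, Real.coe_toNNReal _ (pow_nonneg hx.out.le _)]; rfl
    · exact (measurable_subtype_coe.pow_const _).real_toNNReal
  · rw [integral_undef hi]

lemma hm_space (n : ℕ) (hn : 2 ≤ n) (p : ℝ) (hp : 2 < p) (R D : ℝ) (hD : R ≤ D)
    (u : EuclideanSpace ℝ (Fin n) → ℝ) (hu : ContDiff ℝ 1 u) (hcs : HasCompactSupport u)
    (hsupp : tsupport u ⊆ ball (0 : EuclideanSpace ℝ (Fin n)) R)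
    (r1 r2 lam : ℝ) (h1 : 0 ≤ r1) (h12 : r1 ≤ r2) (h2 : r2 < R)
    (hd : R - r1 ≤ 3 * (R - r2))
    (hlam : lam = (1 - Real.log ((R - r1) / D))⁻¹ / 48) (hlam0 : 0 ≤ lam) (hlam1 : lam ≤ 1)
    (A : Set (EuclideanSpace ℝ (Fin n))) (hA : A = {y | r1 ≤ ‖y‖ ∧ ‖y‖ < r2}) :
    Integrable (fun y => ‖fderiv ℝ u y‖^p) ∧ Integrable (fun y => |u y|^p / (R - ‖y‖)^p) ∧
    lam/4 * ((∫ y in A, ‖fderiv ℝ u y‖^p) + ((p-1)/p)^(p-1) * ∫ y in A, |u y|^p / (R - ‖y‖)^p)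
    ≤ (∫ y in ball (0 : EuclideanSpace ℝ (Fin n)) R, ‖fderiv ℝ u y‖^p)
        - ((p-1)/p)^p * ∫ y in ball (0 : EuclideanSpace ℝ (Fin n)) R, |u y|^p / (R - ‖y‖)^p := by
  obtain ⟨R', hR', hsub⟩ := exists_lt_subset_ball (isClosed_tsupport u) hsupp
  have hHpos : 0 < (p-1)/p := by apply div_pos <;> linarith
  have hHp : ((p-1)/p)^p = ((p-1)/p)^(p-1) * ((p-1)/p) := by
    rw [mul_comm, ← Real.rpow_one_add' hHpos.le (by linarith)]; ring_nf
  set H := (p-1)/p with hH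
  set b := max R' r2 with hb
  have hbR : b < R := max_lt hR' h2
  have hz : ∀ y, b ≤ ‖y‖ → u y = 0 := by
    intro y hy
    apply image_eq_zero_of_notMem_tsupport
    intro h
    have := hsub h
    rw [mem_ball_zero_iff] at this
    linarith [le_max_left R' r2]
  have hz' : ∀ y, b ≤ ‖y‖ → fderiv ℝ u y = 0 := by
    intro y hy
    by_contra h
    have := hsub (support_fderiv_subset ℝ (f := u) h)
    rw [mem_ball_zero_iff] at this
    linarith [le_max_left R' r2]
  have hp0 : 0 < p := by linarith
  set G1 : EuclideanSpace ℝ (Fin n) → ℝ := fun y => ‖fderiv ℝ u y‖^p with hG1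
  set G2 : EuclideanSpace ℝ (Fin n) → ℝ := fun y => |u y|^p / (R - ‖y‖)^p with hG2
  have hG1c : Continuous G1 :=
    ((hu.continuous_fderiv one_ne_zero).norm).rpow_const (fun _ => Or.inr hp0.le)
  have hG2e : G2 = fun y => |u y|^p / (max (R - ‖y‖) (R - b))^p := by
    ext y
    rcases le_or_gt b ‖y‖ with h | h
    · simp [hG2, hz y h, Real.zero_rpow hp0.ne']
    · simp only [hG2]; rw [max_eq_left (by linarith)]
  have hG2c : Continuous G2 := by
    rw [hG2e]
    apply Continuous.div
    · exact hu.continuous.abs.rpow_const (fun _ => Or.inr hp0.le)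
    · exact Continuous.rpow_const (by fun_prop) (fun _ => Or.inr hp0.le)
    · intro y
      have : 0 < max (R - ‖y‖) (R - b) := lt_max_of_lt_right (by linarith)
      positivity
  have hG1z : ∀ y, b ≤ ‖y‖ → G1 y = 0 := by
    intro y hy; simp [hG1, hz' y hy, Real.zero_rpow hp0.ne']
  have hG2z : ∀ y, b ≤ ‖y‖ → G2 y = 0 := by
    intro y hy; simp [hG2, hz y hy, Real.zero_rpow hp0.ne']
  have hsup : ∀ G : EuclideanSpace ℝ (Fin n) → ℝ, (∀ y, b ≤ ‖y‖ → G y = 0) →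
      HasCompactSupport G := by
    intro G hG
    apply HasCompactSupport.intro (isCompact_closedBall 0 b)
    intro y hy
    apply hG
    rw [mem_closedBall_zero_iff] at hy
    linarith
  have hG1i : Integrable G1 := hG1c.integrable_of_hasCompactSupport (hsup _ hG1z)
  have hG2i : Integrable G2 := hG2c.integrable_of_hasCompactSupport (hsup _ hG2z)
  refine ⟨hG1i, hG2i, ?_⟩
  have hAm : MeasurableSet A := by
    rw [hA]
    exact (measurableSet_le measurable_const measurable_norm).inter
      (measurableSet_lt measurable_norm measurable_const)
  have hball : ∀ G : EuclideanSpace ℝ (Fin n) → ℝ, (∀ y, b ≤ ‖y‖ → G y = 0) →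
      ∫ y in ball 0 R, G y = ∫ y, G y := by
    intro G hG
    apply setIntegral_eq_integral_of_forall_compl_eq_zero
    intro y hy
    apply hG
    rw [mem_ball_zero_iff] at hy
    linarith
  rw [hball G1 hG1z, hball G2 hG2z]
  set K : EuclideanSpace ℝ (Fin n) → ℝ := fun y => lam/4 * (G1 y + H^(p-1) * G2 y) with hK
  have hKi : Integrable K := (hG1i.add (hG2i.const_mul _)).const_mul _
  let Φ : EuclideanSpace ℝ (Fin n) → ℝ := fun y => G1 y - H^p * G2 y - A.indicator K y
  have hΦ : ∫ y, Φ y = (∫ y, G1 y) - H^p * (∫ y, G2 y) -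
      lam/4 * ((∫ y in A, G1 y) + H^(p-1) * ∫ y in A, G2 y) := by
    simp only [Φ]
    have i12 : Integrable (fun y => G1 y - H^p * G2 y) := hG1i.sub (hG2i.const_mul _)
    rw [integral_sub i12 (hKi.indicator hAm),
      integral_sub hG1i (hG2i.const_mul _), integral_const_mul, integral_indicator hAm, hK,
      integral_const_mul, integral_add hG1i.integrableOn (hG2i.const_mul _).integrableOn,
      integral_const_mul]
  suffices 0 ≤ ∫ y, Φ y by rw [hΦ] at this; linarith
  apply hm_polar n hn
  intro ω hω
  have hb0 : 0 ≤ b := h1.trans (h12.trans (le_max_right _ _))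
  have hnorm : ∀ r : ℝ, 0 ≤ r → ‖r • ω‖ = r := by
    intro r hr; rw [norm_smul, hω, mul_one, Real.norm_of_nonneg hr]
  have hi : ∫ r in Ioi (0:ℝ), r^(n-1) * Φ (r • ω) = ∫ r in 0..b, r^(n-1) * Φ (r • ω) := by
    rw [intervalIntegral.integral_of_le hb0]
    apply setIntegral_eq_of_subset_of_forall_sdiff_eq_zero measurableSet_Ioi
    · exact Ioc_subset_Ioi_self
    · rintro r ⟨hr, hr2⟩
      have hr' : b ≤ r := by
        by_contra h; exact hr2 ⟨hr, by linarith⟩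
      have := hnorm r (le_of_lt hr)
      have k1 := hG1z (r • ω) (by rw [this]; exact hr')
      have k2 := hG2z (r • ω) (by rw [this]; exact hr')
      simp [Φ, k1, k2, hK, Set.indicator]
  rw [hi]
  have hlin : Continuous fun r : ℝ => r • ω := by fun_prop
  have hder : ∀ r, |deriv (fun r : ℝ => u (r • ω)) r|^p ≤ G1 (r • ω) := by
    intro r
    have e : HasDerivAt (fun r : ℝ => u (r • ω)) (fderiv ℝ u (r • ω) ω) r := by
      have e1 : HasDerivAt (fun r : ℝ => r • ω) ω r := by
        simpa using (hasDerivAt_id' r).smul_const ω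
      exact ((hu.differentiable one_ne_zero (r • ω)).hasFDerivAt).comp_hasDerivAt r e1
    rw [e.deriv]
    apply Real.rpow_le_rpow (abs_nonneg _) _ hp0.le
    have := (fderiv ℝ u (r • ω)).le_opNorm ω
    rwa [hω, mul_one] at this
  have hder0 : ∀ r, 0 ≤ |deriv (fun r : ℝ => u (r • ω)) r|^p := fun r => by positivity
  apply hm_ray n hn p hp R D hD (fun r => u (r • ω)) (hu.comp (by fun_prop)) r1 r2 b lam h1 h12
    (le_max_right _ _) hbR (hz _ (by rw [hnorm b hb0])) hd hlam
  · have hS : MeasurableSet ((fun r : ℝ => r • ω) ⁻¹' A) := hlin.measurable hAm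
    have e : (fun r : ℝ => r^(n-1) * Φ (r • ω)) = fun r : ℝ =>
        r^(n-1) * (G1 (r • ω) - H^p * G2 (r • ω)) -
        ((fun r : ℝ => r • ω) ⁻¹' A).indicator (fun r => r^(n-1) * K (r • ω)) r := by
      ext r
      by_cases h : r • ω ∈ A
      · simp [Φ, h, Set.indicator]; ring
      · simp [Φ, h, Set.indicator]
    rw [e]
    have c1 := hG1c.comp hlin
    have c2 := hG2c.comp hlin
    simp only [Function.comp_def] at c1 c2
    apply Integrable.sub
    · exact Continuous.integrableOn_Icc (by fun_prop)
    · apply Integrable.indicator _ hS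
      exact Continuous.integrableOn_Icc (by simp only [hK]; fun_prop)
  · intro r hr
    have hr0 : 0 ≤ r := by
      rcases hr with h | h
      · exact h.1.le
      · linarith [h.1]
    apply mul_le_mul_of_nonneg_left _ (by positivity)
    have hnA : r • ω ∉ A := by
      rw [hA]
      simp only [mem_ofPred_eq, hnorm r hr0, not_and, not_lt]
      intro h
      rcases hr with h' | h'
      · linarith [h'.2]
      · exact h'.1.le
    have e2 : G2 (r • ω) = |u (r • ω)|^p / (R - r)^p := by simp only [hG2, hnorm r hr0]
    simp only [Φ, indicator_of_notMem hnA]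
    rw [e2, hHp]
    linarith [hder r]
  · intro r hr
    have hr0 : 0 ≤ r := by linarith [hr.1]
    apply mul_le_mul_of_nonneg_left _ (by positivity)
    have hmA : r • ω ∈ A := by
      rw [hA]
      simp only [mem_ofPred_eq, hnorm r hr0]
      exact ⟨hr.1.le, hr.2⟩
    have e2 : G2 (r • ω) = |u (r • ω)|^p / (R - r)^p := by simp only [hG2, hnorm r hr0]
    simp only [Φ, indicator_of_mem hmA, hK]
    rw [e2, hHp]
    nlinarith [hder r, hder0 r]

lemma hm_holder {n : ℕ} (p : ℝ) (hp : 1 < p) (S : Set (EuclideanSpace ℝ (Fin n)))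
    (hS : volume S ≠ ⊤)
    (g : EuclideanSpace ℝ (Fin n) → ℝ) (hg : Continuous g) (hcs : ∃ C, ∀ x, g x ≤ C)
    (hg0 : ∀ x, 0 ≤ g x) :
    ∫ z in S, g z ≤ (volume.real S)^(1 - 1/p) * (∫ z in S, g z ^ p)^(1/p) := by
  have : IsFiniteMeasure (volume.restrict S) := ⟨by simpa using hS.lt_top⟩
  obtain ⟨C, hC⟩ := hcs
  have hpq : p.HolderConjugate (p/(p-1)) := (Real.holderConjugate_iff_eq_conjExponent hp).2 rfl
  have := integral_mul_le_Lp_mul_Lq_of_nonneg (μ := volume.restrict S) hpq (f := g)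
    (g := fun _ => 1) (ae_of_all _ hg0) (ae_of_all _ (fun _ => zero_le_one))
    (MemLp.of_bound hg.aestronglyMeasurable C (ae_of_all _ (fun x => by
      rw [Real.norm_of_nonneg (hg0 x)]; exact hC x)))
    (memLp_const _)
  simp only [mul_one, Real.one_rpow, integral_const, smul_eq_mul] at this
  rw [show 1/(p/(p-1)) = 1 - 1/p by field_simp] at this
  rw [mul_comm]
  simpa using this

lemma hm_morrey_s8 (n : ℕ) (hn : 1 ≤ n) (p : ℝ) (hp : (n:ℝ) < p)
    (u : EuclideanSpace ℝ (Fin n) → ℝ) (hu : ContDiff ℝ 1 u) (hcs : HasCompactSupport u)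
    (x : EuclideanSpace ℝ (Fin n)) (ρ : ℝ) (hρ : 0 < ρ) :
    volume.real (ball (0 : EuclideanSpace ℝ (Fin n)) ρ) * u x ≤
      (volume.real (ball (0 : EuclideanSpace ℝ (Fin n)) ρ))^(1 - 1/p) *
      ((∫ y in ball x ρ, |u y|^p)^(1/p) +
        ρ / (1 - n/p) * (∫ y in ball x ρ, ‖fderiv ℝ u y‖^p)^(1/p)) := by
  have hn1 : (1:ℝ) ≤ n := by exact_mod_cast hn
  have hp0 : 0 < p := by linarith
  have hα : 0 < 1 - n/p := by rw [sub_pos, div_lt_one hp0]; exact hp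
  set B := ball (0 : EuclideanSpace ℝ (Fin n)) ρ with hB
  have hBfin : volume B ≠ ⊤ := measure_ball_lt_top.ne
  have hfin : IsFiniteMeasure (volume.restrict B) := ⟨by simpa using hBfin.lt_top⟩
  set V := volume.real B
  have hdc : Continuous (fderiv ℝ u) := hu.continuous_fderiv one_ne_zero
  obtain ⟨C0, hC0⟩ := hcs.exists_bound_of_continuous hu.continuous
  obtain ⟨C1, hC1⟩ := (hcs.fderiv (𝕜 := ℝ)).exists_bound_of_continuous hdc
  have hC1' : 0 ≤ C1 := (norm_nonneg _).trans (hC1 0)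
  set N := (∫ y in ball x ρ, ‖fderiv ℝ u y‖^p)^(1/p) with hN
  have hN0 : 0 ≤ N := by
    apply Real.rpow_nonneg; apply integral_nonneg; intro y; simp only [Pi.zero_apply]; positivity
  let g : ℝ → ℝ := fun t => ∫ z in B, u (x + t • z)
  let g' : ℝ → ℝ := fun t => ∫ z in B, fderiv ℝ u (x + t • z) z
  have hg : ∀ t, HasDerivAt g (g' t) t := by
    intro t
    refine (hasDerivAt_integral_of_dominated_loc_of_deriv_le (μ := volume.restrict B)
      (F := fun t z => u (x + t • z)) (F' := fun t z => fderiv ℝ u (x + t • z) z)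
      (bound := fun _ => C1 * ρ) (s := univ) Filter.univ_mem ?_ ?_ ?_ ?_ ?_ ?_).2
    · refine Filter.Eventually.of_forall fun s => Continuous.aestronglyMeasurable ?_
      exact hu.continuous.comp (by fun_prop)
    · refine Integrable.of_bound (Continuous.aestronglyMeasurable ?_) C0
        (ae_of_all _ fun z => hC0 _)
      exact hu.continuous.comp (by fun_prop)
    · refine Continuous.aestronglyMeasurable ?_
      exact (hdc.comp (by fun_prop)).clm_apply continuous_id
    · refine (ae_restrict_iff' measurableSet_ball).2 (ae_of_all _ fun z hz s _ => ?_)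
      rw [mem_ball_zero_iff] at hz
      refine ((fderiv ℝ u (x + s • z)).le_opNorm z).trans ?_
      exact mul_le_mul (hC1 _) hz.le (norm_nonneg _) hC1'
    · exact integrable_const _
    · refine ae_of_all _ fun z s _ => ?_
      have e1 : HasDerivAt (fun r : ℝ => x + r • z) z s := by
        simpa using ((hasDerivAt_id' s).smul_const z).const_add x
      exact ((hu.differentiable one_ne_zero _).hasFDerivAt).comp_hasDerivAt s e1
  set K := ρ * V^(1 - 1/p) * N with hK
  have hbound : ∀ t ∈ Ioo (0:ℝ) 1, |g' t| ≤ K * t^(-(n/p)) := by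
    intro t ht
    have ht0 := ht.1
    have s1 : |g' t| ≤ ∫ z in B, ρ * ‖fderiv ℝ u (x + t • z)‖ := by
      refine (norm_integral_le_integral_norm (μ := volume.restrict B)
        (fun z => fderiv ℝ u (x + t • z) z)).trans ?_
      have i2 : Integrable (fun z => ρ * ‖fderiv ℝ u (x + t • z)‖) (volume.restrict B) := by
        refine Integrable.const_mul (Integrable.of_bound (Continuous.aestronglyMeasurable ?_) C1
          (ae_of_all _ fun z => by simpa using hC1 _)) _
        exact (hdc.comp (by fun_prop)).norm
      refine integral_mono_of_nonneg (ae_of_all _ fun z => norm_nonneg _) i2 ?_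
      refine (ae_restrict_iff' measurableSet_ball).2 (ae_of_all _ fun z hz => ?_)
      rw [mem_ball_zero_iff] at hz
      refine ((fderiv ℝ u (x + t • z)).le_opNorm z).trans ?_
      rw [mul_comm]
      exact mul_le_mul_of_nonneg_right hz.le (norm_nonneg _)
    rw [integral_const_mul] at s1
    have s2 := hm_holder p (by linarith) B hBfin (fun z => ‖fderiv ℝ u (x + t • z)‖)
      ((hdc.comp (by fun_prop)).norm) ⟨C1, fun z => hC1 _⟩ (fun z => norm_nonneg _)
    have s3 : ∫ z in B, ‖fderiv ℝ u (x + t • z)‖^p ≤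
        (t^n)⁻¹ * ∫ y in ball x ρ, ‖fderiv ℝ u y‖^p := by
      have := Measure.setIntegral_comp_smul_of_pos (volume : Measure (EuclideanSpace ℝ (Fin n)))
        (fun y => ‖fderiv ℝ u (x + y)‖^p) B ht0
      rw [this]
      simp only [finrank_euclideanSpace, Fintype.card_fin, smul_eq_mul]
      apply mul_le_mul_of_nonneg_left _ (by positivity)
      have e : ∫ y in ball x ρ, ‖fderiv ℝ u y‖^p = ∫ y in B, ‖fderiv ℝ u (x + y)‖^p := by
        have h := (measurePreserving_add_left (volume : Measure (EuclideanSpace ℝ (Fin n)))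
          x).setIntegral_preimage_emb (measurableEmbedding_addLeft x)
          (fun y => ‖fderiv ℝ u y‖^p) (ball x ρ)
        rw [← h]
        congr 2
        ext y; simp [B]
      rw [e]
      apply setIntegral_mono_set
      · refine Integrable.of_bound (Continuous.aestronglyMeasurable ?_) (C1^p)
          (ae_of_all _ fun z => ?_)
        · exact (hdc.comp (by fun_prop)).norm.rpow_const (fun _ => Or.inr hp0.le)
        · rw [Real.norm_of_nonneg (by positivity)]
          exact Real.rpow_le_rpow (norm_nonneg _) (hC1 _) hp0.le
      · exact ae_of_all _ fun z => by simp only [Pi.zero_apply]; positivity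
      · apply LE.le.eventuallyLE
        rw [hB, _root_.smul_ball ht0.ne']
        simp only [smul_zero, Real.norm_of_nonneg ht0.le]
        exact ball_subset_ball (by nlinarith [ht.2])
    have s4 : (∫ z in B, ‖fderiv ℝ u (x + t • z)‖^p)^(1/p) ≤ t^(-(n/p)) * N := by
      have h0 : 0 ≤ ∫ z in B, ‖fderiv ℝ u (x + t • z)‖^p :=
        integral_nonneg fun z => by simp only [Pi.zero_apply]; positivity
      have h1 : 0 ≤ ∫ y in ball x ρ, ‖fderiv ℝ u y‖^p :=
        integral_nonneg fun z => by simp only [Pi.zero_apply]; positivity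
      refine (Real.rpow_le_rpow h0 s3 (by positivity)).trans (le_of_eq ?_)
      rw [Real.mul_rpow (by positivity) h1, ← hN, ← Real.rpow_natCast, ← Real.rpow_neg ht0.le,
        ← Real.rpow_mul ht0.le]
      congr 2; ring
    calc |g' t| ≤ ρ * (V^(1 - 1/p) * (t^(-(n/p)) * N)) := by
          refine s1.trans (mul_le_mul_of_nonneg_left (s2.trans ?_) hρ.le)
          exact mul_le_mul_of_nonneg_left s4 (by positivity)
      _ = _ := by rw [hK]; ring
  have hmono : MonotoneOn (fun t : ℝ => g t + K/(1 - n/p) * t^(1 - n/p)) (Icc 0 1) := by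
    have hd : ∀ t ∈ Ioo (0:ℝ) 1, HasDerivAt (fun t : ℝ => g t + K/(1 - n/p) * t^(1 - n/p))
        (g' t + K * t^(-(n/p))) t := by
      intro t ht
      have := (hg t).add ((Real.hasDerivAt_rpow_const (x := t) (p := 1 - n/p)
        (Or.inl ht.1.ne')).const_mul (K/(1 - n/p)))
      refine this.congr_deriv ?_
      rw [show 1 - (n:ℝ)/p - 1 = -(n/p) by ring, ← mul_assoc, div_mul_cancel₀ _ hα.ne']
    apply monotoneOn_of_deriv_nonneg (convex_Icc 0 1)
    · apply ContinuousOn.add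
      · exact fun t _ => (hg t).continuousAt.continuousWithinAt
      · exact ((Real.continuous_rpow_const hα.le).const_mul _).continuousOn
    · rw [interior_Icc]
      exact fun t ht => (hd t ht).differentiableAt.differentiableWithinAt
    · rw [interior_Icc]
      intro t ht
      rw [(hd t ht).deriv]
      have := neg_le_of_abs_le (hbound t ht)
      linarith
  have hfinal := hmono (left_mem_Icc.2 zero_le_one) (right_mem_Icc.2 zero_le_one) zero_le_one
  simp only [Real.zero_rpow hα.ne', mul_zero, add_zero, Real.one_rpow, mul_one] at hfinal
  have hg0 : g 0 = V * u x := by simp [g, V, measureReal_def]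
  have hg1 : g 1 ≤ V^(1 - 1/p) * (∫ y in ball x ρ, |u y|^p)^(1/p) := by
    have h := (measurePreserving_add_left (volume : Measure (EuclideanSpace ℝ (Fin n)))
          x).setIntegral_preimage_emb (measurableEmbedding_addLeft x)
          (fun y => |u y|^p) (ball x ρ)
    have e : (fun y => x + y) ⁻¹' (ball x ρ) = B := by ext y; simp [B]
    rw [e] at h
    rw [← h]
    have s2 := hm_holder p (by linarith) B hBfin (fun z => |u (x + z)|)
      ((hu.continuous.comp (by fun_prop)).abs) ⟨C0, fun z => hC0 _⟩ (fun z => abs_nonneg _)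
    refine le_trans ?_ s2
    simp only [g, one_smul]
    exact (le_abs_self _).trans (norm_integral_le_integral_norm (μ := volume.restrict B)
      (fun z => u (x + z)))
  rw [hg0] at hfinal
  refine hfinal.trans ((add_le_add_left hg1 _).trans (le_of_eq ?_))
  rw [hK]; ring

set_option maxHeartbeats 1000000 in
theorem hardy_morrey_pointwise_ball_boundary (n : ℕ) (hn : 2 ≤ n) (p : ℝ)
    (hp : (n : ℝ) < p) :
    ∃ Θ C : ℝ, 0 ≤ Θ ∧ 0 < C ∧
      ∀ R : ℝ, 0 < R →
      ∀ u : EuclideanSpace ℝ (Fin n) → ℝ, ContDiff ℝ (⊤ : ℕ∞) u → HasCompactSupport u →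
        tsupport u ⊆ Metric.ball (0 : EuclideanSpace ℝ (Fin n)) R →
        ∀ D : ℝ, Real.exp Θ * R ≤ D →
        ∀ x ∈ Metric.ball (0 : EuclideanSpace ℝ (Fin n)) R,
          |u x| * (R - ‖x‖) ^ ((n : ℝ) / p - 1) *
              ((1 - Real.log ((R - ‖x‖) / D))⁻¹) ^ (1 / p) ≤
            C * ((∫ y in Metric.ball (0 : EuclideanSpace ℝ (Fin n)) R, ‖fderiv ℝ u y‖ ^ p)
              - ((p - 1) / p) ^ p *
                  ∫ y in Metric.ball (0 : EuclideanSpace ℝ (Fin n)) R,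
                    |u y| ^ p / (R - ‖y‖) ^ p) ^ (1 / p) := by
  have hn2 : (2:ℝ) ≤ n := by exact_mod_cast hn
  have hp2 : 2 < p := by linarith
  have hp0 : 0 < p := by linarith
  have hα : 0 < 1 - n/p := by rw [sub_pos, div_lt_one hp0]; exact hp
  have hHpos : 0 < (p-1)/p := by apply div_pos <;> linarith
  have hH1 : (p-1)/p ≤ 1 := by rw [div_le_one] <;> linarith
  set v1 := volume.real (ball (0 : EuclideanSpace ℝ (Fin n)) 1) with hv1
  have hv1pos : 0 < v1 :=
    ENNReal.toReal_pos (measure_ball_pos _ _ one_pos).ne' measure_ball_lt_top.ne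
  set c := ((p-1)/p)^(p-1) / 192 with hc
  have hc0 : 0 < c := by positivity
  set M := 3 + 1/(1 - n/p) with hM
  have hM0 : 0 < M := by positivity
  refine ⟨0, v1^(-(1/p)) * M * (c⁻¹)^(1/p), le_rfl, by positivity, ?_⟩
  intro R hR u hu hcs hsupp D hD x hx
  rw [Real.exp_zero, one_mul] at hD
  rw [mem_ball_zero_iff] at hx
  have hD0 : 0 < D := by linarith
  have hu1 : ContDiff ℝ 1 u := hu.of_le (by exact_mod_cast le_top)
  set δ := R - ‖x‖ with hδ
  have hδ0 : 0 < δ := by linarith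
  set ρ := δ/2 with hρ
  have hρ0 : 0 < ρ := by positivity
  set r1 := max (‖x‖ - ρ) 0 with hr1
  set r2 := ‖x‖ + ρ with hr2
  have hnx := norm_nonneg x
  have hr10 : 0 ≤ r1 := le_max_right _ _
  have hr1a : ‖x‖ - ρ ≤ r1 := le_max_left _ _
  have hr1x : r1 ≤ ‖x‖ := max_le (by linarith) hnx
  set X1 := (1 - Real.log ((R - r1) / D))⁻¹ with hX1
  set X := (1 - Real.log (δ / D))⁻¹ with hX
  have hl1 : Real.log ((R - r1)/D) ≤ 0 := by
    apply Real.log_nonpos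
    · apply div_nonneg <;> linarith
    · rw [div_le_one hD0]; linarith
  have hll : Real.log (δ/D) ≤ Real.log ((R - r1)/D) := by
    apply Real.log_le_log (by positivity)
    apply div_le_div_of_nonneg_right _ hD0.le
    linarith
  have hXX : X ≤ X1 := by
    rw [hX, hX1]; apply inv_anti₀ <;> linarith
  have hX0 : 0 < X := by rw [hX]; apply inv_pos.2; linarith
  have hX11 : X1 ≤ 1 := by rw [hX1]; apply inv_le_one_of_one_le₀; linarith
  set A : Set (EuclideanSpace ℝ (Fin n)) := {y | r1 ≤ ‖y‖ ∧ ‖y‖ < r2} with hA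
  obtain ⟨i1, i2, hI⟩ := hm_space n hn p hp2 R D hD u hu1 hcs hsupp r1 r2 (X1/48) hr10
    (by linarith) (by linarith) (by linarith) rfl (by linarith) (by linarith) A hA
  set I := (∫ y in ball (0 : EuclideanSpace ℝ (Fin n)) R, ‖fderiv ℝ u y‖ ^ p)
              - ((p - 1) / p) ^ p *
                  ∫ y in ball (0 : EuclideanSpace ℝ (Fin n)) R,
                    |u y| ^ p / (R - ‖y‖) ^ p with hIdef
  have hnb : ∀ y ∈ ball x ρ, r1 ≤ ‖y‖ ∧ ‖y‖ < r2 := by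
    intro y hy
    rw [mem_ball, dist_eq_norm] at hy
    have a1 := norm_sub_norm_le y x
    have a2 := norm_sub_norm_le x y
    rw [norm_sub_rev] at a2
    exact ⟨max_le (by linarith) (norm_nonneg _), by linarith⟩
  have hAm : MeasurableSet A :=
    (measurableSet_le measurable_const measurable_norm).inter
      (measurableSet_lt measurable_norm measurable_const)
  set J1 := ∫ y in ball x ρ, ‖fderiv ℝ u y‖^p with hJ1
  set J2 := ∫ y in ball x ρ, |u y|^p / (R - ‖y‖)^p with hJ2
  have m1 : J1 ≤ ∫ y in A, ‖fderiv ℝ u y‖^p := by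
    apply setIntegral_mono_set i1.integrableOn
    · exact ae_of_all _ fun y => by simp only [Pi.zero_apply]; positivity
    · exact LE.le.eventuallyLE hnb
  have m2 : J2 ≤ ∫ y in A, |u y|^p / (R - ‖y‖)^p := by
    apply setIntegral_mono_set i2.integrableOn
    · refine (ae_restrict_iff' hAm).2 (ae_of_all _ fun y hy => ?_)
      have : 0 < R - ‖y‖ := by have := hy.2; linarith
      simp only [Pi.zero_apply]; positivity
    · exact LE.le.eventuallyLE hnb
  have hJ10 : 0 ≤ J1 := integral_nonneg fun y => by simp only [Pi.zero_apply]; positivity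
  have hJ20 : 0 ≤ J2 := by
    apply setIntegral_nonneg measurableSet_ball
    intro y hy
    have : 0 < R - ‖y‖ := by have := (hnb y hy).2; linarith
    positivity
  clear_value J1 J2 I
  have hHp1 : ((p-1)/p)^(p-1) ≤ 1 := Real.rpow_le_one hHpos.le hH1 (by linarith)
  have hHp0 : 0 < ((p-1)/p)^(p-1) := by positivity
  have hIJ : X * (J1 + J2) ≤ c⁻¹ * I := by
    rw [inv_mul_eq_div c I, le_div_iff₀ hc0, hc]
    refine le_trans ?_ hI
    generalize ((p-1)/p)^(p-1) = h at *
    generalize (∫ y in A, ‖fderiv ℝ u y‖^p) = P1 at *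
    generalize (∫ y in A, |u y|^p / (R - ‖y‖)^p) = P2 at *
    have a1 : h * (J1 + J2) ≤ P1 + h * P2 := by nlinarith
    have a2 : 0 ≤ h * (J1 + J2) := mul_nonneg hHp0.le (add_nonneg hJ10 hJ20)
    calc X * (J1 + J2) * (h/192) = X/192 * (h * (J1 + J2)) := by ring
      _ ≤ X1/192 * (h * (J1 + J2)) := by gcongr
      _ ≤ X1/192 * _ := mul_le_mul_of_nonneg_left a1 (by linarith)
      _ = _ := by ring
  -- Morrey
  set V := volume.real (ball (0 : EuclideanSpace ℝ (Fin n)) ρ) with hV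
  have hVe : V = ρ^n * v1 := by
    have := Measure.addHaar_ball_mul_of_pos (volume : Measure (EuclideanSpace ℝ (Fin n)))
      0 hρ0 1
    rw [mul_one] at this
    rw [hV, measureReal_def, this, ENNReal.toReal_mul, ENNReal.toReal_ofReal (by positivity),
      hv1, measureReal_def]
    simp
  have hV0 : 0 < V := by rw [hVe]; positivity
  have q1 := hm_morrey_s8 n (by omega) p hp u hu1 hcs x ρ hρ0
  have q2 := hm_morrey_s8 n (by omega) p hp (fun y => -u y) hu1.neg hcs.neg x ρ hρ0
  have hfn : ∀ y, fderiv ℝ (fun y => -u y) y = -fderiv ℝ u y := fun y => fderiv_fun_neg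
  simp only [abs_neg, hfn, norm_neg] at q2
  rw [← hJ1] at q1 q2
  have q : V * |u x| ≤ V^(1 - 1/p) * ((∫ y in ball x ρ, |u y|^p)^(1/p) +
      ρ / (1 - n/p) * J1^(1/p)) := by
    rcases abs_cases (u x) with h | h <;> rw [h.1]
    · exact q1
    · exact q2
  have hU : (∫ y in ball x ρ, |u y|^p)^(1/p) ≤ 3 * ρ * J2^(1/p) := by
    have e : ∫ y in ball x ρ, |u y|^p ≤ (3*ρ)^p * J2 := by
      rw [hJ2, ← integral_const_mul]
      apply setIntegral_mono_on _ _ measurableSet_ball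
      · intro y hy
        have h := hnb y hy
        have h0 : 0 < R - ‖y‖ := by linarith [h.2]
        have h3 : R - ‖y‖ ≤ 3 * ρ := by linarith [h.1]
        rw [← mul_div_assoc, le_div_iff₀ (by positivity), mul_comm]
        gcongr
      · have : Continuous fun y => |u y|^p :=
          hu1.continuous.abs.rpow_const (fun _ => Or.inr hp0.le)
        exact (this.locallyIntegrable.integrableOn_isCompact
          (isCompact_closedBall x ρ)).mono_set ball_subset_closedBall
      · exact (i2.const_mul _).integrableOn
    have e0 : 0 ≤ ∫ y in ball x ρ, |u y|^p :=
      integral_nonneg fun y => by simp only [Pi.zero_apply]; positivity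
    refine (Real.rpow_le_rpow e0 e (by positivity)).trans (le_of_eq ?_)
    rw [Real.mul_rpow (by positivity) hJ20, ← Real.rpow_mul (by positivity),
      mul_one_div_cancel hp0.ne', Real.rpow_one]
  set J := J1 + J2 with hJ
  have hJ0 : 0 ≤ J := add_nonneg hJ10 hJ20
  clear_value J M V
  have q' : V * |u x| ≤ V^(1 - 1/p) * (ρ * M * J^(1/p)) := by
    refine q.trans (mul_le_mul_of_nonneg_left ?_ (by positivity))
    have t1 : J1^(1/p) ≤ J^(1/p) := Real.rpow_le_rpow hJ10 (by linarith) (by positivity)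
    have t2 : J2^(1/p) ≤ J^(1/p) := Real.rpow_le_rpow hJ20 (by linarith) (by positivity)
    calc _ ≤ 3 * ρ * J^(1/p) + ρ / (1 - n/p) * J^(1/p) := by
          apply add_le_add
          · exact hU.trans (mul_le_mul_of_nonneg_left t2 (by positivity))
          · exact mul_le_mul_of_nonneg_left t1 (by positivity)
      _ = _ := by rw [hM]; ring
  have q'' : |u x| ≤ V^(-(1/p)) * (ρ * M * J^(1/p)) := by
    rw [show 1 - 1/p = 1 + -(1/p) by ring, Real.rpow_add hV0, Real.rpow_one, mul_assoc] at q'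
    exact le_of_mul_le_mul_left q' hV0
  have hVp : V^(-(1/p)) * ρ = v1^(-(1/p)) * ρ^(1 - n/p) := by
    rw [hVe, Real.mul_rpow (by positivity) hv1pos.le, ← Real.rpow_natCast, ← Real.rpow_mul hρ0.le,
      show 1 - (n:ℝ)/p = n * -(1/p) + 1 by ring, Real.rpow_add hρ0, Real.rpow_one]
    ring
  have hρδ : ρ^(1 - n/p) * δ^(n/p - 1) ≤ 1 := by
    have : ρ^(1 - n/p) ≤ δ^(1 - n/p) := Real.rpow_le_rpow hρ0.le (by linarith) hα.le
    calc _ ≤ δ^(1 - n/p) * δ^(n/p - 1) := by gcongr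
      _ = 1 := by rw [← Real.rpow_add hδ0]; simp
  have hXJ : J^(1/p) * X^(1/p) ≤ (c⁻¹)^(1/p) * I^(1/p) := by
    have hI0 : 0 ≤ I := by
      have : 0 ≤ c⁻¹ * I := le_trans (by positivity) hIJ
      exact nonneg_of_mul_nonneg_right this (by positivity)
    rw [← Real.mul_rpow hJ0 hX0.le, ← Real.mul_rpow (by positivity) hI0, mul_comm J]
    exact Real.rpow_le_rpow (by positivity) hIJ (by positivity)
  calc |u x| * δ^(n/p - 1) * X^(1/p)
      ≤ V^(-(1/p)) * (ρ * M * J^(1/p)) * δ^(n/p - 1) * X^(1/p) := by gcongr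
    _ = (V^(-(1/p)) * ρ) * M * δ^(n/p - 1) * (J^(1/p) * X^(1/p)) := by ring
    _ = v1^(-(1/p)) * M * (ρ^(1 - n/p) * δ^(n/p - 1)) * (J^(1/p) * X^(1/p)) := by
        rw [hVp]; ring
    _ ≤ v1^(-(1/p)) * M * 1 * ((c⁻¹)^(1/p) * I^(1/p)) := by gcongr
    _ = _ := by ring
end

section
/- Let p > 1 and R > 0, and on the interval (0,R) set d(t) := min{t, R−t}. There exist constants b = b(p) ≥ 1 and c = c(p) > 0 such that, with D := bR, for every u ∈ C_c^∞((0,R)) and all x, y ∈ (0,R) with x ≠ y, one has |u(x) − u(y)| · X^{1/p}(|x−y|/D) ≤ c · |x−y|^{1−1/p} · ( ∫_0^R |u'(t)|^p dt − ((p−1)/p)^p ∫_0^R |u(t)|^p / (d(t))^p dt )^{1/p}. -/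
open MeasureTheory Metric Set

lemma hm_young_s9 (p : ℝ) (hp : 1 < p) (g a c : ℝ) (hg : 0 ≤ g) :
    p * g * (|a| ^ (p - 2) * a) * c ≤ |c| ^ p + (p - 1) * g ^ (p / (p - 1)) * |a| ^ p := by
  have hp1 : 0 < p - 1 := by linarith
  have hpq : p.HolderConjugate (p / (p - 1)) := Real.HolderConjugate.conjExponent hp
  have h := Real.young_inequality c (g * (|a| ^ (p - 2) * a)) hpq
  have e : |g * (|a| ^ (p - 2) * a)| ^ (p / (p - 1)) = g ^ (p / (p - 1)) * |a| ^ p := by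
    have e1 : |g * (|a| ^ (p - 2) * a)| = g * |a| ^ (p - 1) := by
      rw [abs_mul, abs_mul, abs_of_nonneg hg, abs_of_nonneg (by positivity : 0 ≤ |a| ^ (p - 2))]
      rcases eq_or_ne a 0 with rfl | ha
      · simp [Real.zero_rpow hp1.ne']
      · rw [← Real.rpow_add_one (abs_pos.2 ha).ne']; congr 2; ring
    rw [e1, Real.mul_rpow hg (by positivity), ← Real.rpow_mul (abs_nonneg a)]
    congr 2; field_simp
  rw [e] at h
  have h2 := mul_le_mul_of_nonneg_left h (by linarith : 0 ≤ p)
  calc _ = p * (c * (g * (|a| ^ (p - 2) * a))) := by ring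
    _ ≤ _ := h2
    _ = _ := by field_simp

lemma hm_taylor (q z : ℝ) (hq : 1 < q) (h0 : 0 ≤ z) (h1 : z ≤ 1) :
    (1 - z) ^ q ≤ 1 - q * z + q ^ 2 * z ^ 2 := by
  rcases eq_or_lt_of_le h1 with rfl | h1
  · rw [sub_self, Real.zero_rpow (by linarith)]; nlinarith
  have hw : 0 < 1 - z := by linarith
  have hA : (1 - z) ^ q ≤ 1 - q * z * (1 - z) ^ (q - 1) := by
    have := one_add_mul_self_le_rpow_one_add (s := z / (1 - z)) (by have : 0 ≤ z / (1 - z) := by positivity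
                                                                    linarith) hq.le
    have e : 1 + z / (1 - z) = (1 - z)⁻¹ := by field_simp; ring
    rw [e, Real.inv_rpow hw.le] at this
    have h3 := mul_le_mul_of_nonneg_left this (by positivity : 0 ≤ (1 - z) ^ q)
    rw [mul_inv_cancel₀ (by positivity)] at h3
    have e2 : (1 - z) ^ q = (1 - z) ^ (q - 1) * (1 - z) := by
      rw [← Real.rpow_add_one hw.ne']; congr 1; ring
    have : (1 - z) ^ q * (1 + q * (z / (1 - z))) = (1 - z) ^ q + q * z * (1 - z) ^ (q - 1) := by
      rw [e2]; field_simp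
    linarith
  have hB : 1 - q * z ≤ (1 - z) ^ (q - 1) := by
    rcases le_total 1 (q - 1) with h | h
    · have := one_add_mul_self_le_rpow_one_add (s := -z) (by linarith) h
      have e : 1 + -z = 1 - z := by ring
      rw [e] at this; nlinarith
    · have := Real.rpow_le_rpow_of_exponent_ge hw (by linarith) h
      rw [Real.rpow_one] at this; nlinarith
  have := mul_le_mul_of_nonneg_left hB (by positivity : 0 ≤ q * z)
  nlinarith

/-- the field inequality -/
lemma hm_field (p κ L : ℝ) (hp : 1 < p) (hκ : 0 ≤ κ) (hκ1 : κ ≤ 1 / p) (hL : 1 ≤ L) :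
    ((p-1)/p)^(p-1) * ((1 - p) * (1 - κ / L) - κ / L^2)
      + (p - 1) * ((((p-1)/p)^(p-1) * (1 - κ / L)) ^ (p / (p - 1))) + ((p-1)/p)^p ≤ 0 := by
  have hp1 : 0 < p - 1 := by linarith
  have hα : 0 < (p-1)/p := by positivity
  have hκ1' : κ * p ≤ 1 := by rwa [le_div_iff₀ (by linarith)] at hκ1
  have hz0 : 0 ≤ κ / L := by positivity
  have hz1 : κ / L ≤ 1 := by rw [div_le_one (by linarith)]; nlinarith
  rw [Real.mul_rpow (by positivity) (by linarith), ← Real.rpow_mul hα.le]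
  have e : (p - 1) * (p / (p - 1)) = p := by field_simp
  have e2 : ((p-1)/p)^p = ((p-1)/p)^(p-1) * ((p-1)/p) := by
    rw [← Real.rpow_add_one hα.ne']; congr 1; ring
  rw [e, e2]
  have ht := hm_taylor (p / (p-1)) (κ / L) (by rw [lt_div_iff₀ hp1]; linarith) hz0 hz1
  have hpos : 0 < ((p-1)/p)^(p-1) := by positivity
  set H := ((p-1)/p)^(p-1)
  have h2 := mul_le_mul_of_nonneg_left ht (by positivity : 0 ≤ (p-1) * ((p-1)/p))
  have key : (1 - p) * (1 - κ / L) - κ / L^2 + (p-1) * ((p-1)/p) * (1 - κ / L) ^ (p/(p-1)) + (p-1)/p ≤ 0 := by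
    have e3 : (p-1) * ((p-1)/p) * (1 - p / (p-1) * (κ/L) + (p/(p-1))^2 * (κ/L)^2)
      = (p-1)^2/p - (p-1) * (κ/L) + (p * κ) * κ/L^2 := by field_simp
    have e4 : (p-1)^2/p + (p-1)/p = p - 1 := by field_simp; ring
    have e5 : (p * κ) * κ/L^2 ≤ κ / L^2 := by gcongr; nlinarith
    nlinarith
  nlinarith

lemma hm_jensen (p : ℝ) (hp : 1 < p) (u : ℝ → ℝ) (hu : ContDiff ℝ (⊤ : ℕ∞) u) (x y : ℝ) (hxy : x < y) :
    |u x - u y| ^ p ≤ (y - x) ^ (p - 1) * ∫ t in x..y, |deriv u t| ^ p := by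
  have hp1 : 0 < p - 1 := by linarith
  have hr : 0 < y - x := by linarith
  have hdc : Continuous (deriv u) := hu.continuous_deriv (by exact_mod_cast le_top)
  have hcp : Continuous (fun t => |deriv u t| ^ p) := hdc.abs.rpow_const (fun _ => Or.inr (by linarith))
  set s := (u y - u x) / (y - x) with hs
  have h := intervalIntegral.sub_le_integral_of_hasDeriv_right_of_le (g := fun t => p * 1 * (|s| ^ (p - 2) * s) * u t)
    (g' := fun t => p * 1 * (|s| ^ (p - 2) * s) * deriv u t)
    (φ := fun t => |deriv u t| ^ p + (p - 1) * 1 ^ (p / (p - 1)) * |s| ^ p) hxy.le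
    (by have := hu.continuous; fun_prop)
    (fun t _ => (((hu.differentiable (by simp)) t).hasDerivAt.const_mul _).hasDerivWithinAt)
    (by apply Continuous.integrableOn_Icc; fun_prop)
    (fun t _ => hm_young_s9 p hp 1 s _ zero_le_one)
  rw [intervalIntegral.integral_add (hcp.intervalIntegrable _ _) (by simp)] at h
  simp only [mul_one, Real.one_rpow, intervalIntegral.integral_const, smul_eq_mul] at h
  have e : u y - u x = s * (y - x) := by rw [hs]; field_simp
  have e1 : |s| ^ (p - 2) * s * s = |s| ^ p := by
    rw [mul_assoc, ← abs_mul_abs_self s]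
    rcases eq_or_ne s 0 with h0 | h0
    · simp [h0, Real.zero_rpow (by linarith : p ≠ 0)]
    · have := abs_pos.2 h0
      rw [← sq, ← Real.rpow_natCast, ← Real.rpow_add this]; congr 1; push_cast; ring
  have h3 : |s| ^ p * (y - x) ≤ ∫ t in x..y, |deriv u t| ^ p := by
    have : p * (|s| ^ (p - 2) * s) * u y - p * (|s| ^ (p - 2) * s) * u x = p * |s| ^ p * (y - x) := by
      rw [← e1, ← mul_sub, e]; ring
    rw [this] at h; nlinarith
  rw [abs_sub_comm, e, abs_mul, abs_of_pos hr, Real.mul_rpow (abs_nonneg _) hr.le]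
  calc _ = (y - x) ^ (p - 1) * (|s| ^ p * (y - x)) := by
        rw [show (y-x)^p = (y - x) ^ (p - 1) * (y - x) by rw [← Real.rpow_add_one hr.ne']; congr 1; ring]; ring
    _ ≤ _ := by gcongr

lemma hm_mono (p R t r : ℝ) (hp : 1 < p) (ht : 0 < t) (htr : t ≤ r) (hrR : r ≤ R) :
    t ^ (p - 1) * (1 + Real.log (R / t)) ≤ (p / (p - 1)) * (r ^ (p - 1) * (1 + Real.log (R / r))) := by
  have hp1 : 0 < p - 1 := by linarith
  have hr : 0 < r := by linarith
  have hR : 0 < R := by linarith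
  have hl : Real.log (R / t) = Real.log (R / r) + Real.log (r / t) := by
    rw [← Real.log_mul (by positivity) (by positivity)]; congr 1; field_simp
  have h0 : 0 ≤ Real.log (R / r) := Real.log_nonneg (by rwa [one_le_div hr])
  have h1 := Real.log_le_rpow_div (x := r / t) (by positivity) hp1
  have h2 : 1 ≤ (r / t) ^ (p - 1) := Real.one_le_rpow (by rwa [one_le_div ht]) hp1.le
  have h3 : r ^ (p-1) = t ^ (p - 1) * (r / t) ^ (p - 1) := by
    rw [← Real.mul_rpow (by positivity) (by positivity)]; congr 1; field_simp
  rw [h3, hl]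
  have h4 : p / (p - 1) = 1 + 1 / (p - 1) := by field_simp; ring
  set l := Real.log (R / r)
  set ρ := (r / t) ^ (p - 1)
  have h5 : 0 < t ^ (p - 1) := by positivity
  have : 1 + (l + Real.log (r / t)) ≤ p / (p - 1) * (ρ * (1 + l)) := by
    rw [h4]
    have a1 : ρ / (p-1) ≤ 1 / (p-1) * (ρ * (1+l)) := by
      rw [div_eq_mul_one_div, mul_comm]; gcongr; nlinarith
    nlinarith
  calc _ ≤ t ^ (p-1) * (p / (p - 1) * (ρ * (1 + l))) := by gcongr
    _ = _ := by ring

lemma hm_ptwo (p a b : ℝ) (hp : 1 < p) (ha : 0 ≤ a) (hb : 0 ≤ b) :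
    (a + b) ^ p ≤ 2 ^ p * (a ^ p + b ^ p) := by
  have ha' : 0 ≤ a ^ p := by positivity
  have hb' : 0 ≤ b ^ p := by positivity
  have h2 : 0 < (2:ℝ) ^ p := by positivity
  rcases le_total a b with h | h
  · calc (a + b) ^ p ≤ (2 * b) ^ p := Real.rpow_le_rpow (by positivity) (by linarith) (by linarith)
      _ = 2 ^ p * b ^ p := Real.mul_rpow (by norm_num) hb
      _ ≤ _ := by gcongr; linarith
  · calc (a + b) ^ p ≤ (2 * a) ^ p := Real.rpow_le_rpow (by positivity) (by linarith) (by linarith)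
      _ = 2 ^ p * a ^ p := Real.mul_rpow (by norm_num) ha
      _ ≤ _ := by gcongr; linarith

lemma hm_cont_pot (p : ℝ) (hp : 1 < p) (u d : ℝ → ℝ) (hu : Continuous u) (hd : Continuous d)
    (hs : ∀ t ∈ tsupport u, 0 < d t) : Continuous (fun t => |u t| ^ p / (d t) ^ p) := by
  apply continuous_of_tsupport
  intro t ht
  have : t ∈ tsupport u := by
    refine closure_mono ?_ ht
    intro z hz
    rw [Function.mem_support] at hz ⊢
    intro h0
    apply hz
    simp [h0, Real.zero_rpow (by linarith : p ≠ 0)]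
  have h0 := hs t this
  have hp0 : 0 < p := by linarith
  refine ContinuousAt.div ?_ ?_ (by positivity)
  · exact hu.continuousAt.abs.rpow_const (Or.inr hp0.le)
  · exact hd.continuousAt.rpow_const (Or.inr hp0.le)

lemma hm_cont_dp (p : ℝ) (hp : 1 < p) (u : ℝ → ℝ) (hu : ContDiff ℝ (⊤ : ℕ∞) u) :
    Continuous (fun t => |deriv u t| ^ p) := by
  have hdc : Continuous (deriv u) := hu.continuous_deriv (by exact_mod_cast le_top)
  exact hdc.abs.rpow_const (fun _ => Or.inr (by linarith))

lemma hm_seg_s9 (p κ m : ℝ) (hp : 1 < p) (hκ : 0 ≤ κ) (hκ1 : κ ≤ 1 / p) (hm : 0 < m)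
    (u : ℝ → ℝ) (hu : ContDiff ℝ (⊤ : ℕ∞) u) (hs : tsupport u ⊆ Ioi 0)
    (a b : ℝ) (ha : 0 ≤ a) (hab : a ≤ b) (hb : b ≤ m) :
    b ^ (1 - p) * (((p-1)/p)^(p-1) * (1 - κ / (1 + Real.log (m / b)))) * |u b| ^ p
      - a ^ (1 - p) * (((p-1)/p)^(p-1) * (1 - κ / (1 + Real.log (m / a)))) * |u a| ^ p
    ≤ ∫ t in a..b, (|deriv u t| ^ p - ((p-1)/p)^p * (|u t| ^ p / t ^ p)) := by
  have hp1 : 0 < p - 1 := by linarith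
  have hp0 : 0 < p := by linarith
  have hL : ∀ t, 0 < t → t ≤ m → 1 ≤ 1 + Real.log (m / t) := by
    intro t ht htm
    have := Real.log_nonneg ((one_le_div ht).2 htm)
    linarith
  have hφ : Continuous (fun t => |deriv u t| ^ p - ((p-1)/p)^p * (|u t| ^ p / t ^ p)) :=
    (hm_cont_dp p hp u hu).sub
      (continuous_const.mul (hm_cont_pot p hp u (fun t => t) hu.continuous continuous_id (fun t ht => hs ht)))
  set H := ((p-1)/p)^(p-1) with hH
  have hHpos : 0 < H := by positivity
  have hder : ∀ t, 0 < t → t ≤ m → HasDerivAt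
      (fun t => t ^ (1 - p) * (H * (1 - κ / (1 + Real.log (m / t)))) * |u t| ^ p)
      (t ^ (-p) * (H * ((1 - p) * (1 - κ / (1 + Real.log (m / t))) - κ / (1 + Real.log (m / t)) ^ 2)) * |u t| ^ p
        + t ^ (1 - p) * (H * (1 - κ / (1 + Real.log (m / t)))) * (p * |u t| ^ (p - 2) * u t * deriv u t)) t := by
    intro t ht htm
    have hLt := hL t ht htm
    have h1 : HasDerivAt (fun t : ℝ => t ^ (1 - p)) ((1 - p) * t ^ (1 - p - 1)) t :=
      Real.hasDerivAt_rpow_const (Or.inl ht.ne')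
    have h2 : HasDerivAt (fun t : ℝ => 1 + Real.log (m / t)) (-(1 / t)) t := by
      have hh : HasDerivAt (fun t : ℝ => m / t) (-m / t ^ 2) t := by
        exact ((hasDerivAt_const t m).div (hasDerivAt_id t) ht.ne').congr_deriv (by simp)
      have := (hh.log (by positivity)).const_add 1
      exact this.congr_deriv (by field_simp)
    have h3 := ((((hasDerivAt_const t κ).div h2 (by linarith)).const_sub 1).const_mul H)
    have h4 : HasDerivAt (fun t => |u t| ^ p) (p * |u t| ^ (p - 2) * u t * deriv u t) t :=
      (hasDerivAt_abs_rpow (u t) hp).comp t ((hu.differentiable (by simp)) t).hasDerivAt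
    have h5 := (h1.mul h3).mul h4
    refine h5.congr_deriv ?_
    have e1 : t ^ (1 - p - 1) = t ^ (-p) := by congr 1; ring
    have e2 : t ^ (1 - p) = t ^ (-p) * t := by
      rw [← Real.rpow_add_one ht.ne']; congr 1; ring
    simp only [Pi.mul_apply, Pi.div_apply]
    rw [e1, e2]
    have : (1 + Real.log (m / t)) ≠ 0 := by linarith
    field_simp
    ring
  refine intervalIntegral.sub_le_integral_of_hasDeriv_right_of_le hab
    (g := fun t => t ^ (1 - p) * (H * (1 - κ / (1 + Real.log (m / t)))) * |u t| ^ p)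
    (g' := fun t => t ^ (-p) * (H * ((1 - p) * (1 - κ / (1 + Real.log (m / t))) - κ / (1 + Real.log (m / t)) ^ 2)) * |u t| ^ p
        + t ^ (1 - p) * (H * (1 - κ / (1 + Real.log (m / t)))) * (p * |u t| ^ (p - 2) * u t * deriv u t))
    ?_ ?_ hφ.integrableOn_Icc ?_
  · intro t ht
    rcases eq_or_lt_of_le (ha.trans ht.1) with h0 | h0
    · have hn : t ∉ tsupport u := fun h => by
        have : 0 < t := hs h
        linarith
      have he := notMem_tsupport_iff_eventuallyEq.1 hn
      have : (fun t => t ^ (1 - p) * (H * (1 - κ / (1 + Real.log (m / t)))) * |u t| ^ p) =ᶠ[nhds t] fun _ => 0 := by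
        filter_upwards [he] with z hz
        simp [hz, Real.zero_rpow hp0.ne']
      exact (continuousAt_const.congr this.symm).continuousWithinAt
    · exact (hder t h0 (ht.2.trans hb)).continuousAt.continuousWithinAt
  · intro t ht
    exact (hder t (by linarith [ht.1]) (by linarith [ht.2])).hasDerivWithinAt
  · intro t ht
    have ht0 : 0 < t := by linarith [ht.1]
    have htm : t ≤ m := by linarith [ht.2]
    have hLt := hL t ht0 htm
    set L := 1 + Real.log (m / t)
    have hw : 0 ≤ 1 - κ / L := by
      have : κ / L ≤ 1 := by
        rw [div_le_one (by linarith)]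
        have : κ * p ≤ 1 := by rwa [le_div_iff₀ hp0] at hκ1
        nlinarith
      linarith
    have hF := hm_field p κ L hp hκ hκ1 hLt
    have hY := hm_young_s9 p hp (t ^ (1 - p) * (H * (1 - κ / L))) (u t) (deriv u t) (by positivity)
    have e : (t ^ (1 - p) * (H * (1 - κ / L))) ^ (p / (p - 1)) = t ^ (-p) * (H * (1 - κ / L)) ^ (p / (p - 1)) := by
      rw [Real.mul_rpow (by positivity) (by positivity), ← Real.rpow_mul ht0.le]
      congr 2; field_simp; ring
    rw [e] at hY
    have e2 : |u t| ^ p / t ^ p = t ^ (-p) * |u t| ^ p := by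
      rw [Real.rpow_neg ht0.le]; ring
    rw [e2]
    have hA : 0 ≤ t ^ (-p) * |u t| ^ p := by positivity
    have h6 := mul_le_mul_of_nonneg_left hF hA
    simp only [← hH] at h6
    nlinarith

set_option maxHeartbeats 1000000 in
lemma hm_half (p : ℝ) (hp : 1 < p) : ∃ C : ℝ, 0 < C ∧ ∀ m : ℝ, 0 < m → ∀ u : ℝ → ℝ,
    ContDiff ℝ (⊤ : ℕ∞) u → tsupport u ⊆ Ioi 0 →
    0 ≤ (∫ t in (0:ℝ)..m, (|deriv u t| ^ p - ((p-1)/p)^p * (|u t| ^ p / t ^ p))) ∧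
    ∀ x y, 0 < x → x < y → y ≤ m → |u x - u y| ^ p ≤
      C * ((y - x) ^ (p - 1) * (1 + Real.log (m / (y - x)))) *
        ∫ t in (0:ℝ)..m, (|deriv u t| ^ p - ((p-1)/p)^p * (|u t| ^ p / t ^ p)) := by
  have hp1 : 0 < p - 1 := by linarith
  have hp0 : 0 < p := by linarith
  have hHpos : 0 < ((p-1)/p)^(p-1) := by positivity
  refine ⟨2 * p + 2 ^ p * (p / ((p-1)/p)^(p-1) * (p / (p - 1)) + p / ((p-1)/p)^(p-1) * 2 ^ (p - 1)), by positivity, ?_⟩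
  intro m hm u hu hs
  have hφ : Continuous (fun t => |deriv u t| ^ p - ((p-1)/p)^p * (|u t| ^ p / t ^ p)) :=
    (hm_cont_dp p hp u hu).sub
      (continuous_const.mul (hm_cont_pot p hp u (fun t => t) hu.continuous continuous_id (fun t ht => hs ht)))
  have hpot := hm_cont_pot p hp u (fun t => t) hu.continuous continuous_id (fun t ht => hs ht)
  have hdp := hm_cont_dp p hp u hu
  have hL : ∀ t, 0 < t → t ≤ m → 1 ≤ 1 + Real.log (m / t) := by
    intro t ht htm
    have := Real.log_nonneg ((one_le_div ht).2 htm)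
    linarith
  have hLmono : ∀ s t, 0 < s → s ≤ t → 1 + Real.log (m / t) ≤ 1 + Real.log (m / s) := by
    intro s t h1 h2
    have : 0 < t := by linarith
    gcongr
  have hseg0 := fun a b ha hab hb => hm_seg_s9 p 0 m hp le_rfl (by positivity) hm u hu hs a b ha hab hb
  have hseg1 := fun a b ha hab hb => hm_seg_s9 p (1/p) m hp (by positivity) le_rfl hm u hu hs a b ha hab hb
  have hu0 : u 0 = 0 := image_eq_zero_of_notMem_tsupport (fun h => lt_irrefl (0:ℝ) (mem_Ioi.1 (hs h)))
  have hadd : ∀ a b c, (∫ t in a..b, (|deriv u t| ^ p - ((p-1)/p)^p * (|u t| ^ p / t ^ p))) +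
      (∫ t in b..c, (|deriv u t| ^ p - ((p-1)/p)^p * (|u t| ^ p / t ^ p))) =
      ∫ t in a..c, (|deriv u t| ^ p - ((p-1)/p)^p * (|u t| ^ p / t ^ p)) := fun a b c =>
    intervalIntegral.integral_add_adjacent_intervals (hφ.intervalIntegrable _ _) (hφ.intervalIntegrable _ _)
  set f := fun t => |deriv u t| ^ p - ((p-1)/p)^p * (|u t| ^ p / t ^ p) with hf
  set J := ∫ t in (0:ℝ)..m, f t with hJ
  have e2 : ((p-1)/p)^p = ((p-1)/p)^(p-1) * ((p-1)/p) := by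
    rw [← Real.rpow_add_one (by positivity)]; congr 1; ring
  set H := ((p-1)/p)^(p-1) with hH
  have h0x : ∀ x, 0 ≤ x → x ≤ m → x ^ (1 - p) * H * |u x| ^ p ≤ ∫ t in (0:ℝ)..x, f t := by
    intro x hx hxm
    have := hseg0 0 x le_rfl hx hxm
    simpa [hu0, Real.zero_rpow hp0.ne'] using this
  have hxm0 : ∀ x, 0 < x → x ≤ m → - (x ^ (1 - p) * H * |u x| ^ p) ≤ ∫ t in x..m, f t := by
    intro x hx hxm
    have := hseg0 x m hx.le hxm le_rfl
    have h1 : 0 ≤ m ^ (1 - p) * H * |u m| ^ p := by positivity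
    simp only [zero_div, sub_zero, mul_one] at this
    linarith
  have hJ0 : 0 ≤ J := le_trans (by positivity) (h0x m hm.le le_rfl)
  refine ⟨hJ0, ?_⟩
  -- pointwise bound
  have hpt' : ∀ x, 0 < x → x ≤ m → x ^ (1 - p) * H * |u x| ^ p ≤ p * (1 + Real.log (m / x)) * J := by
    intro x hx hxm
    have h1 := h0x x hx.le hxm
    have h2 := hseg1 x m hx.le hxm le_rfl
    have h3 := hadd 0 x m
    have hLx := hL x hx hxm
    have hw : 0 ≤ 1 - 1 / p := by
      have : 1 / p ≤ 1 := by rw [div_le_one hp0]; exact hp.le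
      linarith
    have h4 : 0 ≤ m ^ (1 - p) * (H * (1 - 1 / p / (1 + Real.log (m / m)))) * |u m| ^ p := by
      rw [div_self hm.ne', Real.log_one, add_zero, div_one]; positivity
    set L := 1 + Real.log (m / x)
    have hL0 : 0 < L := by linarith
    have h5 : x ^ (1 - p) * H * |u x| ^ p * (1 / p / L) ≤ J := by
      nlinarith
    calc _ = p * L * (x ^ (1 - p) * H * |u x| ^ p * (1 / p / L)) := by field_simp
      _ ≤ _ := by gcongr
  have hxx : ∀ x : ℝ, 0 < x → x ^ (p - 1) * x ^ (1 - p) = 1 := by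
    intro x hx
    rw [← Real.rpow_add hx]; simp
  have hpt : ∀ x, 0 < x → x ≤ m → |u x| ^ p ≤ p / H * (x ^ (p - 1) * (1 + Real.log (m / x))) * J := by
    intro x hx hxm
    have h1 := mul_le_mul_of_nonneg_left (hpt' x hx hxm) (by positivity : 0 ≤ x ^ (p - 1) / H)
    calc |u x| ^ p = (x ^ (p - 1) * x ^ (1 - p)) * |u x| ^ p := by rw [hxx x hx, one_mul]
      _ = x ^ (p - 1) / H * (x ^ (1 - p) * H * |u x| ^ p) := by field_simp
      _ ≤ _ := h1
      _ = _ := by ring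
  intro x y hx hxy hym
  have hr : 0 < y - x := by linarith
  have hLr := hL (y - x) hr (by linarith)
  have hΨ : 0 ≤ (y - x) ^ (p - 1) * (1 + Real.log (m / (y - x))) := by
    have : 0 ≤ 1 + Real.log (m / (y - x)) := by linarith
    positivity
  have hΨJ := mul_nonneg hΨ hJ0
  have hK : 0 ≤ 2 ^ p * (p / H * (p / (p - 1)) + p / H * 2 ^ (p - 1)) := by positivity
  set K := 2 ^ p * (p / H * (p / (p - 1)) + p / H * 2 ^ (p - 1)) with hKdef
  rcases le_or_gt y (2 * x) with h2x | h2x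
  · have hj := hm_jensen p hp u hu x y hxy
    have hLx := hL x hx (by linarith)
    set Lx := 1 + Real.log (m / x) with hLxdef
    have hcpot : Continuous (fun t => ((p-1)/p)^p * (|u t| ^ p / t ^ p)) := continuous_const.mul hpot
    have i1 : ∫ t in x..y, |deriv u t| ^ p = (∫ t in x..y, f t) + H * ((p-1)/p) * ∫ t in x..y, |u t| ^ p / t ^ p := by
      rw [← e2, ← intervalIntegral.integral_const_mul, ← intervalIntegral.integral_add (hφ.intervalIntegrable _ _)
        (hcpot.intervalIntegrable _ _)]
      congr 1; ext t; simp [hf]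
    have i2 : ∫ t in x..y, |u t| ^ p / t ^ p ≤ p / H * Lx * J := by
      have : ∫ t in x..y, |u t| ^ p / t ^ p ≤ ∫ t in x..y, p / H * Lx * J / x := by
        apply intervalIntegral.integral_mono_on hxy.le (hpot.intervalIntegrable _ _) (by simp)
        intro t ht
        have ht0 : 0 < t := by linarith [ht.1]
        rw [div_le_iff₀ (by positivity)]
        have a1 := hpt t ht0 (by linarith [ht.2])
        have a2 := hLmono x t hx ht.1
        have a3 : t ^ p = t ^ (p - 1) * t := by
          rw [← Real.rpow_add_one ht0.ne']; congr 1; ring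
        refine a1.trans ?_
        calc p / H * (t ^ (p - 1) * (1 + Real.log (m / t))) * J ≤ p / H * (t ^ (p - 1) * Lx) * J := by gcongr
          _ = p / H * (t ^ (p - 1) * Lx) * J * 1 := by ring
          _ ≤ p / H * (t ^ (p - 1) * Lx) * J * (t / x) := by
              have : 0 ≤ p / H * (t ^ (p - 1) * Lx) * J := by positivity
              gcongr
              rw [one_le_div hx]; exact ht.1
          _ = _ := by rw [a3]; ring
      refine this.trans ?_
      rw [intervalIntegral.integral_const, smul_eq_mul]
      have a4 : (y - x) / x ≤ 1 := by rw [div_le_one hx]; linarith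
      calc _ = (p / H * Lx * J) * ((y - x) / x) := by ring
        _ ≤ (p / H * Lx * J) * 1 := by
            have : 0 ≤ p / H * Lx * J := by positivity
            gcongr
        _ = _ := by ring
    have i3 : ∫ t in x..y, f t ≤ J + p * Lx * J := by
      have b1 := hadd 0 x m
      have b2 := hadd x y m
      have b3 := h0x x hx.le (by linarith)
      have b4 := hxm0 y (by linarith) hym
      have b5 := hpt' y (by linarith) hym
      have b6 : p * (1 + Real.log (m / y)) * J ≤ p * Lx * J := by
        have := hLmono x y hx hxy.le
        gcongr
      have b7 : 0 ≤ x ^ (1 - p) * H * |u x| ^ p := by positivity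
      linarith
    have i4 : ∫ t in x..y, |deriv u t| ^ p ≤ 2 * p * Lx * J := by
      have : H * ((p-1)/p) * (∫ t in x..y, |u t| ^ p / t ^ p) ≤ H * ((p-1)/p) * (p / H * Lx * J) := by gcongr
      have e : H * ((p-1)/p) * (p / H * Lx * J) = (p - 1) * Lx * J := by field_simp
      have : J ≤ Lx * J := by nlinarith
      nlinarith
    have i5 : Lx ≤ 1 + Real.log (m / (y - x)) := hLmono (y - x) x hr (by linarith)
    calc _ ≤ _ := hj
      _ ≤ (y - x) ^ (p - 1) * (2 * p * Lx * J) := by gcongr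
      _ ≤ (y - x) ^ (p - 1) * (2 * p * (1 + Real.log (m / (y - x))) * J) := by gcongr
      _ ≤ _ := by linarith [mul_nonneg hK hΨJ]
  · have c1 := hpt x hx (by linarith)
    have c2 := hpt y (by linarith) hym
    have c3 := hm_mono p m x (y - x) hp hx (by linarith) (by linarith)
    have c4 : y ^ (p - 1) * (1 + Real.log (m / y)) ≤ 2 ^ (p - 1) * ((y - x) ^ (p - 1) * (1 + Real.log (m / (y - x)))) := by
      have d1 := hLmono (y - x) y hr (by linarith)
      have d2 : y ^ (p - 1) ≤ 2 ^ (p - 1) * (y - x) ^ (p - 1) := by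
        rw [← Real.mul_rpow (by norm_num) hr.le]
        exact Real.rpow_le_rpow (by linarith) (by linarith) hp1.le
      have d3 := hL y (by linarith) hym
      calc _ ≤ (2 ^ (p - 1) * (y - x) ^ (p - 1)) * (1 + Real.log (m / (y - x))) := by
            gcongr
        _ = _ := by ring
    set Ψ := (y - x) ^ (p - 1) * (1 + Real.log (m / (y - x)))
    have c5 : |u x| ^ p ≤ p / H * (p / (p - 1) * Ψ) * J := c1.trans (by gcongr)
    have c6 : |u y| ^ p ≤ p / H * (2 ^ (p - 1) * Ψ) * J := c2.trans (by gcongr)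
    calc |u x - u y| ^ p ≤ (|u x| + |u y|) ^ p :=
          Real.rpow_le_rpow (abs_nonneg _) (abs_sub _ _) hp0.le
      _ ≤ 2 ^ p * (|u x| ^ p + |u y| ^ p) := hm_ptwo p _ _ hp (abs_nonneg _) (abs_nonneg _)
      _ ≤ 2 ^ p * (p / H * (p / (p - 1) * Ψ) * J + p / H * (2 ^ (p - 1) * Ψ) * J) := by gcongr
      _ = K * (Ψ * J) := by rw [hKdef]; ring
      _ ≤ _ := by linarith [mul_nonneg hp0.le hΨJ]

lemma hm_final (p C A Ψ1 Λ J r : ℝ) (hp : 1 < p) (hC : 0 < C) (hA : 0 ≤ A) (hr : 0 < r) (hΛ : 1 ≤ Λ) (hJ : 0 ≤ J)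
    (hΨ : Ψ1 = r ^ (p - 1) * Λ) (h : A ^ p ≤ C * Ψ1 * J) :
    A * (Λ⁻¹) ^ (1 / p) ≤ C ^ (1 / p) * r ^ (1 - 1 / p) * J ^ (1 / p) := by
  have hp0 : 0 < p := by linarith
  have hΛ0 : 0 < Λ := by linarith
  have e : A = (A ^ p) ^ (1 / p) := by rw [← Real.rpow_mul hA]; field_simp; simp
  rw [e, ← Real.mul_rpow (by positivity) (by positivity)]
  have e2 : r ^ (1 - 1 / p) = (r ^ (p - 1)) ^ (1 / p) := by
    rw [← Real.rpow_mul hr.le]; congr 1; field_simp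
  rw [e2, ← Real.mul_rpow (by positivity) (by positivity), ← Real.mul_rpow (by positivity) (by positivity)]
  apply Real.rpow_le_rpow (by positivity) _ (by positivity)
  calc A ^ p * Λ⁻¹ ≤ C * Ψ1 * J * Λ⁻¹ := by gcongr
    _ = _ := by rw [hΨ]; field_simp

open MeasureTheory Metric Set

/-- one-dimensional Hardy–Morrey inequality on an interval,
distance to the boundary. -/
theorem hardy_morrey_interval (p : ℝ) (hp : 1 < p) :
    ∃ b c : ℝ, 1 ≤ b ∧ 0 < c ∧
      ∀ R : ℝ, 0 < R →
      ∀ u : ℝ → ℝ, ContDiff ℝ (⊤ : ℕ∞) u → HasCompactSupport u →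
        tsupport u ⊆ Set.Ioo (0 : ℝ) R →
        ∀ x ∈ Set.Ioo (0 : ℝ) R, ∀ y ∈ Set.Ioo (0 : ℝ) R, x ≠ y →
          |u x - u y| * ((1 - Real.log (|x - y| / (b * R)))⁻¹) ^ (1 / p) ≤
            c * |x - y| ^ (1 - 1 / p) *
              ((∫ t in Set.Ioo (0 : ℝ) R, |deriv u t| ^ p)
                - ((p - 1) / p) ^ p *
                    ∫ t in Set.Ioo (0 : ℝ) R, |u t| ^ p / (min t (R - t)) ^ p) ^ (1 / p) := by
  obtain ⟨C, hC, hhalf⟩ := hm_half p hp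
  have hp1 : 0 < p - 1 := by linarith
  have hp0 : 0 < p := by linarith
  have hQ : 0 < 2 ^ p * C * (p / (p - 1)) := by positivity
  refine ⟨1, (C + 2 ^ p * C * (p / (p - 1))) ^ (1 / p), le_rfl, by positivity, ?_⟩
  intro R hR u hu _ hs
  set m := R / 2 with hm
  have hm0 : 0 < m := by positivity
  have hv : ContDiff ℝ (⊤ : ℕ∞) (fun t => u (R - t)) := hu.comp (contDiff_const.sub contDiff_id)
  have hvs : tsupport (fun t => u (R - t)) ⊆ Ioi 0 := by
    have : tsupport (fun t => u (R - t)) ⊆ (fun t => R - t) ⁻¹' tsupport u :=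
      tsupport_comp_subset_preimage u (by fun_prop)
    intro t ht
    have := (hs (this ht)).2
    simp only [mem_Ioi]
    linarith
  obtain ⟨hJ1, hu1⟩ := hhalf m hm0 u hu (fun t ht => (hs ht).1)
  obtain ⟨hJ2, hu2⟩ := hhalf m hm0 _ hv hvs
  have hmin : ∀ t ∈ tsupport u, 0 < min t (R - t) := fun t ht => by
    have := hs ht
    exact lt_min this.1 (by linarith [this.2])
  have hdp := hm_cont_dp p hp u hu
  have hpot := hm_cont_pot p hp u (fun t => min t (R - t)) hu.continuous (by fun_prop) hmin
  have hφ : Continuous (fun t => |deriv u t| ^ p - ((p-1)/p)^p * (|u t| ^ p / (min t (R - t)) ^ p)) :=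
    hdp.sub (continuous_const.mul hpot)
  have hcpot : Continuous (fun t => ((p-1)/p)^p * (|u t| ^ p / (min t (R - t)) ^ p)) := continuous_const.mul hpot
  have hJ : (∫ t in Set.Ioo (0 : ℝ) R, |deriv u t| ^ p)
                - ((p - 1) / p) ^ p *
                    ∫ t in Set.Ioo (0 : ℝ) R, |u t| ^ p / (min t (R - t)) ^ p =
      (∫ t in (0:ℝ)..m, (|deriv u t| ^ p - ((p-1)/p)^p * (|u t| ^ p / t ^ p))) +
      ∫ t in (0:ℝ)..m, (|deriv (fun t => u (R - t)) t| ^ p - ((p-1)/p)^p * (|u (R - t)| ^ p / t ^ p)) := by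
    rw [← integral_Ioc_eq_integral_Ioo, ← integral_Ioc_eq_integral_Ioo,
      ← intervalIntegral.integral_of_le hR.le, ← intervalIntegral.integral_of_le hR.le,
      ← intervalIntegral.integral_const_mul,
      ← intervalIntegral.integral_sub (hdp.intervalIntegrable _ _) (hcpot.intervalIntegrable _ _),
      ← intervalIntegral.integral_add_adjacent_intervals (hφ.intervalIntegrable 0 m) (hφ.intervalIntegrable m R)]
    congr 1
    · apply intervalIntegral.integral_congr
      intro t ht
      rw [uIcc_of_le hm0.le] at ht
      simp only
      rw [min_eq_left (by linarith [ht.2])]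
    · have := intervalIntegral.integral_comp_sub_left (a := 0) (b := m)
        (fun t => |deriv u t| ^ p - ((p-1)/p)^p * (|u t| ^ p / (min t (R - t)) ^ p)) R
      rw [sub_zero, show R - m = m by rw [hm]; ring] at this
      rw [← this]
      apply intervalIntegral.integral_congr
      intro t ht
      rw [uIcc_of_le hm0.le] at ht
      simp only
      rw [sub_sub_cancel, min_eq_right (by linarith [ht.2]), deriv_comp_const_sub, abs_neg]
  rw [hJ]
  set J1 := ∫ t in (0:ℝ)..m, (|deriv u t| ^ p - ((p-1)/p)^p * (|u t| ^ p / t ^ p))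
  set J2 := ∫ t in (0:ℝ)..m, (|deriv (fun t => u (R - t)) t| ^ p - ((p-1)/p)^p * (|u (R - t)| ^ p / t ^ p))
  have hlm : ∀ r, 0 < r → 1 + Real.log (m / r) ≤ 1 + Real.log (R / r) := by
    intro r hr
    have : m ≤ R := by linarith
    gcongr
  have hL : ∀ t, 0 < t → t ≤ R → 1 ≤ 1 + Real.log (R / t) := by
    intro t ht htm
    have := Real.log_nonneg ((one_le_div ht).2 htm)
    linarith
  have hleft : ∀ x y, 0 < x → x < y → y ≤ m → |u x - u y| ^ p ≤
      C * ((y - x) ^ (p - 1) * (1 + Real.log (R / (y - x)))) * J1 := by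
    intro x y hx hxy hy
    have hr : 0 < y - x := by linarith
    have := hlm _ hr
    exact (hu1 x y hx hxy hy).trans (by gcongr)
  have hright : ∀ x y, m ≤ x → x < y → y < R → |u x - u y| ^ p ≤
      C * ((y - x) ^ (p - 1) * (1 + Real.log (R / (y - x)))) * J2 := by
    intro x y hx hxy hy
    have hr : 0 < y - x := by linarith
    have := hlm _ hr
    have h := hu2 (R - y) (R - x) (by linarith) (by linarith) (by linarith)
    simp only [sub_sub_cancel] at h
    rw [show R - x - (R - y) = y - x by ring, abs_sub_comm] at h
    exact h.trans (by gcongr)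
  have hmain : ∀ x y, 0 < x → x < y → y < R → |u x - u y| ^ p ≤
      (C + 2 ^ p * C * (p / (p - 1))) * ((y - x) ^ (p - 1) * (1 + Real.log (R / (y - x)))) * (J1 + J2) := by
    intro x y hx hxy hy
    have hr : 0 < y - x := by linarith
    have hLr := hL _ hr (by linarith)
    have hΨ : 0 ≤ (y - x) ^ (p - 1) * (1 + Real.log (R / (y - x))) := by positivity
    have g1 : C ≤ C + 2 ^ p * C * (p / (p - 1)) := by linarith
    rcases le_or_gt y m with h1 | h1
    · refine (hleft x y hx hxy h1).trans ?_
      gcongr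
      linarith
    rcases le_or_gt m x with h2 | h2
    · refine (hright x y h2 hxy hy).trans ?_
      gcongr
      linarith
    have a1 := hleft x m hx h2 le_rfl
    have a2 := hright m y le_rfl h1 hy
    have a3 := hm_mono p R (m - x) (y - x) hp (by linarith) (by linarith) (by linarith)
    have a4 := hm_mono p R (y - m) (y - x) hp (by linarith) (by linarith) (by linarith)
    set Ψ := (y - x) ^ (p - 1) * (1 + Real.log (R / (y - x)))
    have a5 : |u x - u m| ^ p ≤ C * (p / (p - 1) * Ψ) * J1 := a1.trans (by gcongr)
    have a6 : |u m - u y| ^ p ≤ C * (p / (p - 1) * Ψ) * J2 := a2.trans (by gcongr)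
    calc |u x - u y| ^ p ≤ (|u x - u m| + |u m - u y|) ^ p :=
          Real.rpow_le_rpow (abs_nonneg _) (abs_sub_le _ _ _) hp0.le
      _ ≤ 2 ^ p * (|u x - u m| ^ p + |u m - u y| ^ p) := hm_ptwo p _ _ hp (abs_nonneg _) (abs_nonneg _)
      _ ≤ 2 ^ p * (C * (p / (p - 1) * Ψ) * J1 + C * (p / (p - 1) * Ψ) * J2) := by gcongr
      _ = (2 ^ p * C * (p / (p - 1))) * Ψ * (J1 + J2) := by ring
      _ ≤ _ := by gcongr; linarith
  have hord : ∀ x y, 0 < x → x < y → y < R →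
      |u x - u y| * ((1 - Real.log (|x - y| / (1 * R)))⁻¹) ^ (1 / p) ≤
        (C + 2 ^ p * C * (p / (p - 1))) ^ (1 / p) * |x - y| ^ (1 - 1 / p) * (J1 + J2) ^ (1 / p) := by
    intro x y hx hxy hy
    have hr : 0 < y - x := by linarith
    have e : 1 - Real.log (|x - y| / (1 * R)) = 1 + Real.log (R / (y - x)) := by
      rw [abs_sub_comm, abs_of_pos hr, one_mul, ← inv_div R, Real.log_inv]; ring
    rw [e, abs_sub_comm x y, abs_of_pos hr]
    exact hm_final p _ _ _ _ _ _ hp (by positivity) (abs_nonneg _) hr (hL _ hr (by linarith)) (by positivity) rfl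
      (hmain x y hx hxy hy)
  intro x hx y hy hxy
  rcases lt_or_gt_of_ne hxy with h | h
  · exact hord x y hx.1 h hy.2
  · have := hord y x hy.1 h hx.2
    rwa [abs_sub_comm (u y), abs_sub_comm y] at this
end
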